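/- For every 0 < τ ≪ 1 there exist positive constants ε(τ) and C(τ) such that if E + D ≤ ε(τ), then there exists a function φ whose gradient is harmonic in B₁ such that ∫_{B_{1/2}} ∫₀¹ (1/ρ)|j − ρ∇φ|² ≲ τ E + C(τ) D and ∫_{B₁} |∇φ|² ≲ E. -/

import Mathlib

open MeasureTheory Measure Set Metric
open scoped ENNReal NNReal Topology

noncomputable section

abbrev Ed (d : ℕ) : Type := EuclideanSpace ℝ (Fin d)

/-- Squared Euclidean `L²`-Wasserstein distance, as an infimum over couplings. -/
def W2sq {d : ℕ} (μ ν : Measure (Ed d)) : ℝ≥0∞ :=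
  sInf { c | ∃ π : Measure (Ed d × Ed d), π.map Prod.fst = μ ∧ π.map Prod.snd = ν ∧
      c = ∫⁻ p, ENNReal.ofReal (‖p.1 - p.2‖ ^ 2) ∂π }

/-- `T` is the optimal transport map from `χ_Ω dx` to `μ`. -/
def IsOptMap {d : ℕ} (Ω : Set (Ed d)) (μ : Measure (Ed d)) (T : Ed d → Ed d) : Prop :=
  Measurable T ∧ Measure.map T (volume.restrict Ω) = μ ∧
  ∀ S : Ed d → Ed d, Measurable S → Measure.map S (volume.restrict Ω) = μ →
    ∫⁻ x in Ω, ENNReal.ofReal (‖T x - x‖ ^ 2) ≤ ∫⁻ x in Ω, ENNReal.ofReal (‖S x - x‖ ^ 2)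

/-- Laplacian of a real-valued function on Euclidean space. -/
def lap {d : ℕ} (f : Ed d → ℝ) (x : Ed d) : ℝ :=
  ∑ i : Fin d, fderiv ℝ (fun y => fderiv ℝ f y (EuclideanSpace.single i (1:ℝ))) x
      (EuclideanSpace.single i (1:ℝ))

/-- A (smooth) real-valued function is harmonic on `s`. -/
def HarmonicOnSet {d : ℕ} (f : Ed d → ℝ) (s : Set (Ed d)) : Prop :=
  ContDiffOn ℝ (⊤ : ℕ∞) f s ∧ ∀ x ∈ s, lap f x = 0

/-- `φ` has a harmonic gradient on `s`. -/
def GradHarmonicOn {d : ℕ} (φ : Ed d → ℝ) (s : Set (Ed d)) : Prop :=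
  ContDiffOn ℝ (⊤ : ℕ∞) φ s ∧ ∀ i : Fin d, HarmonicOnSet (fun y => gradient φ y i) s

/-- The excess energy `E = ∫_{B₂}|T−x|²`. -/
def Elin {d : ℕ} (T : Ed d → Ed d) : ℝ≥0∞ :=
  ∫⁻ x in ball (0 : Ed d) 2, ENNReal.ofReal (‖T x - x‖ ^ 2)

/-- The data term `D = W₂²(μ⌞O, (μ(O)/|O|)χ_O)`. -/
def Dlin {d : ℕ} (μ : Measure (Ed d)) (O : Set (Ed d)) : ℝ≥0∞ :=
  W2sq (μ.restrict O) ((μ O / volume O) • volume.restrict O)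

/-- McCann interpolation `T_t = (1−t)id + tT`. -/
def Tt {d : ℕ} (T : Ed d → Ed d) (t : ℝ) (x : Ed d) : Ed d := (1 - t) • x + t • T x

/-- The Eulerian quantity `∫_B ∫₀¹ (1/ρ)|j − ρ∇φ|²` for the Benamou–Brenier minimizer
`ρ_t = T_t#(χ_Ω dx)`, `j_t = T_t#((T−id)χ_Ω dx)`, written in its (equivalent) Lagrangian
form `∫₀¹ ∫_{Ω ∩ T_t⁻¹(B)} |(T(x)−x) − ∇φ(T_t(x))|² dx dt`. -/
def eulerDefect {d : ℕ} (Ω : Set (Ed d)) (T : Ed d → Ed d) (φ : Ed d → ℝ)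
    (B : Set (Ed d)) : ℝ≥0∞ :=
  ∫⁻ t in Ioo (0:ℝ) 1, ∫⁻ x in Ω ∩ (Tt T t) ⁻¹' B,
    ENNReal.ofReal (‖(T x - x) - gradient φ (Tt T t x)‖ ^ 2)

/-!
The Eulerian quantity is already written in Lagrangian form, so everything happens at the level of
the map `T`.

**The potential.** Optimality makes the support of the plan `(id, T)_# (χ_Ω dx)` cyclically monotone
(`cyc_mono`), and Rockafellar's construction gives a Lipschitz potential `ψ` with
`T x ∈ ∂ψ(x)` for almost every `x ∈ Ω` (`exists_potential`). Monotonicity turns smallness of `E` into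
a uniform bound on the displacement inside `B_{7/4}` (`disp_le`), and it keeps far away points from
entering smaller balls (`inner_ge_of_norm_ge`). In particular every trajectory visiting `B_{1/2}`
starts in `B_{3/4}`, which reduces the claim to an `L²` estimate on `B_{3/4}` (`euler_le`).

**Two cases.** If `E = 0`, or if `D ≥ θ E` with `θ = θ(τ)`, then `φ = 0` works with `C(τ) = 1/θ`.
Otherwise put `s = √E` and write `T - id = s ∇h` on `B_{7/4}`, where `h` is `(ψ - |·|²/2)/s` up to
an additive constant; then `∫ |∇h|² ≤ 1`, and `h` is bounded in `L²` by the Poincaré inequality.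

**Approximate equations** (`ot_core`). Let `π` be an almost optimal coupling of `μ⌞O` with `κ χ_O`,
`κ = μ(O)/|O|`, and put `c = (κ - 1)/s`. Pushing a test function forward by `T` and replacing `μ` by
`κ dx` along `π` gives `Δh = -c` up to a small error (`OTData.two`). In the same way, integrating the
duality relation `F(T x) = s h(x) + |T x - x|²/2`, where `F(y) = inf_x (s h(x) + |x - y|²/2)`,
against a cutoff `η`, and bounding `F(y)` near the partner `z` of `y` from above by means of the
competitor `x = z - s w`, gives for every constant vector `w` an approximate energy inequality
(`OTData.three`)
`½ ∫ η|∇h|² ≤ ∫ h ∂_w η + ½|w|² ∫ η + ½ ∫ h² Δη + c ∫ η h + error`.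

**Compactness** (`compactA`). As the errors tend to `0`, the corrected potentials `h + c|x|²/(2d)`
converge weakly in `L²` along a subsequence to a weakly harmonic function. The mollifiers `Moll` are
chosen such that two of them differ by the Laplacian of a test function; this is Weyl's lemma, and
gives a smooth harmonic representative with `C²` bounds. The bound on `∇h` makes mollification
uniformly accurate, so that the convergence is strong. Hence `h` is `L²(B₁)`-close to a solution `φ`
of `Δφ = -c`.

**From functions to gradients** (`gradClose`). For `φ` itself the right-hand side of the energy
inequality can be computed by integration by parts. If `η` is concentrated near `x₀` and
`w = ∇φ(x₀)`, it bounds `∫ η|∇h - w|²` by `2 ∫ η|∇φ - w|²` plus terms controlled by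
`‖h - φ‖_{L²}`, and the former is small because `∇φ` is Lipschitz. Averaging over `x₀` yields
`∫_{B_{3/4}} |∇h - ∇φ|² ≤ τ`. The function of the theorem is `s φ`.
-/

open Filter
open scoped RealInnerProductSpace

/-! ### Cyclical monotonicity of optimal maps -/

/-- Two sets of positive measure overlap in positive measure after a translation avoiding a given finite
set of vectors (Fubini). -/
lemma exists_shift_pair {d : ℕ} [Nontrivial (Ed d)] {A B : Set (Ed d)} (hA : MeasurableSet A)
    (hB : MeasurableSet B) (hA0 : 0 < volume A) (hB0 : 0 < volume B) (F : Set (Ed d))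
    (hF : F.Finite) :
    ∃ v, v ∉ F ∧ 0 < volume (B ∩ (fun x => x + v) ⁻¹' A) := by
  by_contra hcon
  push Not at hcon
  have hmeas : MeasurableSet {q : Ed d × Ed d | q.2 ∈ B ∧ q.2 + q.1 ∈ A} :=
    (hB.preimage measurable_snd).inter (hA.preimage (measurable_snd.add measurable_fst))
  have h1 : ((volume : Measure (Ed d)).prod volume)
      {q : Ed d × Ed d | q.2 ∈ B ∧ q.2 + q.1 ∈ A} = 0 := by
    rw [measure_prod_null hmeas]
    have : ∀ᵐ v ∂(volume : Measure (Ed d)), v ∉ F :=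
      measure_eq_zero_iff_ae_notMem.1 (hF.measure_zero _)
    filter_upwards [this] with v hv
    exact le_antisymm (hcon v hv) bot_le
  rw [Measure.prod_apply_symm hmeas] at h1
  have h2 : ∀ y : Ed d, volume ((fun x => (x, y)) ⁻¹' {q : Ed d × Ed d | q.2 ∈ B ∧ q.2 + q.1 ∈ A})
      = B.indicator (fun _ => volume A) y := by
    intro y
    by_cases hy : y ∈ B
    · simp only [hy, preimage_ofPred_eq, true_and, indicator_of_mem]
      exact measure_preimage_add volume y A
    · simp [hy]
  simp_rw [h2] at h1
  rw [lintegral_indicator_const hB] at h1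
  exact (ENNReal.mul_pos hA0.ne' hB0.ne').ne' h1

/-- Finitely many sets of positive measure can be translated, by distinct vectors, so that their
intersection has positive measure. -/
lemma exists_shift {d : ℕ} [Nontrivial (Ed d)] (n : ℕ) (A : Fin n → Set (Ed d))
    (hA : ∀ i, MeasurableSet (A i)) (hA0 : ∀ i, 0 < volume (A i)) :
    ∃ v : Fin n → Ed d, Function.Injective v ∧
      0 < volume (⋂ i, (fun x => x + v i) ⁻¹' A i) := by
  induction n with
  | zero =>
    refine ⟨fun _ => 0, fun i => i.elim0, ?_⟩
    simp
  | succ n ih =>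
    obtain ⟨v, hv, hpos⟩ := ih (fun i => A i.succ) (fun i => hA _) (fun i => hA0 _)
    have hm : MeasurableSet (⋂ i, (fun x => x + v i) ⁻¹' A i.succ) :=
      MeasurableSet.iInter fun i => (hA _).preimage (measurable_id.add_const _)
    obtain ⟨w, hw, hwpos⟩ := exists_shift_pair (hA 0) hm (hA0 0) hpos (Set.range v)
      (Set.finite_range v)
    refine ⟨Fin.cons w v, ?_, ?_⟩
    · exact Fin.cons_injective_iff.2 ⟨hw, hv⟩
    · refine hwpos.trans_le (measure_mono ?_)
      rintro x ⟨hx1, hx2⟩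
      simp only [mem_iInter, mem_preimage] at hx1 hx2 ⊢
      intro i
      refine Fin.cases ?_ (fun i => ?_) i
      · simpa using hx2
      · simpa using hx1 i

/-- The plan induced by a map: the image of Lebesgue measure on `Ω` under `x ↦ (x, T x)`. -/
def graphPlan {d : ℕ} (Ω : Set (Ed d)) (T : Ed d → Ed d) : Measure (Ed d × Ed d) :=
  Measure.map (fun x => (x, T x)) (volume.restrict Ω)

/-- Sum of squares under a permutation of the targets. -/
lemma sum_sq_perm {d n : ℕ} (q : Fin n → Ed d × Ed d) (σ : Equiv.Perm (Fin n)) :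
    (∑ i, ‖(q (σ i)).2 - (q i).1‖ ^ 2) - ∑ i, ‖(q i).2 - (q i).1‖ ^ 2
      = 2 * ∑ i, (⟪(q i).2, (q i).1⟫ - ⟪(q (σ i)).2, (q i).1⟫) := by
  have h1 : ∑ i, ‖(q (σ i)).2‖ ^ 2 = ∑ i, ‖(q i).2‖ ^ 2 :=
    Equiv.sum_comp σ (fun i => ‖(q i).2‖ ^ 2)
  simp_rw [norm_sub_sq_real, Finset.sum_add_distrib, Finset.sum_sub_distrib, h1,
    ← Finset.mul_sum]
  ring

/-- Decomposition of an integral into the disjoint translates `C + v i` and the rest of `Ω`. -/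
lemma lintegral_split_shift {d n : ℕ} {Ω C : Set (Ed d)} (hC : MeasurableSet C)
    (v : Fin n → Ed d)
    (hsub : ∀ i, ∀ x ∈ C, x + v i ∈ Ω)
    (hdisj : Pairwise (Function.onFun Disjoint fun i => (fun x => x - v i) ⁻¹' C))
    (f : Ed d → ℝ≥0∞) (hf : Measurable f) :
    ∫⁻ x in Ω, f x = (∫⁻ x in C, ∑ i, f (x + v i)) +
      ∫⁻ x in Ω \ ⋃ i, (fun x => x - v i) ⁻¹' C, f x := by
  have hm : ∀ i, MeasurableSet ((fun x => x - v i) ⁻¹' C) := fun i =>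
    hC.preimage (measurable_id.sub_const _)
  have hU : MeasurableSet (⋃ i, (fun x => x - v i) ⁻¹' C) := MeasurableSet.iUnion hm
  rw [← lintegral_inter_add_sdiff f Ω hU]
  congr 1
  have hin : Ω ∩ (⋃ i, (fun x => x - v i) ⁻¹' C) = ⋃ i, (fun x => x - v i) ⁻¹' C := by
    apply inter_eq_self_of_subset_right
    apply iUnion_subset
    intro i x hx
    simpa using hsub i _ hx
  rw [hin, lintegral_iUnion hm hdisj, tsum_fintype, lintegral_finsetSum]
  · refine Finset.sum_congr rfl fun i _ => ?_
    have hmp : MeasurePreserving (fun x : Ed d => x + v i) volume volume :=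
      measurePreserving_add_right volume (v i)
    rw [← hmp.setLIntegral_comp_preimage (hm i) hf]
    congr 2
    ext x; simp
  · intro i _
    exact hf.comp (measurable_id.add_const _)

/-- The support of the plan of a Monge-optimal map is cyclically monotone. Near a violating tuple
one finds a small set `C` whose translates `C + v i` lie close to the points of the tuple; permuting
these translates rearranges Lebesgue measure and lowers the cost. -/
lemma cyc_mono {d : ℕ} [Nontrivial (Ed d)] {Ω : Set (Ed d)} {μ : Measure (Ed d)}
    {T : Ed d → Ed d} (hΩm : MeasurableSet Ω)
    (hfin : ∫⁻ x in Ω, ENNReal.ofReal (‖T x - x‖ ^ 2) ≠ ∞) (hT : IsOptMap Ω μ T)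
    {n : ℕ} (p : Fin n → Ed d × Ed d) (hp : ∀ i, p i ∈ (graphPlan Ω T).support)
    (σ : Equiv.Perm (Fin n)) :
    0 ≤ ∑ i, (⟪(p i).2, (p i).1⟫ - ⟪(p (σ i)).2, (p i).1⟫) := by
  obtain ⟨hTm, hTμ, hopt⟩ := hT
  have hgm : Measurable (fun x : Ed d => (x, T x)) := measurable_id.prodMk hTm
  by_contra! hneg
  let f : (Fin n → Ed d × Ed d) → ℝ :=
    fun q => ∑ i, (⟪(q i).2, (q i).1⟫ - ⟪(q (σ i)).2, (q i).1⟫)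
  have hfc : Continuous f := by fun_prop
  obtain ⟨r, hr, hrf⟩ := Metric.mem_nhds_iff.1
    (hfc.continuousAt.preimage_mem_nhds (Iio_mem_nhds hneg) : f ⁻¹' (Iio 0) ∈ 𝓝 p)
  let A : Fin n → Set (Ed d) := fun i => Ω ∩ (fun x => (x, T x)) ⁻¹' ball (p i) r
  have hAm : ∀ i, MeasurableSet (A i) := fun i => hΩm.inter (hgm measurableSet_ball)
  have hA0 : ∀ i, 0 < volume (A i) := by
    intro i
    have := (Measure.mem_support_iff_forall (p i)).1 (hp i) (ball (p i) r) (ball_mem_nhds _ hr)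
    rw [graphPlan, Measure.map_apply hgm measurableSet_ball,
      Measure.restrict_apply (hgm measurableSet_ball), inter_comm] at this
    exact this
  -- `A i` collects the points whose graph is close to `p i`; the translates `A i - v i` overlap in
  -- positive measure, and `C` below is a part of the overlap whose translates `C + v i` are disjoint
  obtain ⟨v, hvinj, hBpos⟩ := exists_shift n A hAm hA0
  set B := ⋂ i, (fun x => x + v i) ⁻¹' A i with hB
  have hBm : MeasurableSet B :=
    MeasurableSet.iInter fun i => (hAm i).preimage (measurable_id.add_const _)
  obtain ⟨δ, hδ, hδv⟩ : ∃ δ > 0, ∀ i j, i ≠ j → δ ≤ ‖v i - v j‖ := by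
    have : ∃ δ > 0, ∀ q : Fin n × Fin n, q.1 ≠ q.2 → δ ≤ ‖v q.1 - v q.2‖ := by
      let g : Fin n × Fin n → ℝ := fun q => if q.1 = q.2 then 1 else ‖v q.1 - v q.2‖
      have hg : ∀ q, 0 < g q := by
        intro q
        by_cases h : q.1 = q.2
        · simp [g, h]
        · simp only [g, h, if_false]
          exact norm_pos_iff.2 (sub_ne_zero.2 fun h' => h (hvinj h'))
      obtain ⟨δ, hδ, hδg⟩ : ∃ δ > 0, ∀ q, δ ≤ g q := by
        rcases isEmpty_or_nonempty (Fin n × Fin n) with h | h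
        · exact ⟨1, one_pos, fun q => h.elim q⟩
        · obtain ⟨q, hq⟩ := Finite.exists_min g
          exact ⟨g q, hg q, hq⟩
      refine ⟨δ, hδ, fun q hq => ?_⟩
      have := hδg q
      simpa [g, hq] using this
    obtain ⟨δ, hδ, h⟩ := this
    exact ⟨δ, hδ, fun i j hij => h (i, j) hij⟩
  obtain ⟨x₀, hx₀⟩ : ∃ x₀, 0 < volume (B ∩ ball x₀ (δ / 2)) := by
    obtain ⟨x₀, -, hx⟩ := Measure.nonempty_inter_support_of_pos
      (μ := volume.restrict B) (s := univ) (by simpa using hBpos)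
    refine ⟨x₀, ?_⟩
    have := (Measure.mem_support_iff_forall x₀).1 hx (ball x₀ (δ / 2))
      (ball_mem_nhds _ (by positivity))
    rwa [Measure.restrict_apply measurableSet_ball, inter_comm] at this
  set C := B ∩ ball x₀ (δ / 2) with hC
  have hCm : MeasurableSet C := hBm.inter measurableSet_ball
  have hCA : ∀ i, ∀ x ∈ C, x + v i ∈ A i := by
    intro i x hx
    exact mem_iInter.1 hx.1 i
  have hsub : ∀ i, ∀ x ∈ C, x + v i ∈ Ω := fun i x hx => (hCA i x hx).1
  have huniq : ∀ i j x, x - v i ∈ C → x - v j ∈ C → i = j := by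
    intro i j x hi hj
    by_contra hij
    have h1 := hδv i j hij
    have h2 : dist (x - v j) (x - v i) < δ := by
      have := dist_triangle_right (x - v j) (x - v i) x₀
      have a1 := mem_ball.1 hi.2
      have a2 := mem_ball.1 hj.2
      linarith
    rw [dist_eq_norm] at h2
    have : x - v j - (x - v i) = v i - v j := by abel
    rw [this] at h2
    linarith
  have hdisj : Pairwise (Function.onFun Disjoint fun i => (fun x => x - v i) ⁻¹' C) := by
    intro i j hij
    refine Set.disjoint_left.2 fun x hi hj => hij (huniq i j x hi hj)
  let Θ : Ed d → Ed d := fun x =>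
    x + ∑ i, ((fun x => x - v i) ⁻¹' C).indicator (fun _ => v (σ i) - v i) x
  have hΘm : Measurable Θ := by
    refine measurable_id.add (Finset.measurable_sum _ fun i _ => ?_)
    exact measurable_const.indicator (hCm.preimage (measurable_id.sub_const _))
  have hΘC : ∀ i, ∀ x ∈ C, Θ (x + v i) = x + v (σ i) := by
    intro i x hx
    have : ∑ j, ((fun x => x - v j) ⁻¹' C).indicator (fun _ => v (σ j) - v j) (x + v i)
        = v (σ i) - v i := by
      rw [Finset.sum_eq_single i]
      · rw [indicator_of_mem]
        simpa using hx
      · intro j _ hj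
        rw [indicator_of_notMem]
        intro hj'
        exact hj (huniq j i (x + v i) hj' (by simpa using hx))
      · simp
    simp only [Θ, this]
    abel
  have hΘrest : ∀ x ∈ Ω \ ⋃ i, (fun x => x - v i) ⁻¹' C, Θ x = x := by
    intro x hx
    have : ∑ j, ((fun x => x - v j) ⁻¹' C).indicator (fun _ => v (σ j) - v j) x = 0 := by
      refine Finset.sum_eq_zero fun j _ => indicator_of_notMem ?_ _
      intro hj
      exact hx.2 (mem_iUnion.2 ⟨j, hj⟩)
    simp only [Θ, this, add_zero]
  have hrestm : MeasurableSet (Ω \ ⋃ i, (fun x => x - v i) ⁻¹' C) :=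
    hΩm.diff (MeasurableSet.iUnion fun i => hCm.preimage (measurable_id.sub_const _))
  have hsplit := lintegral_split_shift hCm v hsub hdisj
  have hΘmap : Measure.map Θ (volume.restrict Ω) = volume.restrict Ω := by
    refine Measure.ext_of_lintegral _ fun g hg => ?_
    rw [lintegral_map hg hΘm, hsplit (fun x => g (Θ x)) (hg.comp hΘm), hsplit _ hg]
    congr 1
    · refine setLIntegral_congr_fun hCm fun x hx => ?_
      simp_rw [hΘC _ x hx]
      exact Equiv.sum_comp σ (fun i => g (x + v i))
    · exact setLIntegral_congr_fun hrestm fun x hx => by simp only [hΘrest x hx]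
  have hSm : Measurable (T ∘ Θ) := hTm.comp hΘm
  have hSmap : Measure.map (T ∘ Θ) (volume.restrict Ω) = μ := by
    rw [← Measure.map_map hTm hΘm, hΘmap, hTμ]
  have hle := hopt (T ∘ Θ) hSm hSmap
  rw [hsplit (fun x => ENNReal.ofReal (‖T x - x‖ ^ 2))
      ((hTm.sub measurable_id).norm.pow_const 2).ennreal_ofReal,
    hsplit (fun x => ENNReal.ofReal (‖(T ∘ Θ) x - x‖ ^ 2))
      ((hSm.sub measurable_id).norm.pow_const 2).ennreal_ofReal] at hle
  rw [hsplit (fun x => ENNReal.ofReal (‖T x - x‖ ^ 2))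
      ((hTm.sub measurable_id).norm.pow_const 2).ennreal_ofReal] at hfin
  have hrest : ∫⁻ x in Ω \ ⋃ i, (fun x => x - v i) ⁻¹' C, ENNReal.ofReal (‖(T ∘ Θ) x - x‖ ^ 2)
      = ∫⁻ x in Ω \ ⋃ i, (fun x => x - v i) ⁻¹' C, ENNReal.ofReal (‖T x - x‖ ^ 2) :=
    setLIntegral_congr_fun hrestm fun x hx => by simp only [Function.comp, hΘrest x hx]
  rw [hrest] at hle
  have hfin1 := (ENNReal.add_ne_top.1 hfin).1
  have hfin2 := (ENNReal.add_ne_top.1 hfin).2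
  have hle' := (ENNReal.add_le_add_iff_right hfin2).1 hle
  have hlt : ∀ x ∈ C, ∑ i, ENNReal.ofReal (‖(T ∘ Θ) (x + v i) - (x + v i)‖ ^ 2)
      < ∑ i, ENNReal.ofReal (‖T (x + v i) - (x + v i)‖ ^ 2) := by
    intro x hx
    let q : Fin n → Ed d × Ed d := fun i => (x + v i, T (x + v i))
    have hq : f q < 0 := by
      apply hrf
      refine (dist_pi_lt_iff hr).2 fun i => ?_
      exact (hCA i x hx).2
    have hs := sum_sq_perm q σ
    rw [← ENNReal.ofReal_sum_of_nonneg (fun _ _ => by positivity),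
      ← ENNReal.ofReal_sum_of_nonneg (fun _ _ => by positivity)]
    simp only [Function.comp, hΘC _ x hx]
    have hlt : ∑ i, ‖T (x + v (σ i)) - (x + v i)‖ ^ 2 < ∑ i, ‖T (x + v i) - (x + v i)‖ ^ 2 := by
      have : f q = ∑ i, (⟪(q i).2, (q i).1⟫ - ⟪(q (σ i)).2, (q i).1⟫) := rfl
      rw [← this] at hs
      simp only [q] at hs
      linarith
    refine (ENNReal.ofReal_lt_ofReal_iff ?_).2 hlt
    exact (Finset.sum_nonneg fun _ _ => by positivity).trans_lt hlt
  have hmeasT : Measurable fun x => ∑ i, ENNReal.ofReal (‖T (x + v i) - (x + v i)‖ ^ 2) := by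
    refine Finset.measurable_sum _ fun i _ => ?_
    have : Measurable fun x : Ed d => x + v i := measurable_id.add_const _
    exact (((hTm.comp this).sub this).norm.pow_const 2).ennreal_ofReal
  refine absurd hle' (not_le.2 ?_)
  refine setLIntegral_strict_mono hCm hx₀.ne' hmeasT ?_ (Eventually.of_forall hlt)
  refine ne_top_of_le_ne_top hfin1 ?_
  exact setLIntegral_mono hmeasT fun x hx => (hlt x hx).le

/-! ### Rockafellar's potential -/

/-- Value at `x` of the affine function obtained by following the chain `q 0, …, q n` of
(point, slope) pairs. -/
def chainVal {d : ℕ} (q : ℕ → Ed d × Ed d) (n : ℕ) (x : Ed d) : ℝ :=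
  ∑ i ∈ Finset.range n, ⟪(q i).2, (q (i + 1)).1 - (q i).1⟫ + ⟪(q n).2, x - (q n).1⟫

/-- Rockafellar's theorem, for a cyclically monotone set with bounded slopes. -/
lemma rockafellar {d : ℕ} (G : Set (Ed d × Ed d)) (hne : G.Nonempty) (L : ℝ≥0)
    (hL : ∀ p ∈ G, ‖p.2‖ ≤ L)
    (hcm : ∀ (n : ℕ) (p : Fin n → Ed d × Ed d), (∀ i, p i ∈ G) → ∀ σ : Equiv.Perm (Fin n),
      0 ≤ ∑ i, (⟪(p i).2, (p i).1⟫ - ⟪(p (σ i)).2, (p i).1⟫)) :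
    ∃ ψ : Ed d → ℝ, LipschitzWith L ψ ∧ ∀ p ∈ G, ∀ x, ψ p.1 + ⟪p.2, x - p.1⟫ ≤ ψ x := by
  obtain ⟨p₀, hp₀⟩ := hne
  let I := {q : (ℕ → Ed d × Ed d) × ℕ // (∀ i, q.1 i ∈ G) ∧ q.1 0 = p₀}
  have : Nonempty I := ⟨⟨(fun _ => p₀, 0), fun _ => hp₀, rfl⟩⟩
  have hcyc : ∀ q : I, chainVal q.1.1 q.1.2 p₀.1 ≤ 0 := by
    rintro ⟨⟨q, n⟩, hq, hq0⟩
    have h := hcm (n + 1) (fun i => q i) (fun i => hq i) (finRotate (n + 1)).symm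
    rw [Finset.sum_sub_distrib] at h
    have h2 : ∑ i : Fin (n + 1), ⟪(q ((finRotate (n + 1)).symm i)).2, (q i).1⟫
        = ∑ i : Fin (n + 1), ⟪(q i).2, (q (finRotate (n + 1) i)).1⟫ := by
      rw [← Equiv.sum_comp (finRotate (n + 1))]
      simp
    rw [h2, Fin.sum_univ_castSucc, Fin.sum_univ_castSucc, finRotate_last] at h
    simp only [finRotate_apply, Fin.coeSucc_eq_succ, Fin.val_castSucc, Fin.val_succ,
      Fin.val_last, Fin.val_zero] at h
    simp only at hq0
    rw [hq0] at h
    simp only [chainVal, inner_sub_right, Finset.sum_sub_distrib]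
    rw [Finset.sum_range (fun i => ⟪(q i).2, (q (i + 1)).1⟫),
      Finset.sum_range (fun i => ⟪(q i).2, (q i).1⟫)]
    linarith
  have hlip : ∀ q : I, ∀ x y, chainVal q.1.1 q.1.2 x ≤ chainVal q.1.1 q.1.2 y + L * dist x y := by
    rintro ⟨⟨q, n⟩, hq, hq0⟩ x y
    simp only [chainVal]
    have h1 : ⟪(q n).2, x - (q n).1⟫ = ⟪(q n).2, y - (q n).1⟫ + ⟪(q n).2, x - y⟫ := by
      rw [← inner_add_right]; congr 1; abel
    have h2 : ⟪(q n).2, x - y⟫ ≤ L * dist x y := by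
      rw [dist_eq_norm]
      exact (real_inner_le_norm _ _).trans
        (mul_le_mul_of_nonneg_right (hL _ (hq n)) (norm_nonneg _))
    linarith
  have hbdd : ∀ x, BddAbove (Set.range fun q : I => chainVal q.1.1 q.1.2 x) := by
    intro x
    refine ⟨L * dist x p₀.1, ?_⟩
    rintro _ ⟨q, rfl⟩
    have := hlip q x p₀.1
    have := hcyc q
    simp only
    linarith
  refine ⟨fun x => ⨆ q : I, chainVal q.1.1 q.1.2 x, ?_, ?_⟩
  · refine LipschitzWith.of_le_add_mul L fun x y => ciSup_le fun q => ?_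
    have := le_ciSup (hbdd y) q
    have := hlip q x y
    linarith
  · intro p hp x
    rw [← le_sub_iff_add_le]
    refine ciSup_le fun q => ?_
    rw [le_sub_iff_add_le]
    obtain ⟨⟨q, n⟩, hq, hq0⟩ := q
    let q' : I := ⟨(Function.update q (n + 1) p, n + 1), fun i => by
      by_cases h : i = n + 1
      · subst h; simpa using hp
      · simpa [Function.update_of_ne h] using hq i, by simpa using hq0⟩
    refine le_trans (le_of_eq ?_) (le_ciSup (hbdd x) q')
    simp only [q', chainVal, Finset.sum_range_succ, Function.update_self]
    rw [Function.update_of_ne (by omega : n ≠ n + 1)]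
    congr 2
    refine Finset.sum_congr rfl fun i hi => ?_
    have := Finset.mem_range.1 hi
    rw [Function.update_of_ne (by omega : i ≠ n + 1),
      Function.update_of_ne (by omega : i + 1 ≠ n + 1)]

/-- A Lipschitz potential whose subgradients contain `T`. -/
lemma exists_potential {d : ℕ} [Nontrivial (Ed d)] {Ω : Set (Ed d)} {μ : Measure (Ed d)}
    {T : Ed d → Ed d} (hΩb : Bornology.IsBounded Ω) (hΩm : MeasurableSet Ω)
    (hμ : ∃ K : Set (Ed d), IsCompact K ∧ μ Kᶜ = 0) (hT : IsOptMap Ω μ T) :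
    ∃ (ψ : Ed d → ℝ) (L : ℝ≥0), LipschitzWith L ψ ∧
      ∀ᵐ x ∂(volume.restrict Ω), ∀ z, ψ x + ⟪T x, z - x⟫ ≤ ψ z := by
  obtain ⟨K, hK, hK0⟩ := hμ
  have hTm := hT.1
  have hgm : Measurable (fun x : Ed d => (x, T x)) := measurable_id.prodMk hTm
  obtain ⟨R, hR⟩ := hK.isBounded.exists_norm_le
  obtain ⟨R', hR'⟩ := hΩb.exists_norm_le
  have hTK : ∀ᵐ x ∂(volume.restrict Ω), T x ∈ K := by
    have : ∀ᵐ y ∂μ, y ∈ K := measure_eq_zero_iff_ae_notMem.1 hK0 |>.mono fun y hy => by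
      simpa using hy
    rw [← hT.2.1] at this
    exact ae_of_ae_map hTm.aemeasurable this
  have hΩfin : volume Ω ≠ ∞ := hΩb.measure_lt_top.ne
  have hfin : ∫⁻ x in Ω, ENNReal.ofReal (‖T x - x‖ ^ 2) ≠ ∞ := by
    have : ∫⁻ x in Ω, ENNReal.ofReal (‖T x - x‖ ^ 2)
        ≤ ∫⁻ x in Ω, ENNReal.ofReal ((R + R') ^ 2) := by
      refine lintegral_mono_ae ?_
      filter_upwards [hTK, ae_restrict_mem hΩm] with x hx hxΩ
      refine ENNReal.ofReal_le_ofReal (pow_le_pow_left₀ (norm_nonneg _) ?_ 2)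
      exact (norm_sub_le _ _).trans (add_le_add (hR _ hx) (hR' _ hxΩ))
    refine ne_top_of_le_ne_top ?_ this
    rw [setLIntegral_const]
    exact ENNReal.mul_ne_top ENNReal.ofReal_ne_top hΩfin
  by_cases hne : ((graphPlan Ω T).support).Nonempty
  · have hsub : ∀ p ∈ (graphPlan Ω T).support, ‖p.2‖ ≤ (Real.toNNReal R : ℝ≥0) := by
      have hcl : IsClosed {p : Ed d × Ed d | ‖p.2‖ ≤ (Real.toNNReal R : ℝ≥0)} :=
        isClosed_le continuous_snd.norm continuous_const
      refine Measure.support_subset_of_isClosed hcl ?_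
      show ∀ᵐ p ∂(graphPlan Ω T), ‖p.2‖ ≤ (Real.toNNReal R : ℝ≥0)
      rw [graphPlan, ae_map_iff hgm.aemeasurable hcl.measurableSet]
      filter_upwards [hTK] with x hx
      exact (hR _ hx).trans (Real.le_coe_toNNReal R)
    obtain ⟨ψ, hψ, hsg⟩ := rockafellar _ hne (Real.toNNReal R) hsub
      (fun n p hp σ => cyc_mono hΩm hfin hT p hp σ)
    refine ⟨ψ, _, hψ, ?_⟩
    have : ∀ᵐ p ∂(graphPlan Ω T), p ∈ (graphPlan Ω T).support := Measure.support_mem_ae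
    have := ae_of_ae_map hgm.aemeasurable this
    filter_upwards [this] with x hx z
    exact hsg _ hx z
  · refine ⟨fun _ => 0, 0, LipschitzWith.const _, ?_⟩
    rw [not_nonempty_iff_eq_empty, Measure.support_eq_empty_iff, graphPlan,
      Measure.map_eq_zero_iff hgm.aemeasurable] at hne
    rw [hne]; simp

/-! ### Pointwise bounds on the displacement -/

/-- Shorthand: `x` is a point at which `T x` is a subgradient of `ψ`. -/
def IsSub {d : ℕ} (ψ : Ed d → ℝ) (T : Ed d → Ed d) (x : Ed d) : Prop :=
  ∀ z, ψ x + ⟪T x, z - x⟫ ≤ ψ z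

lemma IsSub.mono {d : ℕ} {ψ : Ed d → ℝ} {T : Ed d → Ed d} {x z : Ed d} (hx : IsSub ψ T x)
    (hz : IsSub ψ T z) : 0 ≤ ⟪T x - T z, x - z⟫ := by
  have h1 := hx z
  have h2 := hz x
  have h3 : ⟪T x, z - x⟫ = -⟪T x, x - z⟫ := by rw [← inner_neg_right, neg_sub]
  rw [inner_sub_left]
  linarith

lemma exists_dir {d : ℕ} (p : Ed d) {r : ℝ} (hr : 0 < r) :
    ∃ e : Ed d, ‖e‖ ≤ 1 ∧ ∀ w ∈ ball (r • e) (r / 2), ‖p‖ * r / 2 ≤ ⟪p, w⟫ := by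
  by_cases hp : p = 0
  · exact ⟨0, by simp, fun w _ => by simp [hp]⟩
  have hp' : 0 < ‖p‖ := norm_pos_iff.2 hp
  refine ⟨‖p‖⁻¹ • p, ?_, fun w hw => ?_⟩
  · rw [norm_smul, norm_inv, norm_norm, inv_mul_cancel₀ hp'.ne']
  · rw [mem_ball, dist_eq_norm] at hw
    have h1 : ⟪p, w⟫ = ⟪p, r • ‖p‖⁻¹ • p⟫ + ⟪p, w - r • ‖p‖⁻¹ • p⟫ := by
      rw [← inner_add_right]; congr 1; abel
    have h2 : ⟪p, r • ‖p‖⁻¹ • p⟫ = ‖p‖ * r := by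
      rw [inner_smul_right, inner_smul_right, real_inner_self_eq_norm_sq]; field_simp
    have h3 := (abs_le.1 (abs_real_inner_le_norm p (w - r • ‖p‖⁻¹ • p))).1
    have h4 : ‖p‖ * ‖w - r • ‖p‖⁻¹ • p‖ ≤ ‖p‖ * (r / 2) :=
      mul_le_mul_of_nonneg_left hw.le hp'.le
    rw [h1, h2]; linarith

/-- Small excess energy produces, in every ball of the right size, a point with a prescribed
almost-sure property at which the displacement is small. -/
lemma exists_good {d : ℕ} {T : Ed d → Ed d} {P : Ed d → Prop}
    (hP : ∀ᵐ z ∂(volume.restrict (ball (0 : Ed d) 2)), P z) {z₁ : Ed d} {r b : ℝ}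
    (hsub : ball z₁ r ⊆ ball (0 : Ed d) 2) (hb : 0 ≤ b)
    (hE : Elin T < ENNReal.ofReal (b ^ 2) * volume (ball (0 : Ed d) r)) :
    ∃ z ∈ ball z₁ r, P z ∧ ‖T z - z‖ < b := by
  by_contra hcon
  push Not at hcon
  have h1 : ENNReal.ofReal (b ^ 2) * volume (ball (0 : Ed d) r) ≤ Elin T := by
    rw [← Measure.addHaar_ball_center volume z₁ r, ← setLIntegral_const]
    refine le_trans (lintegral_mono_ae ?_) (lintegral_mono_set hsub)
    filter_upwards [ae_restrict_mem measurableSet_ball, ae_restrict_of_ae_restrict_of_subset hsub hP]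
      with z hz hPz
    exact ENNReal.ofReal_le_ofReal (pow_le_pow_left₀ hb (hcon z hz hPz) 2)
  exact absurd hE (not_lt.2 h1)

/-- The energy threshold below which the pointwise bounds at scale `r` hold. -/
def thr (d : ℕ) (r : ℝ) : ℝ≥0∞ := ENNReal.ofReal (r ^ 2) * volume (ball (0 : Ed d) (r / 2))

lemma thr_pos (d : ℕ) {r : ℝ} (hr : 0 < r) : 0 < thr d r :=
  ENNReal.mul_pos (by simpa using hr.ne') (measure_ball_pos _ _ (by positivity)).ne'

/-- Uniform bound on the displacement: monotonicity of `T` at `x` and at a good point, close to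
`x + r e` with `e` in the direction of `T x - x`, excludes a large displacement. -/
lemma disp_le {d : ℕ} {Ω : Set (Ed d)} {T : Ed d → Ed d} {ψ : Ed d → ℝ}
    (hΩ : ball (0 : Ed d) 2 ⊆ Ω) (hsg : ∀ᵐ x ∂(volume.restrict Ω), IsSub ψ T x)
    {r : ℝ} (hr : 0 < r) (hr8 : r ≤ 1 / 8) (hE : Elin T < thr d r) :
    ∀ x ∈ ball (0 : Ed d) (7 / 4), IsSub ψ T x → ‖T x - x‖ ≤ 8 * r := by
  intro x hx hsx
  obtain ⟨e, he, hdir⟩ := exists_dir (T x - x) hr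
  have hx' : ‖x‖ < 7 / 4 := by simpa using hx
  have hre : ‖r • e‖ ≤ r := by
    rw [norm_smul, Real.norm_of_nonneg hr.le]; nlinarith
  have hsub : ball (x + r • e) (r / 2) ⊆ ball (0 : Ed d) 2 := by
    intro z hz
    rw [mem_ball, dist_eq_norm] at hz
    rw [mem_ball_zero_iff]
    have h1 : z = x + r • e + (z - (x + r • e)) := by abel
    have h2 := norm_add₃_le (a := x) (b := r • e) (c := z - (x + r • e))
    rw [← h1] at h2
    linarith
  obtain ⟨z, hz, hsz, hTz⟩ := exists_good (ae_restrict_of_ae_restrict_of_subset hΩ hsg) hsub hr.le hE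
  have hw : z - x ∈ ball (r • e) (r / 2) := by
    rw [mem_ball, dist_eq_norm] at hz ⊢
    convert hz using 2; abel
  have h1 := hdir _ hw
  have hwn : ‖z - x‖ ≤ 3 / 2 * r := by
    rw [mem_ball, dist_eq_norm] at hw
    have := norm_add_le (r • e) (z - x - r • e)
    rw [add_sub_cancel] at this
    linarith
  have h2 := hsx.mono hsz
  have h3 : ⟪T x - T z, x - z⟫ = -⟪T x - x, z - x⟫ + ‖z - x‖ ^ 2 + ⟪T z - z, z - x⟫ := by
    rw [← real_inner_self_eq_norm_sq, ← inner_neg_left, ← inner_add_left, ← inner_add_left,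
      ← neg_sub z x, inner_neg_right, ← inner_neg_left]
    congr 1; abel
  have h4 := real_inner_le_norm (T z - z) (z - x)
  have h5 : ‖T z - z‖ * ‖z - x‖ ≤ r * (3 / 2 * r) :=
    mul_le_mul hTz.le hwn (norm_nonneg _) hr.le
  have h6 : ‖z - x‖ ^ 2 ≤ (3 / 2 * r) ^ 2 := pow_le_pow_left₀ (norm_nonneg _) hwn 2
  have h7 : ‖T x - x‖ * r ≤ 8 * r * r := by nlinarith
  exact le_of_mul_le_mul_right h7 hr

/-- Points far from the origin are not moved much closer to it. -/
lemma inner_ge_of_norm_ge {d : ℕ} {Ω : Set (Ed d)} {T : Ed d → Ed d} {ψ : Ed d → ℝ}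
    (hΩ : ball (0 : Ed d) 2 ⊆ Ω) (hsg : ∀ᵐ x ∂(volume.restrict Ω), IsSub ψ T x)
    {R₁ R₂ r : ℝ} (hR₁ : 0 ≤ R₁) (hr : 0 < r) (hR : R₁ + 20 * r ≤ R₂) (hR₂ : R₂ ≤ 2)
    (hE : Elin T < thr d r) :
    ∀ x : Ed d, R₂ ≤ ‖x‖ → IsSub ψ T x → R₁ * ‖x‖ ≤ ⟪T x, x⟫ := by
  intro x hx hsx
  by_contra hcon
  push Not at hcon
  have hxp : 0 < ‖x‖ := by linarith
  -- the unit vector in the direction of `x`, and the part of `T x` orthogonal to it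
  set u : Ed d := ‖x‖⁻¹ • x with hu
  have hun : ‖u‖ = 1 := by
    rw [hu, norm_smul, norm_inv, norm_norm, inv_mul_cancel₀ hxp.ne']
  have hxu : x = ‖x‖ • u := by rw [hu, smul_smul, mul_inv_cancel₀ hxp.ne', one_smul]
  have huu : ⟪u, u⟫ = (1 : ℝ) := by rw [real_inner_self_eq_norm_sq, hun, one_pow]
  set a : ℝ := ⟪T x, u⟫ with ha
  have haR : a < R₁ := by
    have : ⟪T x, x⟫ = ‖x‖ * a := by
      have := inner_smul_right (𝕜 := ℝ) (T x) u ‖x‖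
      rw [← hxu] at this
      simpa using this
    rw [this, mul_comm] at hcon
    exact lt_of_mul_lt_mul_right hcon hxp.le
  set q : Ed d := T x - a • u with hq
  have hqu : ⟪q, u⟫ = (0 : ℝ) := by
    rw [hq, inner_sub_left, inner_smul_left, huu, ← ha]; simp
  obtain ⟨e, he, hdir⟩ := exists_dir q hr
  have hre : ‖r • e‖ ≤ r := by
    rw [norm_smul, Real.norm_of_nonneg hr.le]; nlinarith
  set R : ℝ := R₁ + 10 * r with hRdef
  have hsub : ball (R • u + r • e) (r / 2) ⊆ ball (0 : Ed d) 2 := by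
    intro z hz
    rw [mem_ball, dist_eq_norm] at hz
    rw [mem_ball_zero_iff]
    have h1 : z = R • u + r • e + (z - (R • u + r • e)) := by abel
    have h2 := norm_add₃_le (a := R • u) (b := r • e) (c := z - (R • u + r • e))
    rw [← h1, norm_smul, hun, Real.norm_of_nonneg (by linarith : 0 ≤ R)] at h2
    linarith
  obtain ⟨z, hz, hsz, hTz⟩ := exists_good (ae_restrict_of_ae_restrict_of_subset hΩ hsg) hsub hr.le hE
  set w : Ed d := z - R • u with hw
  have hwb : w ∈ ball (r • e) (r / 2) := by
    rw [mem_ball, dist_eq_norm] at hz ⊢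
    convert hz using 2; rw [hw]; abel
  have h1 := hdir _ hwb
  have h1' : 0 ≤ ‖q‖ * r / 2 := by positivity
  have hwn : ‖w‖ ≤ 2 * r := by
    rw [mem_ball, dist_eq_norm] at hwb
    have := norm_add_le (r • e) (w - r • e)
    rw [add_sub_cancel] at this
    linarith
  have h2 := hsx.mono hsz
  set m : ℝ := ‖x‖ - R with hm
  have hmr : 10 * r ≤ m := by rw [hm, hRdef]; linarith
  have hxz : x - z = m • u - w := by
    conv_lhs => rw [hxu]
    rw [hw, hm, sub_smul]; abel
  have hT : T x - T z = (a - R) • u + q - (w + (T z - z)) := by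
    rw [hw, hq, sub_smul]; abel
  have h3 : ⟪T x - T z, x - z⟫ = (a - R) * (m - ⟪u, w⟫) - ⟪q, w⟫
      - ⟪w + (T z - z), m • u - w⟫ := by
    have k1 : ⟪(a - R) • u, m • u - w⟫ = (a - R) * (m - ⟪u, w⟫) := by
      rw [real_inner_smul_left, inner_sub_right, real_inner_smul_right, huu, mul_one]
    have k2 : ⟪q, m • u - w⟫ = -⟪q, w⟫ := by
      rw [inner_sub_right, real_inner_smul_right, hqu, mul_zero, zero_sub]
    rw [hT, hxz, inner_sub_left, inner_add_left, k1, k2]; ring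
  have h4 := (abs_le.1 (abs_real_inner_le_norm (w + (T z - z)) (m • u - w))).1
  have h5 := (abs_le.1 (abs_real_inner_le_norm u w)).2
  rw [hun, one_mul] at h5
  have h6 : ‖w + (T z - z)‖ ≤ 3 * r := by
    have := norm_add_le w (T z - z); linarith
  have h7 : ‖m • u - w‖ ≤ m + 2 * r := by
    have := norm_sub_le (m • u) w
    rw [norm_smul, hun, Real.norm_of_nonneg (by linarith : 0 ≤ m)] at this
    linarith
  have h8 : ‖w + (T z - z)‖ * ‖m • u - w‖ ≤ 3 * r * (m + 2 * r) :=
    mul_le_mul h6 h7 (norm_nonneg _) (by linarith)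
  have h9 : 10 * r * (m - 2 * r) ≤ (R - a) * (m - ⟪u, w⟫) :=
    mul_le_mul (by rw [hRdef]; linarith) (by linarith) (by linarith) (by rw [hRdef]; linarith)
  nlinarith

/-! ### Calculus: gradients, Laplacians and integration by parts -/

/-- The `i`-th standard basis vector. -/
abbrev ee {d : ℕ} (i : Fin d) : Ed d := EuclideanSpace.single i (1 : ℝ)

lemma inner_gradient {d : ℕ} (f : Ed d → ℝ) (x v : Ed d) :
    ⟪gradient f x, v⟫ = fderiv ℝ f x v := by
  simp [gradient]

lemma norm_gradient {d : ℕ} (f : Ed d → ℝ) (x : Ed d) : ‖gradient f x‖ = ‖fderiv ℝ f x‖ := by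
  simp [gradient]

lemma gradient_apply {d : ℕ} (f : Ed d → ℝ) (x : Ed d) (i : Fin d) :
    gradient f x i = fderiv ℝ f x (ee i) := by
  rw [← inner_gradient, EuclideanSpace.inner_single_right]
  simp

lemma inner_gradient_gradient {d : ℕ} (f g : Ed d → ℝ) (x : Ed d) :
    ⟪gradient f x, gradient g x⟫ = ∑ i : Fin d, fderiv ℝ f x (ee i) * fderiv ℝ g x (ee i) := by
  rw [PiLp.inner_apply]
  refine Finset.sum_congr rfl fun i _ => ?_
  rw [gradient_apply, gradient_apply]
  simp [mul_comm]

lemma measurable_gradient {d : ℕ} (f : Ed d → ℝ) : Measurable (gradient f) :=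
  (InnerProductSpace.toDual ℝ (Ed d)).symm.continuous.measurable.comp (measurable_fderiv ℝ f)

lemma contDiff_pd {d : ℕ} {f : Ed d → ℝ} (hf : ContDiff ℝ (⊤ : ℕ∞) f) (v : Ed d) :
    ContDiff ℝ (⊤ : ℕ∞) (fun x => fderiv ℝ f x v) :=
  (hf.fderiv_right (m := (⊤ : ℕ∞)) (by simp)).clm_apply contDiff_const

lemma contDiff_lap {d : ℕ} {f : Ed d → ℝ} (hf : ContDiff ℝ (⊤ : ℕ∞) f) :
    ContDiff ℝ (⊤ : ℕ∞) (lap f) :=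
  ContDiff.sum fun i _ => contDiff_pd (contDiff_pd hf (ee i)) (ee i)

lemma hasCompactSupport_pd {d : ℕ} {f : Ed d → ℝ} (hf : HasCompactSupport f) (v : Ed d) :
    HasCompactSupport (fun x => fderiv ℝ f x v) :=
  hf.fderiv_apply (𝕜 := ℝ) v

lemma tsupport_pd {d : ℕ} (f : Ed d → ℝ) (v : Ed d) :
    tsupport (fun x => fderiv ℝ f x v) ⊆ tsupport f :=
  tsupport_fderiv_apply_subset ℝ v

lemma lap_eq_zero_of_notMem {d : ℕ} {f : Ed d → ℝ} {x : Ed d} (hx : x ∉ tsupport f) :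
    lap f x = 0 :=
  Finset.sum_eq_zero fun i _ =>
    image_eq_zero_of_notMem_tsupport
      (f := fun x => fderiv ℝ (fun y => fderiv ℝ f y (ee i)) x (ee i)) fun h => hx (tsupport_pd f (ee i) (tsupport_pd _ (ee i) h))

lemma hasCompactSupport_lap {d : ℕ} {f : Ed d → ℝ} (hf : HasCompactSupport f) :
    HasCompactSupport (lap f) :=
  HasCompactSupport.intro hf fun _ hx => lap_eq_zero_of_notMem hx

lemma integrable_lip_mul {d : ℕ} {f g : Ed d → ℝ} (hf : Continuous f) (hg : Continuous g)
    (hgc : HasCompactSupport g) : Integrable (fun x => f x * g x) :=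
  (hf.mul hg).integrable_of_hasCompactSupport hgc.mul_left

lemma integrable_fderiv_mul {d : ℕ} {L : ℝ≥0} {f g : Ed d → ℝ} (hf : LipschitzWith L f)
    (hg : Continuous g) (hgc : HasCompactSupport g) (v : Ed d) :
    Integrable (fun x => fderiv ℝ f x v * g x) := by
  refine (hg.integrable_of_hasCompactSupport hgc).bdd_mul (c := L * ‖v‖)
    ((measurable_fderiv_apply_const ℝ f v).aestronglyMeasurable) ?_
  refine Eventually.of_forall fun x => ?_
  exact (ContinuousLinearMap.le_opNorm _ _).trans
    (mul_le_mul_of_nonneg_right (norm_fderiv_le_of_lipschitz ℝ hf) (norm_nonneg _))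

/-- Integration by parts for a Lipschitz function against a smooth test function. -/
lemma ibp_lip {d : ℕ} {L : ℝ≥0} {f g : Ed d → ℝ} (hf : LipschitzWith L f)
    (hg : ContDiff ℝ (⊤ : ℕ∞) g) (hgc : HasCompactSupport g) (v : Ed d) :
    ∫ x, fderiv ℝ f x v * g x = -∫ x, f x * fderiv ℝ g x v := by
  obtain ⟨D, hD⟩ := ContDiff.lipschitzWith_of_hasCompactSupport hgc hg (by simp)
  have h1 := hf.integral_lineDeriv_mul_eq (μ := volume) hD hgc v
  rw [← integral_neg]
  convert h1 using 1
  · refine integral_congr_ae ?_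
    filter_upwards [hf.ae_differentiableAt (μ := volume)] with x hx
    rw [hx.lineDeriv_eq_fderiv]
  · refine integral_congr_ae (Eventually.of_forall fun x => ?_)
    simp only
    rw [((hg.differentiable (by simp)) x).lineDeriv_eq_fderiv]
    simp [mul_comm]

lemma ibp_lap {d : ℕ} {L : ℝ≥0} {f g : Ed d → ℝ} (hf : LipschitzWith L f)
    (hg : ContDiff ℝ (⊤ : ℕ∞) g) (hgc : HasCompactSupport g) :
    ∫ x, ⟪gradient f x, gradient g x⟫ = -∫ x, f x * lap g x := by
  simp only [inner_gradient_gradient, lap, Finset.mul_sum]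
  rw [integral_finsetSum, integral_finsetSum, ← Finset.sum_neg_distrib]
  · exact Finset.sum_congr rfl fun i _ =>
      ibp_lip hf (contDiff_pd hg (ee i)) (hasCompactSupport_pd hgc _) _
  · intro i _
    exact integrable_lip_mul hf.continuous (contDiff_pd (contDiff_pd hg (ee i)) _).continuous
      (hasCompactSupport_pd (hasCompactSupport_pd hgc _) _)
  · intro i _
    exact integrable_fderiv_mul hf (contDiff_pd hg (ee i)).continuous (hasCompactSupport_pd hgc _) _

lemma lipschitz_sq {d : ℕ} {L : ℝ≥0} {f : Ed d → ℝ} (hf : LipschitzWith L f) {N : ℝ}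
    (hN : ∀ x, |f x| ≤ N) : ∃ L' : ℝ≥0, LipschitzWith L' (fun x => f x ^ 2) := by
  have hN0 : 0 ≤ N := (abs_nonneg _).trans (hN 0)
  refine ⟨Real.toNNReal (2 * N * L), LipschitzWith.of_dist_le_mul fun x y => ?_⟩
  rw [Real.coe_toNNReal _ (by positivity), Real.dist_eq]
  have h1 : f x ^ 2 - f y ^ 2 = (f x + f y) * (f x - f y) := by ring
  have h2 := hf.dist_le_mul x y
  rw [Real.dist_eq] at h2
  have h3 : |f x + f y| ≤ 2 * N := (abs_add_le _ _).trans (by linarith [hN x, hN y])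
  rw [h1, abs_mul, mul_assoc]
  exact mul_le_mul h3 h2 (abs_nonneg _) (by positivity)

lemma ibp_sq {d : ℕ} {L : ℝ≥0} {f g : Ed d → ℝ} (hf : LipschitzWith L f) {N : ℝ}
    (hN : ∀ x, |f x| ≤ N) (hg : ContDiff ℝ (⊤ : ℕ∞) g) (hgc : HasCompactSupport g) :
    ∫ x, f x * ⟪gradient f x, gradient g x⟫ = -(1 / 2) * ∫ x, f x ^ 2 * lap g x := by
  obtain ⟨L', hL'⟩ := lipschitz_sq hf hN
  have h1 := ibp_lap hL' hg hgc
  have h2 : ∫ x, ⟪gradient (fun x => f x ^ 2) x, gradient g x⟫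
      = 2 * ∫ x, f x * ⟪gradient f x, gradient g x⟫ := by
    rw [← integral_const_mul]
    refine integral_congr_ae ?_
    filter_upwards [hf.ae_differentiableAt (μ := volume)] with x hx
    rw [real_inner_comm, real_inner_comm (gradient g x), inner_gradient_gradient,
      inner_gradient_gradient, Finset.mul_sum, Finset.mul_sum]
    refine Finset.sum_congr rfl fun i _ => ?_
    rw [(hx.hasFDerivAt.pow 2).fderiv]
    simp; ring
  linarith

lemma integral_lap_eq_zero {d : ℕ} {g : Ed d → ℝ} (hg : ContDiff ℝ (⊤ : ℕ∞) g)
    (hgc : HasCompactSupport g) : ∫ x, lap g x = 0 := by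
  have h := ibp_lap (LipschitzWith.const (α := Ed d) (1 : ℝ)) hg hgc
  simp only [inner_gradient_gradient] at h
  simpa using h

/-- Integration by parts for smooth functions, one of them compactly supported. -/
lemma ibp_smooth {d : ℕ} {f g : Ed d → ℝ} (hf : ContDiff ℝ (⊤ : ℕ∞) f)
    (hg : ContDiff ℝ (⊤ : ℕ∞) g) (hgc : HasCompactSupport g) (v : Ed d) :
    ∫ x, f x * fderiv ℝ g x v = -∫ x, fderiv ℝ f x v * g x :=
  integral_mul_fderiv_eq_neg_fderiv_mul_of_integrable
    (integrable_lip_mul (contDiff_pd hf v).continuous hg.continuous hgc)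
    (integrable_lip_mul hf.continuous (contDiff_pd hg v).continuous (hasCompactSupport_pd hgc v))
    (integrable_lip_mul hf.continuous hg.continuous hgc)
    (fun x _ => hf.differentiable (by simp) x) (fun x _ => hg.differentiable (by simp) x)

/-- Green's identity. -/
lemma green {d : ℕ} {f g : Ed d → ℝ} (hf : ContDiff ℝ (⊤ : ℕ∞) f)
    (hg : ContDiff ℝ (⊤ : ℕ∞) g) (hgc : HasCompactSupport g) :
    ∫ x, f x * lap g x = ∫ x, lap f x * g x := by
  simp only [lap, Finset.mul_sum, Finset.sum_mul]
  rw [integral_finsetSum, integral_finsetSum]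
  · refine Finset.sum_congr rfl fun i _ => ?_
    rw [ibp_smooth hf (contDiff_pd hg (ee i)) (hasCompactSupport_pd hgc _),
      ibp_smooth (contDiff_pd hf (ee i)) hg hgc, neg_neg]
  · intro i _
    exact integrable_lip_mul (contDiff_pd (contDiff_pd hf (ee i)) _).continuous hg.continuous hgc
  · intro i _
    exact integrable_lip_mul hf.continuous (contDiff_pd (contDiff_pd hg (ee i)) _).continuous
      (hasCompactSupport_pd (hasCompactSupport_pd hgc _) _)

lemma lap_sq {d : ℕ} {f : Ed d → ℝ} (hf : ContDiff ℝ (⊤ : ℕ∞) f) (x : Ed d) :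
    lap (fun y => f y ^ 2) x = 2 * ‖gradient f x‖ ^ 2 + 2 * f x * lap f x := by
  have hd : Differentiable ℝ f := hf.differentiable (by simp)
  have h1 : ∀ i : Fin d, (fun y => fderiv ℝ (fun y => f y ^ 2) y (ee i))
      = fun y => 2 * (f y * fderiv ℝ f y (ee i)) := by
    intro i; funext y
    rw [((hd y).hasFDerivAt.pow 2).fderiv]
    simp; ring
  rw [← real_inner_self_eq_norm_sq, inner_gradient_gradient]
  simp only [lap, h1, Finset.mul_sum]
  rw [← Finset.sum_add_distrib]
  refine Finset.sum_congr rfl fun i _ => ?_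
  have h2 := (contDiff_pd hf (ee i)).differentiable (by simp) x
  rw [((((hd x).hasFDerivAt.fun_mul h2.hasFDerivAt)).const_mul 2).fderiv]
  simp; ring

lemma lap_sub {d : ℕ} {f g : Ed d → ℝ} (hf : ContDiff ℝ (⊤ : ℕ∞) f)
    (hg : ContDiff ℝ (⊤ : ℕ∞) g) (x : Ed d) :
    lap (fun y => f y - g y) x = lap f x - lap g x := by
  have h1 : ∀ i : Fin d, (fun y => fderiv ℝ (fun y => f y - g y) y (ee i))
      = fun y => fderiv ℝ f y (ee i) - fderiv ℝ g y (ee i) := by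
    intro i; funext y
    rw [fderiv_fun_sub (hf.differentiable (by simp) y) (hg.differentiable (by simp) y)]
    simp
  simp only [lap, h1]
  rw [← Finset.sum_sub_distrib]
  refine Finset.sum_congr rfl fun i _ => ?_
  rw [fderiv_fun_sub ((contDiff_pd hf (ee i)).differentiable (by simp) x)
    ((contDiff_pd hg (ee i)).differentiable (by simp) x)]
  simp

lemma lap_const_mul {d : ℕ} {f : Ed d → ℝ} (hf : ContDiff ℝ (⊤ : ℕ∞) f) (a : ℝ) (x : Ed d) :
    lap (fun y => a * f y) x = a * lap f x := by
  have h1 : ∀ i : Fin d, (fun y => fderiv ℝ (fun y => a * f y) y (ee i))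
      = fun y => a * fderiv ℝ f y (ee i) := by
    intro i; funext y
    rw [fderiv_const_mul (hf.differentiable (by simp) y)]
    simp
  simp only [lap, h1, Finset.mul_sum]
  refine Finset.sum_congr rfl fun i _ => ?_
  rw [fderiv_const_mul ((contDiff_pd hf (ee i)).differentiable (by simp) x)]
  simp

lemma lap_comp_sub {d : ℕ} (f : Ed d → ℝ) (a x : Ed d) :
    lap (fun y => f (y - a)) x = lap f (x - a) := by
  simp only [lap, fderiv_comp_sub]
  exact Finset.sum_congr rfl fun i _ => by
    rw [fderiv_comp_sub (f := fun y => fderiv ℝ f y (ee i))]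

/-- Laplacian of a radial function `F(|x|²)`. -/
lemma lap_radial {d : ℕ} {F : ℝ → ℝ} (hF : ContDiff ℝ (⊤ : ℕ∞) F) (x : Ed d) :
    lap (fun y => F (‖y‖ ^ 2)) x
      = 4 * ‖x‖ ^ 2 * deriv (deriv F) (‖x‖ ^ 2) + 2 * d * deriv F (‖x‖ ^ 2) := by
  have hd : Differentiable ℝ F := hF.differentiable (by simp)
  have hF' : ContDiff ℝ (⊤ : ℕ∞) (deriv F) := by
    have := contDiff_infty_iff_deriv.1 hF
    exact this.2
  have hd' : Differentiable ℝ (deriv F) := hF'.differentiable (by simp)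
  have h0 : ∀ (G : ℝ → ℝ), Differentiable ℝ G → ∀ (y : Ed d) (i : Fin d),
      HasFDerivAt (fun y : Ed d => G (‖y‖ ^ 2))
        (deriv G (‖y‖ ^ 2) • (2 • (innerSL ℝ y))) y := fun G hG y i =>
    (hG (‖y‖ ^ 2)).hasDerivAt.comp_hasFDerivAt y (hasStrictFDerivAt_norm_sq y).hasFDerivAt
  have h1 : ∀ i : Fin d, (fun y : Ed d => fderiv ℝ (fun y : Ed d => F (‖y‖ ^ 2)) y (ee i))
      = fun y => deriv F (‖y‖ ^ 2) * (2 * y i) := by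
    intro i; funext y
    rw [(h0 F hd y i).fderiv]
    simp [EuclideanSpace.inner_single_right]
  simp only [lap, h1]
  have h2 : ∀ i : Fin d, fderiv ℝ (fun y : Ed d => deriv F (‖y‖ ^ 2) * (2 * y i)) x (ee i)
      = 4 * deriv (deriv F) (‖x‖ ^ 2) * (x i) ^ 2 + 2 * deriv F (‖x‖ ^ 2) := by
    intro i
    have h3 : HasFDerivAt (fun y : Ed d => y i) (EuclideanSpace.proj i : Ed d →L[ℝ] ℝ) x :=
      (EuclideanSpace.proj i : Ed d →L[ℝ] ℝ).hasFDerivAt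
    rw [((h0 _ hd' x i).fun_mul (h3.const_mul 2)).fderiv]
    simp [EuclideanSpace.inner_single_right]
    ring
  rw [Finset.sum_congr rfl fun i _ => h2 i, Finset.sum_add_distrib, ← Finset.mul_sum,
    EuclideanSpace.norm_sq_eq]
  simp
  ring

/-! ### Translations and a Poincaré inequality -/

lemma deriv_line {d : ℕ} (f : Ed d → ℝ) (x v : Ed d) (t : ℝ) :
    deriv (fun t : ℝ => f (x + t • v)) t = lineDeriv ℝ f (x + t • v) v := by
  rw [lineDeriv]
  have h : (fun s : ℝ => f (x + t • v + s • v)) = fun s => (fun t : ℝ => f (x + t • v)) (t + s) := by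
    funext s; simp only [add_smul, add_assoc]
  rw [h, deriv_comp_const_add (f := fun t : ℝ => f (x + t • v)), add_zero]

lemma lipschitz_line {d : ℕ} {L : ℝ≥0} {f : Ed d → ℝ} (hf : LipschitzWith L f) (x v : Ed d) :
    LipschitzWith (L * ‖v‖₊) (fun t : ℝ => f (x + t • v)) := by
  refine LipschitzWith.of_dist_le_mul fun s t => ?_
  refine (hf.dist_le_mul _ _).trans (le_of_eq ?_)
  rw [dist_add_left, dist_eq_norm, ← sub_smul, norm_smul, NNReal.coe_mul, coe_nnnorm,
    dist_eq_norm]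
  ring

lemma ftc_line {d : ℕ} {L : ℝ≥0} {f : Ed d → ℝ} (hf : LipschitzWith L f) (x v : Ed d) :
    ∫ t in (0 : ℝ)..1, lineDeriv ℝ f (x + t • v) v = f (x + v) - f x := by
  have h := ((lipschitz_line hf x v).lipschitzOnWith
    (s := uIcc 0 1)).absolutelyContinuousOnInterval.integral_deriv_eq_sub
  simpa only [deriv_line, one_smul, zero_smul, add_zero] using h

lemma measurable_line {d : ℕ} {L : ℝ≥0} {f : Ed d → ℝ} (hf : LipschitzWith L f) (v : Ed d) :
    Measurable (fun p : Ed d × ℝ => lineDeriv ℝ f (p.1 + p.2 • v) v) :=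
  (measurable_lineDeriv hf.continuous).comp
    ((continuous_fst.add (continuous_snd.smul continuous_const)).measurable)

lemma sq_sub_le_line {d : ℕ} {L : ℝ≥0} {f : Ed d → ℝ} (hf : LipschitzWith L f) (x v : Ed d) :
    ENNReal.ofReal ((f (x + v) - f x) ^ 2)
      ≤ ∫⁻ t in Ioc (0 : ℝ) 1, ENNReal.ofReal (lineDeriv ℝ f (x + t • v) v ^ 2) := by
  set g : ℝ → ℝ := fun t => lineDeriv ℝ f (x + t • v) v with hg
  set m : ℝ := f (x + v) - f x with hm
  have hgm : Measurable g := (measurable_line hf v).comp (measurable_const.prodMk measurable_id)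
  have hgb : ∀ t, ‖g t‖ ≤ L * ‖v‖ := fun t => norm_lineDeriv_le_of_lipschitz ℝ hf
  have hkint : ∀ {k : ℝ → ℝ}, Measurable k → (∃ C, ∀ t, ‖k t‖ ≤ C) →
      IntegrableOn k (Ioc 0 1) := by
    rintro k hk ⟨C, hC⟩
    exact Measure.integrableOn_of_bounded (by simp) hk.aestronglyMeasurable
      (Eventually.of_forall hC)
  have hg1 : IntegrableOn g (Ioc 0 1) := hkint hgm ⟨_, hgb⟩
  have hg2 : IntegrableOn (fun t => g t ^ 2) (Ioc 0 1) :=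
    hkint (hgm.pow_const 2) ⟨(L * ‖v‖) ^ 2, fun t => by
      rw [norm_pow]; exact pow_le_pow_left₀ (norm_nonneg _) (hgb t) 2⟩
  have hI : ∫ t in Ioc (0 : ℝ) 1, g t = m := by
    rw [← intervalIntegral.integral_of_le zero_le_one]; exact ftc_line hf x v
  rw [← ofReal_integral_eq_lintegral_ofReal hg2 (Eventually.of_forall fun t => sq_nonneg _)]
  refine ENNReal.ofReal_le_ofReal ?_
  have h0 : 0 ≤ ∫ t in Ioc (0 : ℝ) 1, (g t - m) ^ 2 := integral_nonneg fun t => sq_nonneg _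
  have h1 : ∫ t in Ioc (0 : ℝ) 1, (g t - m) ^ 2
      = (∫ t in Ioc (0 : ℝ) 1, g t ^ 2) - 2 * m * (∫ t in Ioc (0 : ℝ) 1, g t) + m ^ 2 := by
    have : ∀ t, (g t - m) ^ 2 = (g t ^ 2 - 2 * m * g t) + m ^ 2 := fun t => by ring
    simp only [this]
    have i1 : Integrable (fun t => g t ^ 2 - 2 * m * g t) (volume.restrict (Ioc 0 1)) :=
      hg2.sub (hg1.const_mul _)
    rw [integral_add i1 (integrable_const _), integral_sub hg2 (hg1.const_mul _),
      integral_const_mul]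
    simp
  rw [hI] at h1
  nlinarith

lemma translate_le {d : ℕ} {L : ℝ≥0} {f : Ed d → ℝ} (hf : LipschitzWith L f) (v : Ed d)
    {A U : Set (Ed d)} (hA : MeasurableSet A)
    (hAU : ∀ x ∈ A, ∀ t ∈ Ioc (0 : ℝ) 1, x + t • v ∈ U) :
    ∫⁻ x in A, ENNReal.ofReal ((f (x + v) - f x) ^ 2)
      ≤ ENNReal.ofReal (‖v‖ ^ 2) * ∫⁻ x in U, ENNReal.ofReal (‖gradient f x‖ ^ 2) := by
  have hm : Measurable (fun p : Ed d × ℝ => ENNReal.ofReal (lineDeriv ℝ f (p.1 + p.2 • v) v ^ 2)) :=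
    ((measurable_line hf v).pow_const 2).ennreal_ofReal
  calc ∫⁻ x in A, ENNReal.ofReal ((f (x + v) - f x) ^ 2)
      ≤ ∫⁻ x in A, ∫⁻ t in Ioc (0 : ℝ) 1, ENNReal.ofReal (lineDeriv ℝ f (x + t • v) v ^ 2) :=
        lintegral_mono fun x => sq_sub_le_line hf x v
    _ = ∫⁻ t in Ioc (0 : ℝ) 1, ∫⁻ x in A, ENNReal.ofReal (lineDeriv ℝ f (x + t • v) v ^ 2) :=
        lintegral_lintegral_swap hm.aemeasurable
    _ ≤ ∫⁻ t in Ioc (0 : ℝ) 1, ENNReal.ofReal (‖v‖ ^ 2) *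
          ∫⁻ x in U, ENNReal.ofReal (‖gradient f x‖ ^ 2) := by
        refine setLIntegral_mono' measurableSet_Ioc fun t ht => ?_
        rw [← lintegral_const_mul' _ _ ENNReal.ofReal_ne_top]
        have h1 : ∫⁻ x in A, ENNReal.ofReal (lineDeriv ℝ f (x + t • v) v ^ 2)
            = ∫⁻ y in (fun y => y - t • v) ⁻¹' A, ENNReal.ofReal (lineDeriv ℝ f y v ^ 2) := by
          have hA' : MeasurableSet ((fun y => y - t • v) ⁻¹' A) :=
            (measurable_id.sub_const (t • v)) hA
          rw [← lintegral_indicator hA, ← lintegral_indicator hA',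
            ← lintegral_add_right_eq_self
              (((fun y => y - t • v) ⁻¹' A).indicator _) (t • v)]
          refine lintegral_congr fun x => ?_
          by_cases hx : x ∈ A <;> simp [indicator, hx]
        rw [h1]
        have hsub : (fun y => y - t • v) ⁻¹' A ⊆ U := fun y hy => by
          have := hAU _ hy t ht
          simpa using this
        refine le_trans (lintegral_mono_set hsub) (lintegral_mono_ae ?_)
        filter_upwards [ae_restrict_of_ae (hf.ae_differentiableAt (μ := volume))] with y hy
        rw [← ENNReal.ofReal_mul (by positivity), hy.lineDeriv_eq_fderiv, norm_gradient]
        refine ENNReal.ofReal_le_ofReal ?_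
        rw [← mul_pow, ← sq_abs, mul_comm]
        exact pow_le_pow_left₀ (abs_nonneg _) ((fderiv ℝ f y).le_opNorm v) 2
    _ = _ := by simp

/-- Constant in the Poincaré inequality below. -/
def CP (d : ℕ) : ℝ≥0∞ := ENNReal.ofReal 16 * volume (ball (0 : Ed d) 4) / volume (ball (0 : Ed d) (7 / 4))

lemma CP_ne_top (d : ℕ) : CP d ≠ ∞ :=
  ENNReal.div_ne_top (ENNReal.mul_ne_top ENNReal.ofReal_ne_top measure_ball_lt_top.ne)
    (measure_ball_pos _ _ (by norm_num)).ne'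

/-- Poincaré inequality: some value of `f` is a good replacement for its mean. -/
lemma poincare {d : ℕ} {L : ℝ≥0} {f : Ed d → ℝ} (hf : LipschitzWith L f) :
    ∃ a ∈ ball (0 : Ed d) (7 / 4), ∫⁻ y in ball (0 : Ed d) (7 / 4), ENNReal.ofReal ((f y - f a) ^ 2)
      ≤ CP d * ∫⁻ x in ball (0 : Ed d) 2, ENNReal.ofReal (‖gradient f x‖ ^ 2) := by
  set B := ball (0 : Ed d) (7 / 4) with hB
  set G := ∫⁻ x in ball (0 : Ed d) 2, ENNReal.ofReal (‖gradient f x‖ ^ 2) with hG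
  have hBm : MeasurableSet B := measurableSet_ball
  have hc : Continuous (fun p : Ed d × Ed d => ENNReal.ofReal ((f p.2 - f p.1) ^ 2)) :=
    ENNReal.continuous_ofReal.comp
      (((hf.continuous.comp continuous_snd).sub (hf.continuous.comp continuous_fst)).pow 2)
  have hB0 : volume B ≠ 0 := (measure_ball_pos _ _ (by norm_num)).ne'
  have hBt : volume B ≠ ∞ := measure_ball_lt_top.ne
  obtain ⟨a, ha, hle⟩ := exists_le_setLAverage (μ := volume) (s := B)
    (f := fun x => ∫⁻ y in B, ENNReal.ofReal ((f y - f x) ^ 2)) hB0 hBt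
    (hc.measurable.lintegral_prod_right' (ν := volume.restrict B)).aemeasurable
  refine ⟨a, ha, hle.trans ?_⟩
  rw [setLAverage_eq, CP, ENNReal.mul_div_right_comm, ENNReal.div_eq_inv_mul, ENNReal.div_eq_inv_mul]
  suffices h : ∫⁻ x in B, ∫⁻ y in B, ENNReal.ofReal ((f y - f x) ^ 2)
      ≤ ENNReal.ofReal 16 * volume (ball (0 : Ed d) 4) * G by
    calc _ ≤ (volume B)⁻¹ * (ENNReal.ofReal 16 * volume (ball (0 : Ed d) 4) * G) := by gcongr
      _ = _ := by ring
  set k : Ed d × Ed d → ℝ≥0∞ := fun p => B.indicator 1 p.1 * B.indicator 1 (p.1 + p.2) *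
    ENNReal.ofReal ((f (p.1 + p.2) - f p.1) ^ 2) with hk
  have hkm : Measurable k := by
    have i1 : Measurable (B.indicator (1 : Ed d → ℝ≥0∞)) := measurable_one.indicator hBm
    have i2 : Measurable f := hf.continuous.measurable
    fun_prop
  have e1 : ∫⁻ x in B, ∫⁻ y in B, ENNReal.ofReal ((f y - f x) ^ 2) = ∫⁻ x, ∫⁻ v, k (x, v) := by
    rw [← lintegral_indicator hBm]
    refine lintegral_congr fun x => ?_
    by_cases hx : x ∈ B
    · rw [indicator_of_mem hx, ← lintegral_indicator hBm,
        ← lintegral_add_left_eq_self _ x]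
      refine lintegral_congr fun v => ?_
      by_cases hv : x + v ∈ B <;> simp [hk, hx, hv]
    · simp [hk, hx]
  rw [e1, lintegral_lintegral_swap hkm.aemeasurable]
  have hkv : ∀ v, ∫⁻ x, k (x, v) ≤ (ball (0 : Ed d) 4).indicator (fun _ => ENNReal.ofReal 16 * G) v := by
    intro v
    have hA : MeasurableSet (B ∩ (fun x => x + v) ⁻¹' B) :=
      hBm.inter ((measurable_id.add_const v) hBm)
    have e2 : ∫⁻ x, k (x, v)
        = ∫⁻ x in B ∩ (fun x => x + v) ⁻¹' B, ENNReal.ofReal ((f (x + v) - f x) ^ 2) := by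
      rw [← lintegral_indicator hA]
      refine lintegral_congr fun x => ?_
      by_cases hx : x ∈ B <;> by_cases hv : x + v ∈ B <;> simp [hk, hx, hv, indicator]
    rw [e2]
    by_cases hv : v ∈ ball (0 : Ed d) 4
    · rw [indicator_of_mem hv]
      refine (translate_le hf v (U := ball (0 : Ed d) 2) hA ?_).trans ?_
      · rintro x ⟨hx, hxv⟩ t ht
        have := (convex_ball (0 : Ed d) (7 / 4)).add_smul_mem hx hxv ⟨ht.1.le, ht.2⟩
        exact ball_subset_ball (by norm_num) this
      · gcongr
        have : ‖v‖ < 4 := by simpa using hv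
        nlinarith [norm_nonneg v]
    · have : B ∩ (fun x => x + v) ⁻¹' B = ∅ := by
        rw [Set.eq_empty_iff_forall_notMem]
        rintro x ⟨hx, hxv⟩
        apply hv
        simp only [hB, mem_preimage, mem_ball_zero_iff] at hx hxv ⊢
        have := norm_sub_le (x + v) x
        rw [add_sub_cancel_left] at this
        linarith
      simp [this]
  refine (lintegral_mono hkv).trans (le_of_eq ?_)
  rw [lintegral_indicator measurableSet_ball, setLIntegral_const]
  ring

/-- A bound on increments which is linear up to a quadratic error improves to a linear bound. -/
lemma lip_of_quad {d : ℕ} {L : ℝ≥0} {f : Ed d → ℝ} (hf : LipschitzWith L f) {U : Set (Ed d)}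
    (hUo : IsOpen U) (hU : Convex ℝ U) {a : ℝ} (ha : 0 ≤ a)
    (h : ∀ x ∈ U, ∀ z ∈ U, f x - f z ≤ a * ‖z - x‖ + ‖z - x‖ ^ 2) :
    ∀ x ∈ U, ∀ z ∈ U, |f z - f x| ≤ a * ‖z - x‖ := by
  intro x hx z hz
  have hft := ftc_line hf x (z - x)
  rw [add_sub_cancel] at hft
  have h2 : ∀ t ∈ uIoc (0 : ℝ) 1, ‖lineDeriv ℝ f (x + t • (z - x)) (z - x)‖ ≤ a * ‖z - x‖ := by
    intro t ht
    rw [uIoc_of_le zero_le_one] at ht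
    have hxt : x + t • (z - x) ∈ U := hU.add_smul_sub_mem hx hz ⟨ht.1.le, ht.2⟩
    refine le_of_forall_pos_le_add fun δ hδ => ?_
    rw [← deriv_line]
    refine norm_deriv_le_of_lip' (by positivity) ?_
    have hc : Continuous (fun t : ℝ => x + t • (z - x)) := by fun_prop
    have e1 : ∀ᶠ s in 𝓝 t, x + s • (z - x) ∈ U := hc.continuousAt.eventually_mem (hUo.mem_nhds hxt)
    have hc2 : Continuous (fun s : ℝ => ‖s - t‖ * ‖z - x‖ ^ 2) := by fun_prop
    have e2 : ∀ᶠ s in 𝓝 t, ‖s - t‖ * ‖z - x‖ ^ 2 < δ :=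
      hc2.continuousAt.eventually_lt continuousAt_const (by simpa using hδ)
    filter_upwards [e1, e2] with s hs1 hs2
    have k1 := h _ hs1 _ hxt
    have k2 := h _ hxt _ hs1
    have k3 : ‖x + t • (z - x) - (x + s • (z - x))‖ = ‖s - t‖ * ‖z - x‖ := by
      rw [add_sub_add_left_eq_sub, ← sub_smul, norm_smul, norm_sub_rev]
    rw [norm_sub_rev, k3] at k2
    rw [k3] at k1
    rw [Real.norm_eq_abs, abs_le]
    have k4 : (‖s - t‖ * ‖z - x‖) ^ 2 ≤ δ * ‖s - t‖ := by
      have := mul_le_mul_of_nonneg_left hs2.le (norm_nonneg (s - t))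
      nlinarith
    constructor <;> nlinarith
  have h3 := intervalIntegral.norm_integral_le_of_norm_le_const h2
  rw [hft] at h3
  simpa using h3

/-! ### Test functions -/

/-- A smooth function bounded by `K` together with its first derivative and its second order Taylor
remainder. These consequences of a `C²` bound are the form in which it is used. -/
structure C2Bd {d : ℕ} (K : ℝ) (ζ : Ed d → ℝ) : Prop where
  smooth : ContDiff ℝ (⊤ : ℕ∞) ζ
  bdd : ∀ x, |ζ x| ≤ K
  grad : ∀ x v, |fderiv ℝ ζ x v| ≤ K * ‖v‖
  lip : ∀ x y, |ζ y - ζ x| ≤ K * ‖y - x‖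
  taylor : ∀ x y, |ζ y - ζ x - fderiv ℝ ζ x (y - x)| ≤ K * ‖y - x‖ ^ 2

lemma C2Bd.nonneg {d : ℕ} {K : ℝ} {ζ : Ed d → ℝ} (h : C2Bd K ζ) : 0 ≤ K :=
  (abs_nonneg _).trans (h.bdd 0)

lemma C2Bd.translate {d : ℕ} {K : ℝ} {ζ : Ed d → ℝ} (h : C2Bd K ζ) (a : Ed d) :
    C2Bd K (fun y => ζ (y - a)) where
  smooth := h.smooth.comp (contDiff_id.sub contDiff_const)
  bdd x := h.bdd _
  grad x v := by rw [fderiv_comp_sub]; exact h.grad _ _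
  lip x y := by simpa using h.lip (x - a) (y - a)
  taylor x y := by rw [fderiv_comp_sub]; simpa using h.taylor (x - a) (y - a)

lemma exists_C2Bd {d : ℕ} {ζ : Ed d → ℝ} (hζ : ContDiff ℝ (⊤ : ℕ∞) ζ)
    (hc : HasCompactSupport ζ) : ∃ K, C2Bd K ζ := by
  obtain ⟨K₁, hK₁⟩ := hζ.continuous.bounded_above_of_compact_support hc
  obtain ⟨K₂, hK₂⟩ := ContDiff.lipschitzWith_of_hasCompactSupport hc hζ (by simp)
  have hζ' : ContDiff ℝ (⊤ : ℕ∞) (fderiv ℝ ζ) := hζ.fderiv_right (by simp)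
  obtain ⟨K₃, hK₃⟩ := ContDiff.lipschitzWith_of_hasCompactSupport (hc.fderiv (𝕜 := ℝ)) hζ' (by simp)
  have hd : Differentiable ℝ ζ := hζ.differentiable (by simp)
  have hK : 0 ≤ K₁ := (norm_nonneg _).trans (hK₁ 0)
  have e2 : (K₂ : ℝ) ≤ K₁ + K₂ + K₃ := by linarith [K₃.coe_nonneg]
  refine ⟨K₁ + K₂ + K₃, hζ, fun x => ?_, fun x v => ?_, fun x y => ?_, fun x y => ?_⟩
  · exact (hK₁ x).trans (by linarith [K₂.coe_nonneg, K₃.coe_nonneg])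
  · refine ((fderiv ℝ ζ x).le_opNorm v).trans ?_
    exact mul_le_mul_of_nonneg_right ((norm_fderiv_le_of_lipschitz ℝ hK₂).trans e2) (norm_nonneg _)
  · refine (hK₂.dist_le_mul y x).trans ?_
    rw [dist_eq_norm]
    exact mul_le_mul_of_nonneg_right e2 (norm_nonneg _)
  · have h1 : ‖ζ y - ζ x - fderiv ℝ ζ x (y - x)‖ ≤ (K₃ * ‖y - x‖) * ‖y - x‖ := by
      refine (convex_segment x y).norm_image_sub_le_of_norm_fderiv_le' (𝕜 := ℝ)
        (fun z _ => hd z) (fun z hz => ?_) (left_mem_segment ℝ x y) (right_mem_segment ℝ x y)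
      rw [← dist_eq_norm]
      refine (hK₃.dist_le_mul z x).trans (mul_le_mul_of_nonneg_left ?_ K₃.coe_nonneg)
      rw [dist_eq_norm]
      obtain ⟨t, ht, rfl⟩ := (segment_eq_image' ℝ x y) ▸ hz
      rw [add_sub_cancel_left, norm_smul, Real.norm_of_nonneg ht.1]
      exact mul_le_of_le_one_left (norm_nonneg _) ht.2
    rw [← Real.norm_eq_abs]
    refine h1.trans ?_
    have := K₂.coe_nonneg
    nlinarith [norm_nonneg (y - x), sq_nonneg ‖y - x‖]

/-- The ball of radius `7/4` on which the transport is compared with its linearization. -/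
abbrev BB (d : ℕ) : Set (Ed d) := ball (0 : Ed d) (7 / 4)

/-- The closed ball containing the supports of all test functions. -/
abbrev CB (d : ℕ) : Set (Ed d) := closedBall (0 : Ed d) (5 / 4)

lemma eq_zero_of_notMem {d : ℕ} {ζ : Ed d → ℝ} (h : tsupport ζ ⊆ CB d) {x : Ed d}
    (hx : 5 / 4 < ‖x‖) : ζ x = 0 :=
  image_eq_zero_of_notMem_tsupport fun hx' => by
    have := h hx'
    rw [mem_closedBall_zero_iff] at this
    linarith

lemma compact_of_tsupport {d : ℕ} {ζ : Ed d → ℝ} (h : tsupport ζ ⊆ CB d) : HasCompactSupport ζ :=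
  (isCompact_closedBall _ _).of_isClosed_subset (isClosed_tsupport ζ) h

lemma fderiv_eq_zero_of_notMem {d : ℕ} {ζ : Ed d → ℝ} (h : tsupport ζ ⊆ CB d) {x : Ed d}
    (hx : 5 / 4 < ‖x‖) : fderiv ℝ ζ x = 0 := by
  refine image_eq_zero_of_notMem_tsupport fun hx' => ?_
  have := h (tsupport_fderiv_subset ℝ hx')
  rw [mem_closedBall_zero_iff] at this
  linarith

lemma setIntegral_BB {d : ℕ} {g : Ed d → ℝ} (h : ∀ x, 7 / 4 ≤ ‖x‖ → g x = 0) :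
    ∫ x in BB d, g x = ∫ x, g x :=
  setIntegral_eq_integral_of_forall_compl_eq_zero fun x hx => h x (by simpa using hx)

lemma integrableOn_BB {d : ℕ} {g : Ed d → ℝ} (hg : Measurable g) {C : ℝ} (hC : ∀ x, |g x| ≤ C) :
    IntegrableOn g (BB d) :=
  Measure.integrableOn_of_bounded measure_ball_lt_top.ne hg.aestronglyMeasurable
    (Eventually.of_forall hC)

lemma integrableOn_BB' {d : ℕ} {g : Ed d → ℝ} (hg : Measurable g) {C : ℝ}
    (hC : ∀ᵐ x ∂(volume.restrict (BB d)), |g x| ≤ C) :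
    IntegrableOn g (BB d) :=
  Measure.integrableOn_of_bounded measure_ball_lt_top.ne hg.aestronglyMeasurable hC

lemma norm_gradient_le {d : ℕ} {L : ℝ≥0} {h : Ed d → ℝ} (hh : LipschitzWith L h) (x : Ed d) :
    ‖gradient h x‖ ≤ L := by
  rw [norm_gradient]; exact norm_fderiv_le_of_lipschitz ℝ hh

/-! ### The rescaled potential and the coupling -/

/-- The data of the rescaled transport problem: the displacement `T - id = s ∇h` on the ball of
radius `7/4`, the dual potential `F` of `s h`, and a coupling `π` between (the relevant part of) the
target measure and `κ` times Lebesgue measure, with cost at most `lam² s²`. The number `α` bounds the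
displacement uniformly, and `M` is a dimensional constant; `L` carries no quantitative information. -/
structure OTData (d : ℕ) (T : Ed d → Ed d) (h F : Ed d → ℝ) (π : Measure (Ed d × Ed d))
    (s α lam κ M : ℝ) (L : ℝ≥0) : Prop where
  s_pos : 0 < s
  s_le : s ≤ 1
  α_nonneg : 0 ≤ α
  α_le : α ≤ 1
  lam_pos : 0 < lam
  lam_le : lam ≤ 1
  κ_nonneg : 0 ≤ κ
  κ_le : κ ≤ M
  one_le : 1 ≤ M
  vol_le : volume.real (ball (0 : Ed d) 2) ≤ M
  Tm : Measurable T
  lip : LipschitzWith L h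
  bdd : ∃ N, ∀ x, |h x| ≤ N
  grad : ∀ᵐ x ∂(volume.restrict (BB d)), T x - x = s • gradient h x
  disp : ∀ᵐ x ∂(volume.restrict (BB d)), ‖T x - x‖ ≤ α
  sup : ∀ x ∈ BB d, |s * h x| ≤ 4 * α
  en : ∫ x in BB d, ‖gradient h x‖ ^ 2 ≤ 1
  l2 : ∫ x in BB d, h x ^ 2 ≤ M
  Fc : Continuous F
  Fle : ∀ y, ∀ x ∈ BB d, F y ≤ s * h x + 1 / 2 * ‖x - y‖ ^ 2
  Feq : ∀ᵐ x ∂(volume.restrict (BB d)), F (T x) = s * h x + 1 / 2 * ‖T x - x‖ ^ 2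
  πfin : IsFiniteMeasure π
  fst : (Measure.map T (volume.restrict (BB d))).restrict (CB d)
    = (π.map Prod.fst).restrict (CB d)
  snd : (π.map Prod.snd).restrict (ball 0 2)
    = ENNReal.ofReal κ • volume.restrict (ball (0 : Ed d) 2)
  cost_int : Integrable (fun p : Ed d × Ed d => ‖p.1 - p.2‖ ^ 2) π
  cost : ∫ p, ‖p.1 - p.2‖ ^ 2 ∂π ≤ lam ^ 2 * s ^ 2

namespace OTData

variable {d : ℕ} {T : Ed d → Ed d} {h F : Ed d → ℝ} {π : Measure (Ed d × Ed d)}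
  {s α lam κ M : ℝ} {L : ℝ≥0}

lemma int_fst (D : OTData d T h F π s α lam κ M L) {g : Ed d → ℝ} (hg : Measurable g)
    (h0 : ∀ x, 5 / 4 < ‖x‖ → g x = 0) : ∫ p, g p.1 ∂π = ∫ x in BB d, g (T x) := by
  have h0' : ∀ x ∉ CB d, g x = 0 := fun x hx => h0 x (by simpa using hx)
  rw [← integral_map measurable_fst.aemeasurable hg.aestronglyMeasurable,
    ← integral_map D.Tm.aemeasurable hg.aestronglyMeasurable,
    ← setIntegral_eq_integral_of_forall_compl_eq_zero h0', ← D.fst,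
    setIntegral_eq_integral_of_forall_compl_eq_zero h0']

lemma int_snd (D : OTData d T h F π s α lam κ M L) {g : Ed d → ℝ} (hg : Measurable g)
    (h0 : ∀ x, 2 ≤ ‖x‖ → g x = 0) : ∫ p, g p.2 ∂π = κ * ∫ x, g x := by
  have h0' : ∀ x ∉ ball (0 : Ed d) 2, g x = 0 := fun x hx => h0 x (by simpa using hx)
  rw [← integral_map measurable_snd.aemeasurable hg.aestronglyMeasurable,
    ← setIntegral_eq_integral_of_forall_compl_eq_zero h0', D.snd, integral_smul_measure,
    ENNReal.toReal_ofReal D.κ_nonneg, setIntegral_eq_integral_of_forall_compl_eq_zero h0',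
    smul_eq_mul]

lemma vol_BB_le (D : OTData d T h F π s α lam κ M L) : volume.real (BB d) ≤ M :=
  (measureReal_mono (ball_subset_ball (by norm_num)) measure_ball_lt_top.ne).trans D.vol_le

lemma mass_fst (D : OTData d T h F π s α lam κ M L) :
    ∫ p, (CB d).indicator (fun _ => (1 : ℝ)) p.1 ∂π ≤ M := by
  rw [D.int_fst (g := (CB d).indicator (fun _ => (1 : ℝ)))
    (measurable_const.indicator measurableSet_closedBall) (fun x hx =>
      indicator_of_notMem (by simpa using hx) _)]
  refine le_trans ?_ D.vol_BB_le
  have : ∫ x in BB d, (1 : ℝ) = volume.real (BB d) := by simp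
  rw [← this]
  refine integral_mono_of_nonneg (Eventually.of_forall fun x =>
    indicator_nonneg (fun _ _ => zero_le_one) _) (integrableOn_const measure_ball_lt_top.ne) (Eventually.of_forall fun x => ?_)
  exact indicator_le_self' (fun _ _ => zero_le_one) _

lemma mass_snd (D : OTData d T h F π s α lam κ M L) :
    ∫ p, (CB d).indicator (fun _ => (1 : ℝ)) p.2 ∂π ≤ M * M := by
  rw [D.int_snd (g := (CB d).indicator (fun _ => (1 : ℝ)))
    (measurable_const.indicator measurableSet_closedBall) (fun x hx =>
      indicator_of_notMem (fun hx' => by have := mem_closedBall_zero_iff.1 hx'; linarith) _)]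
  rw [integral_indicator measurableSet_closedBall]
  simp only [integral_const, MeasurableSet.univ, measureReal_restrict_apply, univ_inter, smul_eq_mul,
    mul_one]
  refine mul_le_mul D.κ_le ?_ measureReal_nonneg (by linarith [D.one_le])
  exact (measureReal_mono (closedBall_subset_ball (by norm_num)) measure_ball_lt_top.ne).trans D.vol_le

lemma grad_int (D : OTData d T h F π s α lam κ M L) :
    IntegrableOn (fun x => ‖gradient h x‖ ^ 2) (BB d) :=
  integrableOn_BB ((measurable_gradient h).norm.pow_const 2) (C := L ^ 2) fun x => by
    rw [abs_of_nonneg (by positivity)]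
    exact pow_le_pow_left₀ (norm_nonneg _) (norm_gradient_le D.lip x) 2

lemma inner_int (D : OTData d T h F π s α lam κ M L) {K : ℝ} {ζ : Ed d → ℝ} (hζ : C2Bd K ζ) :
    IntegrableOn (fun x => ⟪gradient h x, gradient ζ x⟫) (BB d) :=
  integrableOn_BB ((measurable_gradient h).inner (measurable_gradient ζ)) (C := L * K) fun x => by
    refine (abs_real_inner_le_norm _ _).trans (mul_le_mul (norm_gradient_le D.lip x) ?_
      (norm_nonneg _) L.coe_nonneg)
    rw [norm_gradient]
    exact ContinuousLinearMap.opNorm_le_bound _ hζ.nonneg fun v => hζ.grad x v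

/-- The linearized continuity equation, with the coupling error. -/
lemma two_aux (D : OTData d T h F π s α lam κ M L) {K : ℝ} {ζ : Ed d → ℝ} (hζ : C2Bd K ζ)
    (hsupp : tsupport ζ ⊆ CB d) :
    |(s * ∫ x, ⟪gradient h x, gradient ζ x⟫) - (κ - 1) * ∫ x, ζ x| ≤ K * (s ^ 2 + 2 * M ^ 2 * lam * s) := by
  have hK := hζ.nonneg
  have hs := D.s_pos
  have hl := D.lam_pos
  have hM := D.one_le
  have := D.πfin
  have hζm : Measurable ζ := hζ.smooth.continuous.measurable
  have hζi : IntegrableOn ζ (BB d) := integrableOn_BB hζm hζ.bdd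
  have hζT : IntegrableOn (fun x => ζ (T x)) (BB d) := integrableOn_BB (hζm.comp D.Tm) fun x => hζ.bdd _
  have e0 : ∫ x in BB d, ζ x = ∫ x, ζ x :=
    setIntegral_BB fun x hx => eq_zero_of_notMem hsupp (by linarith)
  have e0' : ∫ x in BB d, ⟪gradient h x, gradient ζ x⟫ = ∫ x, ⟪gradient h x, gradient ζ x⟫ :=
    setIntegral_BB fun x hx => by
      rw [real_inner_comm, inner_gradient, fderiv_eq_zero_of_notMem hsupp (by linarith)]; simp
  -- Taylor expansion of `ζ ∘ T`
  have hsub : IntegrableOn (fun x => ζ (T x) - ζ x) (BB d) := hζT.sub hζi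
  have e1 : |(∫ x in BB d, ζ (T x)) - (∫ x, ζ x) - s * ∫ x, ⟪gradient h x, gradient ζ x⟫| ≤ K * s ^ 2 := by
    rw [← e0, ← e0', ← integral_const_mul, ← integral_sub hζT hζi,
      ← integral_sub hsub ((D.inner_int hζ).const_mul s), ← Real.norm_eq_abs]
    have : ∫ x in BB d, K * s ^ 2 * ‖gradient h x‖ ^ 2 ≤ K * s ^ 2 := by
      rw [integral_const_mul]
      exact mul_le_of_le_one_right (by positivity) D.en
    refine (norm_integral_le_of_norm_le (D.grad_int.const_mul (K * s ^ 2)) ?_).trans this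
    filter_upwards [D.grad] with x hx
    have h1 := hζ.taylor x (T x)
    rw [hx, map_smul, ← inner_gradient, norm_smul, Real.norm_of_nonneg hs.le, real_inner_comm] at h1
    rw [Real.norm_eq_abs]
    refine le_trans (le_of_eq ?_) (h1.trans (le_of_eq ?_))
    · simp only [smul_eq_mul]
    · ring
  have e2 : ∫ x in BB d, ζ (T x) = ∫ p, ζ p.1 ∂π :=
    (D.int_fst hζm fun x hx => eq_zero_of_notMem hsupp hx).symm
  have e3 : ∫ p, ζ p.2 ∂π = κ * ∫ x, ζ x :=
    D.int_snd hζm fun x hx => eq_zero_of_notMem hsupp (by linarith)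
  have i1 : Integrable (fun p : Ed d × Ed d => ζ p.1) π :=
    Integrable.of_bound (hζm.comp measurable_fst).aestronglyMeasurable K
      (Eventually.of_forall fun p => hζ.bdd _)
  have i2 : Integrable (fun p : Ed d × Ed d => ζ p.2) π :=
    Integrable.of_bound (hζm.comp measurable_snd).aestronglyMeasurable K
      (Eventually.of_forall fun p => hζ.bdd _)
  have hind : Measurable ((CB d).indicator (fun _ => (1 : ℝ))) :=
    measurable_const.indicator measurableSet_closedBall
  have hind0 : ∀ x, 0 ≤ (CB d).indicator (fun _ => (1 : ℝ)) x := fun x =>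
    indicator_nonneg (fun _ _ => zero_le_one) _
  have hind1 : ∀ x, ‖(CB d).indicator (fun _ => (1 : ℝ)) x‖ ≤ 1 := fun x => by
    rw [Real.norm_of_nonneg (hind0 x)]
    exact indicator_le_self' (fun _ _ => zero_le_one) _
  have i3 : Integrable (fun p : Ed d × Ed d => (CB d).indicator (fun _ => (1 : ℝ)) p.1) π :=
    Integrable.of_bound (hind.comp measurable_fst).aestronglyMeasurable 1
      (Eventually.of_forall fun p => hind1 _)
  have i4 : Integrable (fun p : Ed d × Ed d => (CB d).indicator (fun _ => (1 : ℝ)) p.2) π :=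
    Integrable.of_bound (hind.comp measurable_snd).aestronglyMeasurable 1
      (Eventually.of_forall fun p => hind1 _)
  have e4 : |(∫ p, ζ p.1 ∂π) - ∫ p, ζ p.2 ∂π| ≤ K * (2 * M ^ 2 * lam * s) := by
    rw [← integral_sub i1 i2, ← Real.norm_eq_abs]
    have i34 : Integrable (fun p : Ed d × Ed d => (CB d).indicator (fun _ => (1 : ℝ)) p.1 +
        (CB d).indicator (fun _ => (1 : ℝ)) p.2) π := i3.add i4
    have i5 : Integrable (fun p : Ed d × Ed d => K / 2 * (lam * s * ((CB d).indicator
        (fun _ => (1 : ℝ)) p.1 + (CB d).indicator (fun _ => (1 : ℝ)) p.2) +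
          (lam * s)⁻¹ * ‖p.1 - p.2‖ ^ 2)) π :=
      ((i34.const_mul (lam * s)).add (D.cost_int.const_mul (lam * s)⁻¹)).const_mul (K / 2)
    refine (norm_integral_le_of_norm_le i5 (Eventually.of_forall fun p => ?_)).trans ?_
    · rw [Real.norm_eq_abs]
      have hy : (lam * s) * 0 ≤ (lam * s) * ((CB d).indicator (fun _ => (1 : ℝ)) p.1 +
        (CB d).indicator (fun _ => (1 : ℝ)) p.2) := mul_le_mul_of_nonneg_left
          (add_nonneg (hind0 _) (hind0 _)) (by positivity)
      rw [mul_zero] at hy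
      by_cases hp : p.1 ∈ CB d ∨ p.2 ∈ CB d
      · have h1 := hζ.lip p.2 p.1
        have h2 : 1 ≤ (CB d).indicator (fun _ => (1 : ℝ)) p.1 + (CB d).indicator (fun _ => (1 : ℝ)) p.2 := by
          rcases hp with hp | hp
          · have := hind0 p.2; rw [indicator_of_mem hp]; linarith
          · have := hind0 p.1; rw [indicator_of_mem hp]; linarith
        have h3 : ‖p.1 - p.2‖ ≤ 1 / 2 * ((lam * s) + (lam * s)⁻¹ * ‖p.1 - p.2‖ ^ 2) := by
          have hls : 0 < lam * s := by positivity
          have : 0 ≤ (lam * s)⁻¹ * (lam * s - ‖p.1 - p.2‖) ^ 2 := by positivity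
          have e : (lam * s)⁻¹ * (lam * s - ‖p.1 - p.2‖) ^ 2
            = lam * s - 2 * ‖p.1 - p.2‖ + (lam * s)⁻¹ * ‖p.1 - p.2‖ ^ 2 := by
            field_simp
            ring
          linarith
        have h4 : lam * s ≤ lam * s * ((CB d).indicator (fun _ => (1 : ℝ)) p.1 +
            (CB d).indicator (fun _ => (1 : ℝ)) p.2) := le_mul_of_one_le_right (by positivity) h2
        refine h1.trans ?_
        rw [div_mul_eq_mul_div, mul_div_assoc]
        exact mul_le_mul_of_nonneg_left (by linarith) hK
      · push Not at hp
        rw [eq_zero_of_notMem hsupp (by simpa using hp.1),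
          eq_zero_of_notMem hsupp (by simpa using hp.2)]
        simp only [sub_self, abs_zero]
        positivity
    · rw [integral_const_mul, integral_add (i34.const_mul _) (D.cost_int.const_mul _),
        integral_const_mul, integral_const_mul]
      have hadd : ∫ p : Ed d × Ed d, ((CB d).indicator (fun _ => (1 : ℝ)) p.1 +
          (CB d).indicator (fun _ => (1 : ℝ)) p.2) ∂π ≤ M + M * M := by
        rw [integral_add i3 i4]
        exact add_le_add D.mass_fst D.mass_snd
      have hcost : (lam * s)⁻¹ * ∫ p, ‖p.1 - p.2‖ ^ 2 ∂π ≤ lam * s := by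
        rw [inv_mul_le_iff₀ (by positivity)]
        exact D.cost.trans (le_of_eq (by ring))
      have hls : 0 < lam * s := by positivity
      have h5 : M + M * M + 1 ≤ 4 * M ^ 2 := by nlinarith
      calc _ ≤ K / 2 * (lam * s * (M + M * M) + lam * s) := by gcongr
        _ = K / 2 * (lam * s) * (M + M * M + 1) := by ring
        _ ≤ K / 2 * (lam * s) * (4 * M ^ 2) := by gcongr
        _ = _ := by ring
  rw [e2] at e1
  rw [e3] at e4
  rw [abs_le] at e1 e4 ⊢
  constructor <;> nlinarith [e1.1, e1.2, e4.1, e4.2]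

end OTData

/-! ### The approximate continuity equation -/

namespace OTData

variable {d : ℕ} {T : Ed d → Ed d} {h F : Ed d → ℝ} {π : Measure (Ed d × Ed d)}
  {s α lam κ M : ℝ} {L : ℝ≥0}

lemma two_div (D : OTData d T h F π s α lam κ M L) {K : ℝ} {ζ : Ed d → ℝ} (hζ : C2Bd K ζ)
    (hsupp : tsupport ζ ⊆ CB d) :
    |(∫ x, ⟪gradient h x, gradient ζ x⟫) - (κ - 1) / s * ∫ x, ζ x| ≤ K * (s + 2 * M ^ 2 * lam) := by
  have hs := D.s_pos
  have h1 := D.two_aux hζ hsupp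
  have e : (s * ∫ x, ⟪gradient h x, gradient ζ x⟫) - (κ - 1) * ∫ x, ζ x
      = s * ((∫ x, ⟪gradient h x, gradient ζ x⟫) - (κ - 1) / s * ∫ x, ζ x) := by
    field_simp
  rw [e, abs_mul, abs_of_pos hs] at h1
  refine le_of_mul_le_mul_left (h1.trans (le_of_eq ?_)) hs
  ring

/-- The rescaled potential almost solves `Δh = -(κ - 1) / s`. -/
lemma two (D : OTData d T h F π s α lam κ M L) {K : ℝ} {ζ : Ed d → ℝ} (hζ : C2Bd K ζ)
    (hsupp : tsupport ζ ⊆ CB d) :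
    |(∫ x, h x * lap ζ x) + (κ - 1) / s * ∫ x, ζ x| ≤ K * (s + 2 * M ^ 2 * lam) := by
  have h1 := D.two_div hζ hsupp
  rw [ibp_lap D.lip hζ.smooth (compact_of_tsupport hsupp), ← abs_neg] at h1
  refine le_trans (le_of_eq ?_) h1
  congr 1; ring

lemma abs_int_le (D : OTData d T h F π s α lam κ M L) : ∫ x in BB d, |h x| ≤ M := by
  obtain ⟨N, hN⟩ := D.bdd
  have hm : Measurable h := D.lip.continuous.measurable
  have i1 : IntegrableOn (fun x => h x ^ 2) (BB d) :=
    integrableOn_BB (hm.pow_const 2) (C := N ^ 2) fun x => by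
      rw [abs_pow]; exact pow_le_pow_left₀ (abs_nonneg _) (hN x) 2
  have i2 : IntegrableOn (fun _ => (1 : ℝ)) (BB d) := integrableOn_const measure_ball_lt_top.ne
  have h1 : ∫ x in BB d, |h x| ≤ ∫ x in BB d, 1 / 2 * (h x ^ 2 + 1) := by
    refine integral_mono_of_nonneg (Eventually.of_forall fun x => abs_nonneg _)
      ((i1.add i2).const_mul _) (Eventually.of_forall fun x => ?_)
    simp only
    nlinarith [sq_nonneg (|h x| - 1), sq_abs (h x)]
  rw [integral_const_mul, integral_add i1 i2] at h1
  have h2 : ∫ x in BB d, (1 : ℝ) = volume.real (BB d) := by simp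
  linarith [D.l2, D.vol_BB_le]

/-- A single test function with positive mean bounds the rescaled mass defect `(κ - 1) / s`. -/
lemma c_bound (D : OTData d T h F π s α lam κ M L) {K : ℝ} {ζ : Ed d → ℝ} (hζ : C2Bd K ζ)
    (hsupp : tsupport ζ ⊆ CB d) (hpos : 0 ≤ ∫ x, ζ x) :
    |(κ - 1) / s| * ∫ x, ζ x ≤ 4 * K * M ^ 2 := by
  have hK := hζ.nonneg
  have h1 := D.two_div hζ hsupp
  have hM := D.one_le
  have e0' : ∫ x in BB d, ⟪gradient h x, gradient ζ x⟫ = ∫ x, ⟪gradient h x, gradient ζ x⟫ :=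
    setIntegral_BB fun x hx => by
      rw [real_inner_comm, inner_gradient, fderiv_eq_zero_of_notMem hsupp (by linarith)]; simp
  have i2 : IntegrableOn (fun _ => (1 : ℝ)) (BB d) := integrableOn_const measure_ball_lt_top.ne
  have h2 : ‖∫ x in BB d, ⟪gradient h x, gradient ζ x⟫‖
      ≤ ∫ x in BB d, K / 2 * (‖gradient h x‖ ^ 2 + 1) := by
    refine norm_integral_le_of_norm_le ((D.grad_int.add i2).const_mul _)
      (Eventually.of_forall fun x => ?_)
    rw [real_inner_comm, inner_gradient, Real.norm_eq_abs]
    refine (hζ.grad x _).trans ?_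
    nlinarith [mul_nonneg hK (sq_nonneg (‖gradient h x‖ - 1))]
  rw [integral_const_mul, integral_add D.grad_int i2, e0', Real.norm_eq_abs] at h2
  have h3 : ∫ x in BB d, (1 : ℝ) = volume.real (BB d) := by simp
  rw [h3] at h2
  have h4 : K / 2 * ((∫ x in BB d, ‖gradient h x‖ ^ 2) + volume.real (BB d)) ≤ K / 2 * (1 + M) := by
    gcongr
    · exact D.en
    · exact D.vol_BB_le
  have h5 : |(κ - 1) / s| * ∫ x, ζ x = |(κ - 1) / s * ∫ x, ζ x| := by
    rw [abs_mul, abs_of_nonneg hpos]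
  have h6 : K * (s + 2 * M ^ 2 * lam) ≤ K * (1 + 2 * M ^ 2) :=
    mul_le_mul_of_nonneg_left (add_le_add D.s_le
      (mul_le_of_le_one_right (by positivity) D.lam_le)) hK
  rw [h5]
  have h7 : |(κ - 1) / s * ∫ x, ζ x| ≤ |∫ x, ⟪gradient h x, gradient ζ x⟫| +
    |(∫ x, ⟪gradient h x, gradient ζ x⟫) - (κ - 1) / s * ∫ x, ζ x| := by
    have := abs_sub (∫ x, ⟪gradient h x, gradient ζ x⟫)
      ((∫ x, ⟪gradient h x, gradient ζ x⟫) - (κ - 1) / s * ∫ x, ζ x)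
    rwa [sub_sub_cancel] at this
  have h8 : K * (1 + 2 * M ^ 2) + K / 2 * (1 + M) ≤ 4 * K * M ^ 2 := by
    nlinarith [mul_nonneg hK (sub_nonneg.2 hM), mul_nonneg (mul_nonneg hK (sub_nonneg.2 hM)) (by linarith : 0 ≤ M)]
  linarith

/-- Pointwise comparison along the coupling, testing the dual inequality with the shifted point
`z - s w`. -/
lemma pt (D : OTData d T h F π s α lam κ M L) {K : ℝ} {η : Ed d → ℝ} (hη : C2Bd K η)
    (hsupp : tsupport η ⊆ CB d) (h0 : ∀ x, 0 ≤ η x) {w : Ed d} (hw : s * ‖w‖ ≤ 1 / 4) (y z : Ed d) :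
    η y * F y ≤ s * (η z * h (z - s • w)) + 1 / 2 * s ^ 2 * ‖w‖ ^ 2 * η y
      + K * (66 / lam) * ‖y - z‖ ^ 2
      + 1 / 2 * K * lam * s ^ 2 * (ball (0 : Ed d) (3 / 2)).indicator (fun z => h (z - s • w) ^ 2) z
      + 1 / 2 * K * lam * s ^ 2 * ‖w‖ ^ 2 * (CB d).indicator (fun _ => (1 : ℝ)) y := by
  have hK := hη.nonneg
  have hs := D.s_pos
  have hl := D.lam_pos
  have hl1 : 1 ≤ 1 / lam := (one_le_div hl).2 D.lam_le
  have hα := D.α_nonneg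
  by_cases hy : y ∈ CB d
  swap
  · have hy' : η y = 0 := eq_zero_of_notMem hsupp (by simpa using hy)
    rw [hy', indicator_of_notMem hy]
    by_cases hz : z ∈ ball (0 : Ed d) (3 / 2)
    · rw [indicator_of_mem hz]
      -- the only possibly negative term is controlled because `η y = 0`
      have h1 := hη.lip y z
      rw [hy', sub_zero, norm_sub_rev, abs_of_nonneg (h0 z)] at h1
      set a := h (z - s • w)
      have h2 : -(s * (η z * a)) ≤ K * ‖y - z‖ * (s * |a|) := by
        have : -(s * (η z * a)) = s * η z * (-a) := by ring
        rw [this]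
        have h3 : -a ≤ |a| := neg_le_abs a
        calc s * η z * (-a) ≤ s * η z * |a| := by gcongr; exact mul_nonneg hs.le (h0 z)
          _ = η z * (s * |a|) := by ring
          _ ≤ _ := by gcongr
      have h3 : ‖y - z‖ * (s * |a|) ≤ 1 / 2 * (1 / lam * ‖y - z‖ ^ 2 + lam * s ^ 2 * a ^ 2) := by
        have e : 1 / lam * ‖y - z‖ ^ 2 + lam * s ^ 2 * a ^ 2 - 2 * (‖y - z‖ * (s * |a|))
          = 1 / lam * (‖y - z‖ - lam * s * |a|) ^ 2 := by
          rw [← sq_abs a]; field_simp; ring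
        have : 0 ≤ 1 / lam * (‖y - z‖ - lam * s * |a|) ^ 2 := by positivity
        linarith
      have h4 : K * (1 / 2 * (1 / lam * ‖y - z‖ ^ 2)) ≤ K * (66 / lam) * ‖y - z‖ ^ 2 := by
        have : 0 ≤ K * (1 / lam) * ‖y - z‖ ^ 2 := by positivity
        have e : K * (66 / lam) * ‖y - z‖ ^ 2 = 66 * (K * (1 / lam) * ‖y - z‖ ^ 2) := by ring
        rw [e]; linarith
      have h5 := mul_le_mul_of_nonneg_left h3 hK
      linarith
    · rw [indicator_of_notMem hz, eq_zero_of_notMem hsupp (x := z) (by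
        have : 3 / 2 ≤ ‖z‖ := by simpa using hz
        linarith)]
      have : 0 ≤ K * (66 / lam) * ‖y - z‖ ^ 2 := by positivity
      linarith
  rw [indicator_of_mem hy]
  have hyn : ‖y‖ ≤ 5 / 4 := mem_closedBall_zero_iff.1 hy
  have hηy : η y ≤ K := (le_abs_self _).trans (hη.bdd y)
  by_cases hz : z ∈ ball (0 : Ed d) (3 / 2)
  · rw [indicator_of_mem hz]
    have hzn : ‖z‖ < 3 / 2 := mem_ball_zero_iff.1 hz
    have hx : z - s • w ∈ BB d := by
      rw [mem_ball_zero_iff]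
      refine (norm_sub_le _ _).trans_lt ?_
      rw [norm_smul, Real.norm_of_nonneg hs.le]; linarith
    have h1 := D.Fle y _ hx
    set a := h (z - s • w)
    have e1 : ‖z - s • w - y‖ ^ 2 = ‖y - z‖ ^ 2 + 2 * s * ⟪y - z, w⟫ + s ^ 2 * ‖w‖ ^ 2 := by
      have : z - s • w - y = -((y - z) + s • w) := by abel
      rw [this, norm_neg, norm_add_sq_real, inner_smul_right, norm_smul, Real.norm_of_nonneg hs.le]
      ring
    rw [e1] at h1
    have h2 := mul_le_mul_of_nonneg_left h1 (h0 y)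
    have hcs : ⟪y - z, w⟫ ≤ ‖y - z‖ * ‖w‖ := real_inner_le_norm _ _
    have young : ∀ b : ℝ, ‖y - z‖ * (s * |b|) ≤ 1 / 2 * (1 / lam * ‖y - z‖ ^ 2 + lam * s ^ 2 * b ^ 2) := by
      intro b
      have e : 1 / lam * ‖y - z‖ ^ 2 + lam * s ^ 2 * b ^ 2 - 2 * (‖y - z‖ * (s * |b|))
        = 1 / lam * (‖y - z‖ - lam * s * |b|) ^ 2 := by
        rw [← sq_abs b]; field_simp; ring
      have : 0 ≤ 1 / lam * (‖y - z‖ - lam * s * |b|) ^ 2 := by positivity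
      linarith
    have h3 : η y * (s * a) ≤ s * (η z * a) + K * (‖y - z‖ * (s * |a|)) := by
      have h4 : (η y - η z) * (s * a) ≤ K * ‖y - z‖ * (s * |a|) := by
        refine (le_abs_self _).trans ?_
        rw [abs_mul, abs_mul, abs_of_pos hs]
        exact mul_le_mul_of_nonneg_right (hη.lip z y) (by positivity)
      linarith
    have h4 : η y * (s * ⟪y - z, w⟫) ≤ K * (‖y - z‖ * (s * |‖w‖|)) := by
      rw [abs_of_nonneg (norm_nonneg w)]
      calc η y * (s * ⟪y - z, w⟫) ≤ η y * (s * (‖y - z‖ * ‖w‖)) := by gcongr; exact h0 y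
        _ ≤ K * (s * (‖y - z‖ * ‖w‖)) := by gcongr
        _ = _ := by ring
    have h5 : η y * (1 / 2 * ‖y - z‖ ^ 2) ≤ K * (1 / 2 * ‖y - z‖ ^ 2) := by gcongr
    have h6 := mul_le_mul_of_nonneg_left (young a) hK
    have h7 := mul_le_mul_of_nonneg_left (young ‖w‖) hK
    have h8 : K * (1 / 2 * ‖y - z‖ ^ 2) ≤ K * (1 / 2 * (1 / lam * ‖y - z‖ ^ 2)) := by
      gcongr; exact le_mul_of_one_le_left (by positivity) hl1
    have h9 : 0 ≤ K * (1 / lam) * ‖y - z‖ ^ 2 := by positivity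
    have e9 : K * (66 / lam) * ‖y - z‖ ^ 2 = 66 * (K * (1 / lam) * ‖y - z‖ ^ 2) := by ring
    rw [e9]
    nlinarith
  · have hzn : 3 / 2 ≤ ‖z‖ := by simpa using hz
    rw [indicator_of_notMem hz, eq_zero_of_notMem hsupp (x := z) (by linarith)]
    have hyB : y ∈ BB d := by rw [mem_ball_zero_iff]; linarith
    have h1 := D.Fle y y hyB
    rw [sub_self, norm_zero] at h1
    have h2 : F y ≤ 4 := by
      have := (abs_le.1 (D.sup y hyB)).2
      linarith [D.α_le]
    have h3 : 1 / 4 ≤ ‖y - z‖ := by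
      have := norm_sub_norm_le z y
      rw [norm_sub_rev] at this; linarith
    have h4 : 1 ≤ 16 * ‖y - z‖ ^ 2 := by nlinarith
    have h5 : η y * F y ≤ K * (64 * ‖y - z‖ ^ 2) := by
      calc η y * F y ≤ η y * (64 * ‖y - z‖ ^ 2) := by
            gcongr
            · exact h0 y
            · linarith
        _ ≤ _ := by gcongr
    have h8 : K * (64 * ‖y - z‖ ^ 2) ≤ K * (64 * (1 / lam * ‖y - z‖ ^ 2)) := by
      gcongr; exact le_mul_of_one_le_left (by positivity) hl1
    have h9 : 0 ≤ K * (1 / lam) * ‖y - z‖ ^ 2 := by positivity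
    have e9 : K * (66 / lam) * ‖y - z‖ ^ 2 = 66 * (K * (1 / lam) * ‖y - z‖ ^ 2) := by ring
    rw [e9]
    have h10 : 0 ≤ 1 / 2 * s ^ 2 * ‖w‖ ^ 2 * η y := mul_nonneg (by positivity) (h0 y)
    have h11 : 0 ≤ 1 / 2 * K * lam * s ^ 2 * ‖w‖ ^ 2 := by positivity
    nlinarith

end OTData

/-! ### The approximate energy inequality -/

namespace OTData

variable {d : ℕ} {T : Ed d → Ed d} {h F : Ed d → ℝ} {π : Measure (Ed d × Ed d)}
  {s α lam κ M : ℝ} {L : ℝ≥0}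

/-- Lower bound for the dual energy, by Taylor expansion of `η ∘ T`. -/
lemma lower (D : OTData d T h F π s α lam κ M L) {K : ℝ} {η : Ed d → ℝ} (hη : C2Bd K η)
    (hsupp : tsupport η ⊆ CB d) :
    s * (∫ x, η x * h x) + s ^ 2 * (∫ x, h x * ⟪gradient h x, gradient η x⟫)
      + 1 / 2 * s ^ 2 * (∫ x, η x * ‖gradient h x‖ ^ 2) - 5 * K * α * s ^ 2
      ≤ ∫ x in BB d, η (T x) * F (T x) := by
  have hK := hη.nonneg
  have hs := D.s_pos
  have hα := D.α_nonneg
  obtain ⟨N, hN⟩ := D.bdd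
  have hN0 : 0 ≤ N := (abs_nonneg _).trans (hN 0)
  have hm : Measurable h := D.lip.continuous.measurable
  have hηm : Measurable η := hη.smooth.continuous.measurable
  have hgm := measurable_gradient h
  have hz : ∀ x : Ed d, 7 / 4 ≤ ‖x‖ → η x = 0 := fun x hx => eq_zero_of_notMem hsupp (by linarith)
  rw [← setIntegral_BB (g := fun x => η x * h x) fun x hx => by rw [hz x hx, zero_mul],
    ← setIntegral_BB (g := fun x => h x * ⟪gradient h x, gradient η x⟫) fun x hx => by
      rw [real_inner_comm, inner_gradient, fderiv_eq_zero_of_notMem hsupp (by linarith)]; simp,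
    ← setIntegral_BB (g := fun x => η x * ‖gradient h x‖ ^ 2) fun x hx => by rw [hz x hx, zero_mul]]
  have i1 : IntegrableOn (fun x => η x * h x) (BB d) :=
    integrableOn_BB (hηm.mul hm) (C := K * N) fun x => by
      rw [abs_mul]; exact mul_le_mul (hη.bdd x) (hN x) (abs_nonneg _) hK
  have i2 : IntegrableOn (fun x => h x * ⟪gradient h x, gradient η x⟫) (BB d) :=
    integrableOn_BB (hm.mul (hgm.inner (measurable_gradient η))) (C := N * (K * L)) fun x => by
      rw [abs_mul]
      refine mul_le_mul (hN x) ?_ (abs_nonneg _) hN0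
      rw [real_inner_comm, inner_gradient]
      exact (hη.grad x _).trans (mul_le_mul_of_nonneg_left (norm_gradient_le D.lip x) hK)
  have i3 : IntegrableOn (fun x => η x * ‖gradient h x‖ ^ 2) (BB d) :=
    integrableOn_BB (hηm.mul (hgm.norm.pow_const 2)) (C := K * L ^ 2) fun x => by
      rw [abs_mul, abs_of_nonneg (sq_nonneg ‖gradient h x‖)]
      exact mul_le_mul (hη.bdd x) (pow_le_pow_left₀ (norm_nonneg _) (norm_gradient_le D.lip x) 2)
        (by positivity) hK
  have i4 := D.grad_int
  have i5 : IntegrableOn (fun x => η (T x) * F (T x)) (BB d) := by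
    obtain ⟨C, hC⟩ := (hη.smooth.continuous.mul D.Fc).bounded_above_of_compact_support
      ((compact_of_tsupport hsupp).mul_right)
    exact integrableOn_BB ((hηm.mul D.Fc.measurable).comp D.Tm) fun x => hC (T x)
  have j1 : IntegrableOn (fun x => s * (η x * h x) + s ^ 2 * (h x * ⟪gradient h x, gradient η x⟫)) (BB d) :=
    (i1.const_mul s).add (i2.const_mul (s ^ 2))
  have j2 : IntegrableOn (fun x => s * (η x * h x) + s ^ 2 * (h x * ⟪gradient h x, gradient η x⟫)
    + 1 / 2 * s ^ 2 * (η x * ‖gradient h x‖ ^ 2)) (BB d) := j1.add (i3.const_mul (1 / 2 * s ^ 2))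
  have key : ∫ x in BB d, (s * (η x * h x) + s ^ 2 * (h x * ⟪gradient h x, gradient η x⟫)
      + 1 / 2 * s ^ 2 * (η x * ‖gradient h x‖ ^ 2) - 5 * K * α * s ^ 2 * ‖gradient h x‖ ^ 2)
      ≤ ∫ x in BB d, η (T x) * F (T x) := by
    refine integral_mono_ae (j2.sub (i4.const_mul _)) i5 ?_
    filter_upwards [D.grad, D.disp, D.Feq, ae_restrict_mem measurableSet_ball] with x h1 h2 h3 hxB
    have ht := hη.taylor x (T x)
    have hl := hη.lip x (T x)
    have hh := D.sup x hxB
    rw [h3, h1, norm_smul, Real.norm_of_nonneg hs.le]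
    rw [h1, norm_smul, Real.norm_of_nonneg hs.le, map_smul, ← inner_gradient, real_inner_comm,
      smul_eq_mul] at ht
    rw [h1, norm_smul, Real.norm_of_nonneg hs.le] at hl h2
    set g := ‖gradient h x‖
    have hg : 0 ≤ g := norm_nonneg _
    set q := ⟪gradient h x, gradient η x⟫
    have hA : (η x + s * q - η (T x)) * (s * h x) ≤ K * (s * g) ^ 2 * (4 * α) := by
      refine (le_abs_self _).trans ?_
      rw [abs_mul]
      refine mul_le_mul ?_ hh (abs_nonneg _) (by positivity)
      rw [abs_sub_comm]; refine le_trans (le_of_eq ?_) ht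
      congr 1; ring
    have hB : (η x - η (T x)) * (1 / 2 * (s * g) ^ 2) ≤ K * α * (1 / 2 * (s * g) ^ 2) := by
      refine mul_le_mul_of_nonneg_right ?_ (by positivity)
      have := (abs_le.1 hl).1
      have := mul_le_mul_of_nonneg_left h2 hK
      linarith
    have hC : 0 ≤ K * α * (s * g) ^ 2 := by positivity
    nlinarith
  rw [integral_sub j2 (i4.const_mul _), integral_add j1 (i3.const_mul _),
    integral_add (i1.const_mul _) (i2.const_mul _), integral_const_mul, integral_const_mul,
    integral_const_mul, integral_const_mul] at key
  have h6 : 5 * K * α * s ^ 2 * (∫ x in BB d, ‖gradient h x‖ ^ 2) ≤ 5 * K * α * s ^ 2 :=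
    mul_le_of_le_one_right (by positivity) D.en
  linarith

lemma integrable_fst (D : OTData d T h F π s α lam κ M L) {g : Ed d → ℝ} (hg : Measurable g) {C : ℝ}
    (hC : ∀ x, |g x| ≤ C) : Integrable (fun p : Ed d × Ed d => g p.1) π :=
  have := D.πfin
  Integrable.of_bound (hg.comp measurable_fst).aestronglyMeasurable C
    (Eventually.of_forall fun _ => hC _)

lemma integrable_snd (D : OTData d T h F π s α lam κ M L) {g : Ed d → ℝ} (hg : Measurable g) {C : ℝ}
    (hC : ∀ x, |g x| ≤ C) : Integrable (fun p : Ed d × Ed d => g p.2) π :=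
  have := D.πfin
  Integrable.of_bound (hg.comp measurable_snd).aestronglyMeasurable C
    (Eventually.of_forall fun _ => hC _)

/-- Taylor expansion of the shifted test function against `h`. -/
lemma shift (D : OTData d T h F π s α lam κ M L) {K : ℝ} {η : Ed d → ℝ} (hη : C2Bd K η)
    (hsupp : tsupport η ⊆ CB d) {w : Ed d} (hw : s * ‖w‖ ≤ 1 / 4) :
    |(∫ z, η z * h (z - s • w)) - (∫ x, η x * h x) - s * ∫ x, h x * fderiv ℝ η x w|
      ≤ K * s ^ 2 * ‖w‖ ^ 2 * M := by
  have hK := hη.nonneg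
  have hs := D.s_pos
  obtain ⟨N, hN⟩ := D.bdd
  have hm : Measurable h := D.lip.continuous.measurable
  have hηm : Measurable η := hη.smooth.continuous.measurable
  have e1 : ∫ z, η z * h (z - s • w) = ∫ x, η (x + s • w) * h x := by
    rw [← integral_add_right_eq_self (fun z => η z * h (z - s • w)) (s • w)]
    simp
  have hsn : ‖s • w‖ ≤ 1 / 4 := by rwa [norm_smul, Real.norm_of_nonneg hs.le]
  rw [e1, ← setIntegral_BB (g := fun x => η (x + s • w) * h x) fun x hx => by
      rw [eq_zero_of_notMem hsupp (x := x + s • w), zero_mul]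
      have := norm_sub_le (x + s • w) (s • w)
      rw [add_sub_cancel_right] at this
      linarith,
    ← setIntegral_BB (g := fun x => η x * h x) fun x hx => by
      rw [eq_zero_of_notMem hsupp (x := x) (by linarith), zero_mul],
    ← setIntegral_BB (g := fun x => h x * fderiv ℝ η x w) fun x hx => by
      rw [fderiv_eq_zero_of_notMem hsupp (by linarith)]; simp]
  have i0 : IntegrableOn (fun x => η (x + s • w) * h x) (BB d) :=
    integrableOn_BB ((hηm.comp (measurable_id.add_const _)).mul hm) (C := K * N) fun x => by
      rw [abs_mul]; exact mul_le_mul (hη.bdd _) (hN x) (abs_nonneg _) hK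
  have i1 : IntegrableOn (fun x => η x * h x) (BB d) :=
    integrableOn_BB (hηm.mul hm) (C := K * N) fun x => by
      rw [abs_mul]; exact mul_le_mul (hη.bdd x) (hN x) (abs_nonneg _) hK
  have i2 : IntegrableOn (fun x => h x * fderiv ℝ η x w) (BB d) :=
    integrableOn_BB (hm.mul (contDiff_pd hη.smooth w).continuous.measurable) (C := N * (K * ‖w‖))
      fun x => by
      rw [abs_mul]
      exact mul_le_mul (hN x) (hη.grad x w) (abs_nonneg _) ((abs_nonneg _).trans (hN x))
  have i3 : IntegrableOn (fun x => |h x|) (BB d) :=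
    integrableOn_BB hm.norm (C := N) fun x => by rw [abs_abs]; exact hN x
  have i01 : IntegrableOn (fun x => η (x + s • w) * h x - η x * h x) (BB d) := i0.sub i1
  rw [← integral_const_mul, ← integral_sub i0 i1, ← integral_sub i01 (i2.const_mul s),
    ← Real.norm_eq_abs]
  refine (norm_integral_le_of_norm_le (i3.const_mul (K * s ^ 2 * ‖w‖ ^ 2))
    (Eventually.of_forall fun x => ?_)).trans ?_
  · have ht := hη.taylor x (x + s • w)
    rw [add_sub_cancel_left, norm_smul, Real.norm_of_nonneg hs.le, map_smul, smul_eq_mul] at ht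
    have e : η (x + s • w) * h x - η x * h x - s * (h x * fderiv ℝ η x w)
      = (η (x + s • w) - η x - s * fderiv ℝ η x w) * h x := by ring
    rw [e, Real.norm_eq_abs, abs_mul]
    refine mul_le_mul_of_nonneg_right (ht.trans (le_of_eq ?_)) (abs_nonneg _)
    ring
  · rw [integral_const_mul]
    exact mul_le_mul_of_nonneg_left D.abs_int_le (by positivity)

lemma abs_fderiv_int_le (D : OTData d T h F π s α lam κ M L) {K : ℝ} {η : Ed d → ℝ} (hη : C2Bd K η)
    (hsupp : tsupport η ⊆ CB d) (w : Ed d) :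
    |∫ x, h x * fderiv ℝ η x w| ≤ K * ‖w‖ * M := by
  have hK := hη.nonneg
  obtain ⟨N, hN⟩ := D.bdd
  have hm : Measurable h := D.lip.continuous.measurable
  have i3 : IntegrableOn (fun x => |h x|) (BB d) :=
    integrableOn_BB hm.norm (C := N) fun x => by rw [abs_abs]; exact hN x
  rw [← setIntegral_BB (g := fun x => h x * fderiv ℝ η x w) fun x hx => by
      rw [fderiv_eq_zero_of_notMem hsupp (by linarith)]; simp, ← Real.norm_eq_abs]
  refine (norm_integral_le_of_norm_le (i3.const_mul (K * ‖w‖))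
    (Eventually.of_forall fun x => ?_)).trans ?_
  · rw [Real.norm_eq_abs, abs_mul, mul_comm]
    exact mul_le_mul_of_nonneg_right (hη.grad x w) (abs_nonneg _)
  · rw [integral_const_mul]
    exact mul_le_mul_of_nonneg_left D.abs_int_le (by positivity)

/-- Upper bound for the dual energy through the coupling. -/
lemma upper (D : OTData d T h F π s α lam κ M L) {K : ℝ} {η : Ed d → ℝ} (hη : C2Bd K η)
    (hsupp : tsupport η ⊆ CB d) (h0 : ∀ x, 0 ≤ η x) {w : Ed d} (hw : s * ‖w‖ ≤ 1 / 4) :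
    ∫ x in BB d, η (T x) * F (T x) ≤ κ * s * (∫ z, η z * h (z - s • w))
      + 1 / 2 * s ^ 2 * ‖w‖ ^ 2 * ((∫ x, η x) + K * α * M)
      + 66 * K * lam * s ^ 2 + 1 / 2 * K * lam * s ^ 2 * M ^ 2
      + 1 / 2 * K * lam * s ^ 2 * ‖w‖ ^ 2 * M := by
  have hK := hη.nonneg
  have hs := D.s_pos
  have hl := D.lam_pos
  have hα := D.α_nonneg
  have hM := D.one_le
  have hκ := D.κ_nonneg
  obtain ⟨N, hN⟩ := D.bdd
  have hm : Measurable h := D.lip.continuous.measurable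
  have hηm : Measurable η := hη.smooth.continuous.measurable
  have hmw : Measurable fun z => h (z - s • w) := hm.comp (measurable_id.sub_const _)
  have hz : ∀ x : Ed d, 7 / 4 ≤ ‖x‖ → η x = 0 := fun x hx => eq_zero_of_notMem hsupp (by linarith)
  have hsn : ‖s • w‖ ≤ 1 / 4 := by rwa [norm_smul, Real.norm_of_nonneg hs.le]
  have m1 : Measurable fun z => η z * h (z - s • w) := hηm.mul hmw
  have m4 : Measurable ((ball (0 : Ed d) (3 / 2)).indicator (fun z => h (z - s • w) ^ 2)) :=
    (hmw.pow_const 2).indicator measurableSet_ball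
  have m5 : Measurable ((CB d).indicator (fun _ => (1 : ℝ))) :=
    measurable_const.indicator measurableSet_closedBall
  obtain ⟨C, hC⟩ := (hη.smooth.continuous.mul D.Fc).bounded_above_of_compact_support
      ((compact_of_tsupport hsupp).mul_right)
  have i0 := D.integrable_fst (hηm.mul D.Fc.measurable) hC
  have i1 := (D.integrable_snd m1 (C := K * N) fun x => by
      rw [abs_mul]; exact mul_le_mul (hη.bdd _) (hN _) (abs_nonneg _) hK).const_mul s
  have i2 := (D.integrable_fst hηm hη.bdd).const_mul (1 / 2 * s ^ 2 * ‖w‖ ^ 2)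
  have i3 := D.cost_int.const_mul (K * (66 / lam))
  have i4 := (D.integrable_snd m4 (C := N ^ 2) fun x => by
      rw [abs_of_nonneg (indicator_nonneg (fun _ _ => sq_nonneg _) _)]
      refine (indicator_le_self' (fun _ _ => sq_nonneg _) _).trans ?_
      rw [← sq_abs]
      exact pow_le_pow_left₀ (abs_nonneg _) (hN _) 2).const_mul (1 / 2 * K * lam * s ^ 2)
  have i5 := (D.integrable_fst m5 (C := 1) fun x => by
      rw [abs_of_nonneg (indicator_nonneg (fun _ _ => zero_le_one) _)]
      exact indicator_le_self' (fun _ _ => zero_le_one) _).const_mul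
        (1 / 2 * K * lam * s ^ 2 * ‖w‖ ^ 2)
  have key := integral_mono_ae i0 ((((i1.add i2).add i3).add i4).add i5)
    (Eventually.of_forall fun p => D.pt hη hsupp h0 hw p.1 p.2)
  rw [integral_add' (((i1.add i2).add i3).add i4) i5, integral_add' ((i1.add i2).add i3) i4,
    integral_add' (i1.add i2) i3, integral_add' i1 i2, integral_const_mul, integral_const_mul,
    integral_const_mul, integral_const_mul, integral_const_mul,
    D.int_fst (hηm.mul D.Fc.measurable) (fun x hx => by
      simp [eq_zero_of_notMem hsupp hx]),
    D.int_snd m1 (fun x hx => by rw [hz x (by linarith), zero_mul]),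
    D.int_fst hηm (fun x hx => eq_zero_of_notMem hsupp hx),
    D.int_snd m4 (fun x hx => indicator_of_notMem (fun hx' => by
      have := mem_ball_zero_iff.1 hx'; linarith) _)] at key
  have a2 : ∫ x in BB d, η (T x) ≤ (∫ x, η x) + K * α * M := by
    have j1 : IntegrableOn η (BB d) := integrableOn_BB hηm hη.bdd
    have j2 : IntegrableOn (fun _ => K * α) (BB d) := integrableOn_const measure_ball_lt_top.ne
    have : ∫ x in BB d, η (T x) ≤ ∫ x in BB d, (η x + K * α) := by
      refine integral_mono_ae (integrableOn_BB (hηm.comp D.Tm) fun x => hη.bdd _) (j1.add j2) ?_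
      filter_upwards [D.disp] with x hx
      have h1 := (abs_le.1 (hη.lip x (T x))).2
      have h2 := mul_le_mul_of_nonneg_left hx hK
      linarith
    rw [integral_add j1 j2, setIntegral_BB hz, integral_const, measureReal_restrict_apply .univ,
      univ_inter, smul_eq_mul] at this
    have h3 := mul_le_mul_of_nonneg_right D.vol_BB_le (mul_nonneg hK hα)
    linarith
  have a3 : K * (66 / lam) * (∫ p, ‖p.1 - p.2‖ ^ 2 ∂π) ≤ 66 * K * lam * s ^ 2 := by
    have := mul_le_mul_of_nonneg_left D.cost (by positivity : 0 ≤ K * (66 / lam))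
    refine this.trans (le_of_eq ?_)
    field_simp
  have a4 : κ * ∫ x, (ball (0 : Ed d) (3 / 2)).indicator (fun z => h (z - s • w) ^ 2) x ≤ M ^ 2 := by
    have : ∫ x, (ball (0 : Ed d) (3 / 2)).indicator (fun z => h (z - s • w) ^ 2) x ≤ M := by
      refine le_trans ?_ D.l2
      rw [← integral_add_right_eq_self _ (s • w), ← integral_indicator measurableSet_ball]
      refine integral_mono_of_nonneg (Eventually.of_forall fun x =>
        indicator_nonneg (fun _ _ => sq_nonneg _) _)
        ((integrable_indicator_iff measurableSet_ball).2
          (integrableOn_BB (hm.pow_const 2) (C := N ^ 2) fun x => by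
            rw [abs_pow]; exact pow_le_pow_left₀ (abs_nonneg _) (hN x) 2))
        (Eventually.of_forall fun x => ?_)
      by_cases hx : x + s • w ∈ ball (0 : Ed d) (3 / 2)
      · have hx' : x ∈ BB d := by
          rw [mem_ball_zero_iff] at hx ⊢
          have := norm_sub_le (x + s • w) (s • w)
          rw [add_sub_cancel_right] at this
          linarith
        simp only
        rw [indicator_of_mem hx, indicator_of_mem hx', add_sub_cancel_right]
      · simp only
        rw [indicator_of_notMem hx]
        exact indicator_nonneg (fun _ _ => sq_nonneg _) _
    rw [sq]
    exact mul_le_mul D.κ_le this (integral_nonneg fun x => indicator_nonneg (fun _ _ => sq_nonneg _) _)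
      (by linarith)
  have b2 := mul_le_mul_of_nonneg_left a2 (by positivity : 0 ≤ 1 / 2 * s ^ 2 * ‖w‖ ^ 2)
  have b4 := mul_le_mul_of_nonneg_left a4 (by positivity : 0 ≤ 1 / 2 * K * lam * s ^ 2)
  have b5 := mul_le_mul_of_nonneg_left D.mass_fst (by positivity : 0 ≤ 1 / 2 * K * lam * s ^ 2 * ‖w‖ ^ 2)
  have key' : ∫ x in BB d, (η * F) (T x) = ∫ x in BB d, η (T x) * F (T x) := rfl
  linarith

lemma three_arith {s lam α K M n : ℝ} (hs : 0 ≤ s) (hl : 0 ≤ lam) (hα : 0 ≤ α) (hK : 0 ≤ K)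
    (hM : 1 ≤ M) :
    s * (M * (K * n * M)) + s * (M * (K * n ^ 2 * M)) + 1 / 2 * n ^ 2 * (K * α * M)
      + 66 * K * lam + 1 / 2 * K * lam * M ^ 2 + 1 / 2 * K * lam * n ^ 2 * M + 5 * K * α
      ≤ 70 * M ^ 2 * (s + lam + α) * K * (1 + n ^ 2) := by
  have hn1 : n + n ^ 2 ≤ 2 * (1 + n ^ 2) := by nlinarith [sq_nonneg (n - 1)]
  have hM2 : M ≤ M ^ 2 := by nlinarith
  have hM1 : 1 ≤ M ^ 2 := by nlinarith
  have hMn : 1 ≤ M ^ 2 * (1 + n ^ 2) := by nlinarith [sq_nonneg n]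
  have a1 : s * (M * (K * n * M)) + s * (M * (K * n ^ 2 * M)) ≤ s * (M ^ 2 * K * (2 * (1 + n ^ 2))) := by
    rw [show s * (M * (K * n * M)) + s * (M * (K * n ^ 2 * M)) = s * (M ^ 2 * K * (n + n ^ 2)) by ring]
    gcongr
  have a2 : 1 / 2 * n ^ 2 * (K * α * M) ≤ α * K * M ^ 2 * (1 + n ^ 2) := by
    rw [show 1 / 2 * n ^ 2 * (K * α * M) = α * K * M * (1 / 2 * n ^ 2) by ring]
    gcongr
    nlinarith [sq_nonneg n]
  have a3 : 66 * K * lam ≤ 66 * (K * lam * (M ^ 2 * (1 + n ^ 2))) := by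
    rw [mul_assoc 66 K lam]
    exact mul_le_mul_of_nonneg_left (le_mul_of_one_le_right (by positivity) hMn) (by norm_num)
  have a4 : 1 / 2 * K * lam * M ^ 2 + 1 / 2 * K * lam * n ^ 2 * M ≤ K * lam * (M ^ 2 * (1 + n ^ 2)) := by
    have : 1 / 2 * K * lam * n ^ 2 * M ≤ 1 / 2 * K * lam * n ^ 2 * M ^ 2 := by gcongr
    have : 0 ≤ K * lam * (M ^ 2 * (1 + n ^ 2)) := by positivity
    linarith
  have a5 : 5 * K * α ≤ 5 * (K * α * (M ^ 2 * (1 + n ^ 2))) := by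
    rw [mul_assoc 5 K α]
    exact mul_le_mul_of_nonneg_left (le_mul_of_one_le_right (by positivity) hMn) (by norm_num)
  have p1 : 0 ≤ s * (M ^ 2 * K * (1 + n ^ 2)) := by positivity
  have p2 : 0 ≤ K * lam * (M ^ 2 * (1 + n ^ 2)) := by positivity
  have p3 : 0 ≤ K * α * (M ^ 2 * (1 + n ^ 2)) := by positivity
  linarith

/-- The rescaled energy inequality. -/
lemma three (D : OTData d T h F π s α lam κ M L) {K : ℝ} {η : Ed d → ℝ} (hη : C2Bd K η)
    (hsupp : tsupport η ⊆ CB d) (h0 : ∀ x, 0 ≤ η x) {w : Ed d} (hw : s * ‖w‖ ≤ 1 / 4)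
    (hc : |(κ - 1) / s| ≤ M) :
    1 / 2 * (∫ x, η x * ‖gradient h x‖ ^ 2) ≤ (∫ x, h x * fderiv ℝ η x w)
      + 1 / 2 * ‖w‖ ^ 2 * (∫ x, η x) + 1 / 2 * (∫ x, h x ^ 2 * lap η x)
      + (κ - 1) / s * (∫ x, η x * h x) + 70 * M ^ 2 * (s + lam + α) * K * (1 + ‖w‖ ^ 2) := by
  have hK := hη.nonneg
  have hs := D.s_pos
  have hl := D.lam_pos
  have hα := D.α_nonneg
  have hM := D.one_le
  have hκ := D.κ_nonneg
  obtain ⟨N, hN⟩ := D.bdd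
  have h1 := D.lower hη hsupp
  rw [ibp_sq D.lip hN hη.smooth (compact_of_tsupport hsupp)] at h1
  have h2 := h1.trans (D.upper hη hsupp h0 hw)
  have h3 := (abs_le.1 (D.shift hη hsupp hw)).2
  have h4 := D.abs_fderiv_int_le hη hsupp w
  set c := (κ - 1) / s with hcd
  have hκc : κ = 1 + s * c := by rw [hcd]; field_simp; ring
  set I := ∫ z, η z * h (z - s • w)
  set I0 := ∫ x, η x * h x
  set J := ∫ x, h x * fderiv ℝ η x w
  have hI : I ≤ I0 + s * J + K * s ^ 2 * ‖w‖ ^ 2 * M := by linarith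
  have h5 : κ * s * I ≤ κ * s * (I0 + s * J + K * s ^ 2 * ‖w‖ ^ 2 * M) :=
    mul_le_mul_of_nonneg_left hI (by positivity)
  have h6 : κ * s * (I0 + s * J + K * s ^ 2 * ‖w‖ ^ 2 * M)
      ≤ s * I0 + s ^ 2 * (c * I0 + J) + s ^ 3 * (M * (K * ‖w‖ * M)) + s ^ 3 * (M * (K * ‖w‖ ^ 2 * M)) := by
    have e : κ * s * (I0 + s * J + K * s ^ 2 * ‖w‖ ^ 2 * M)
      = s * I0 + s ^ 2 * (c * I0 + J) + s ^ 3 * (c * J) + s ^ 3 * (κ * (K * ‖w‖ ^ 2 * M)) := by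
      rw [show κ * s * (I0 + s * J + K * s ^ 2 * ‖w‖ ^ 2 * M) = κ * (s * (I0 + s * J)) +
        s ^ 3 * (κ * (K * ‖w‖ ^ 2 * M)) by ring, hκc]; ring
    rw [e]
    have : c * J ≤ M * (K * ‖w‖ * M) := by
      refine (le_abs_self _).trans ?_
      rw [abs_mul]
      exact mul_le_mul hc h4 (abs_nonneg _) (by linarith)
    gcongr
    exact D.κ_le
  set n := ‖w‖
  -- the error terms, divided by `s ^ 2`
  have h7 : s * (M * (K * n * M)) + s * (M * (K * n ^ 2 * M)) + 1 / 2 * n ^ 2 * (K * α * M)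
      + 66 * K * lam + 1 / 2 * K * lam * M ^ 2 + 1 / 2 * K * lam * n ^ 2 * M + 5 * K * α
      ≤ 70 * M ^ 2 * (s + lam + α) * K * (1 + n ^ 2) := three_arith hs.le hl.le hα hK hM
  have h8 := mul_le_mul_of_nonneg_left h7 (sq_nonneg s)
  refine le_of_mul_le_mul_left ?_ (by positivity : 0 < s ^ 2)
  linarith

end OTData

/-! ### The displacement potential -/

/-- A bounded Lipschitz function on the whole space that agrees with `ψ - |·|²/2` near the origin. -/
lemma exists_disp_pot {d : ℕ} {ψ : Ed d → ℝ} {L : ℝ≥0} (hψ : LipschitzWith L ψ) :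
    ∃ (G : Ed d → ℝ) (L' : ℝ≥0) (N : ℝ), LipschitzWith L' G ∧ (∀ x, |G x| ≤ N) ∧
      ∀ x ∈ closedBall (0 : Ed d) 2, G x = ψ x - 1 / 2 * ‖x‖ ^ 2 := by
  have h1 : LipschitzOnWith (L + 2) (fun x => ψ x - 1 / 2 * ‖x‖ ^ 2) (closedBall (0 : Ed d) 2) := by
    refine LipschitzOnWith.of_dist_le_mul fun x hx y hy => ?_
    have hx' := mem_closedBall_zero_iff.1 hx
    have hy' := mem_closedBall_zero_iff.1 hy
    have h2 := hψ.dist_le_mul x y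
    rw [Real.dist_eq] at h2 ⊢
    rw [dist_eq_norm] at h2 ⊢
    have h3 : |‖x‖ ^ 2 - ‖y‖ ^ 2| ≤ 4 * ‖x - y‖ := by
      rw [sq_sub_sq, abs_mul]
      refine mul_le_mul ?_ (abs_norm_sub_norm_le x y) (abs_nonneg _) (by norm_num)
      rw [abs_of_nonneg (by positivity)]; linarith
    have e : ψ x - 1 / 2 * ‖x‖ ^ 2 - (ψ y - 1 / 2 * ‖y‖ ^ 2)
      = (ψ x - ψ y) - 1 / 2 * (‖x‖ ^ 2 - ‖y‖ ^ 2) := by ring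
    rw [e]
    refine (abs_sub _ _).trans ?_
    rw [abs_mul, abs_of_pos (by norm_num : (0 : ℝ) < 1 / 2)]
    push_cast
    linarith
  obtain ⟨g, hg, hge⟩ := h1.extend_real
  obtain ⟨N, hN⟩ := (isCompact_closedBall (0 : Ed d) 2).exists_bound_of_continuousOn
    hg.continuous.continuousOn
  have hN0 : 0 ≤ N := (norm_nonneg _).trans (hN 0 (by simp))
  refine ⟨fun x => max (min (g x) N) (-N), L + 2, N, (hg.min_const N).max_const (-N), fun x => ?_,
    fun x hx => ?_⟩
  · rw [abs_le]
    exact ⟨le_max_right _ _, max_le (min_le_right _ _) (by linarith)⟩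
  · have := abs_le.1 (hN x hx)
    have h3 : g x = ψ x - 1 / 2 * ‖x‖ ^ 2 := (hge hx).symm
    change max (min (g x) N) (-N) = _
    rw [min_eq_left this.2, max_eq_left this.1, h3]

/-- Semiconvexity of the displacement potential, with subgradient `T x - x`. -/
lemma quad_lower {d : ℕ} {ψ G : Ed d → ℝ} {T : Ed d → Ed d}
    (hG : ∀ x ∈ closedBall (0 : Ed d) 2, G x = ψ x - 1 / 2 * ‖x‖ ^ 2) {x z : Ed d}
    (hx : x ∈ closedBall (0 : Ed d) 2) (hz : z ∈ closedBall (0 : Ed d) 2) (hs : IsSub ψ T x) :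
    ⟪T x - x, z - x⟫ - 1 / 2 * ‖z - x‖ ^ 2 ≤ G z - G x := by
  rw [hG x hx, hG z hz]
  have h1 := hs z
  have e1 : ‖z‖ ^ 2 = ‖x‖ ^ 2 + 2 * ⟪x, z - x⟫ + ‖z - x‖ ^ 2 := by
    rw [← norm_add_sq_real, add_sub_cancel]
  rw [inner_sub_left, e1]
  linarith

lemma gradient_eq_of_sub {d : ℕ} {ψ G : Ed d → ℝ} {T : Ed d → Ed d}
    (hG : ∀ x ∈ closedBall (0 : Ed d) 2, G x = ψ x - 1 / 2 * ‖x‖ ^ 2) {x : Ed d}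
    (hx : x ∈ ball (0 : Ed d) 2) (hs : IsSub ψ T x) (hd : DifferentiableAt ℝ G x) :
    gradient G x = T x - x := by
  have hmin : IsLocalMin (fun z => G z - ⟪T x - x, z - x⟫ + 1 / 2 * ‖z - x‖ ^ 2) x := by
    filter_upwards [isOpen_ball.mem_nhds hx] with z hz
    have := quad_lower hG (ball_subset_closedBall hx) (ball_subset_closedBall hz) hs
    simp only [sub_self, inner_zero_right, norm_zero]
    linarith
  have h1 : HasFDerivAt (fun z : Ed d => ⟪T x - x, z - x⟫) (innerSL ℝ (T x - x)) x := by
    simp only [inner_sub_right (T x - x)]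
    exact (innerSL ℝ (T x - x)).hasFDerivAt.sub_const _
  have h2 : HasFDerivAt (fun z : Ed d => 1 / 2 * ‖z - x‖ ^ 2) (0 : Ed d →L[ℝ] ℝ) x := by
    have := (((hasFDerivAt_id x).sub_const x).norm_sq).const_mul (1 / 2 : ℝ)
    refine this.congr_fderiv ?_
    ext v
    simp
  have h3 := hmin.hasFDerivAt_eq_zero ((hd.hasFDerivAt.sub h1).add h2)
  refine ext_inner_right ℝ fun v => ?_
  rw [inner_gradient]
  have := DFunLike.congr_fun h3 v
  simp at this
  rw [inner_sub_left]
  linarith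

/-- The uniform displacement bound is a Lipschitz bound for the potential. -/
lemma lip_on_BB {d : ℕ} {ψ G : Ed d → ℝ} {T : Ed d → Ed d} {L : ℝ≥0} (hl : LipschitzWith L G)
    (hG : ∀ x ∈ closedBall (0 : Ed d) 2, G x = ψ x - 1 / 2 * ‖x‖ ^ 2) {α : ℝ} (hα : 0 ≤ α)
    (hs : ∀ᵐ x ∂(volume.restrict (BB d)), IsSub ψ T x ∧ ‖T x - x‖ ≤ α) :
    ∀ x ∈ BB d, ∀ z ∈ BB d, |G z - G x| ≤ α * ‖z - x‖ := by
  have hsub : BB d ⊆ closedBall (0 : Ed d) 2 := (ball_subset_ball (by norm_num)).trans ball_subset_closedBall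
  refine lip_of_quad hl isOpen_ball (convex_ball _ _) hα fun x hx z hz => ?_
  by_contra hcon
  push Not at hcon
  -- the strict inequality persists on an open set, which meets the set of full measure
  set V : Set (Ed d) := {x | α * ‖z - x‖ + ‖z - x‖ ^ 2 < G x - G z} ∩ BB d with hV
  have hVo : IsOpen V := (isOpen_lt (by fun_prop) (hl.continuous.sub continuous_const)).inter isOpen_ball
  have hVm : 0 < volume V := hVo.measure_pos _ ⟨x, hcon, hx⟩
  have hV0 : ∀ᵐ y ∂(volume.restrict (BB d)), y ∉ V := by
    filter_upwards [hs, ae_restrict_mem measurableSet_ball] with y hy hyB hyV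
    have h1 := quad_lower hG (hsub hyB) (hsub hz) hy.1
    have h2 : -(α * ‖z - y‖) ≤ ⟪T y - y, z - y⟫ := by
      have := (abs_le.1 (abs_real_inner_le_norm (T y - y) (z - y))).1
      have := mul_le_mul_of_nonneg_right hy.2 (norm_nonneg (z - y))
      linarith
    have h3 : α * ‖z - y‖ + ‖z - y‖ ^ 2 < G y - G z := hyV.1
    nlinarith [sq_nonneg ‖z - y‖]
  rw [← measure_eq_zero_iff_ae_notMem, Measure.restrict_apply hVo.measurableSet,
    inter_eq_left.2 inter_subset_right] at hV0
  exact hVm.ne' hV0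

/-- The dual potential of `G` relative to the ball of radius `7/4`. -/
lemma exists_dual {d : ℕ} {ψ G : Ed d → ℝ} {T : Ed d → Ed d} {N : ℝ} (hN : ∀ x, |G x| ≤ N)
    (hG : ∀ x ∈ closedBall (0 : Ed d) 2, G x = ψ x - 1 / 2 * ‖x‖ ^ 2) :
    ∃ F : Ed d → ℝ, Continuous F ∧ (∀ y, ∀ x ∈ BB d, F y ≤ G x + 1 / 2 * ‖x - y‖ ^ 2) ∧
      ∀ x ∈ BB d, IsSub ψ T x → F (T x) = G x + 1 / 2 * ‖T x - x‖ ^ 2 := by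
  have hsub : BB d ⊆ closedBall (0 : Ed d) 2 := (ball_subset_ball (by norm_num)).trans ball_subset_closedBall
  have hne : Nonempty (BB d) := ⟨⟨0, by simp⟩⟩
  set f : Ed d → BB d → ℝ := fun y x => G x + 1 / 2 * ‖(x : Ed d)‖ ^ 2 - ⟪(x : Ed d), y⟫ with hf
  have hb : ∀ y, BddBelow (range (f y)) := by
    intro y
    refine ⟨-N - 2 * ‖y‖, ?_⟩
    rintro _ ⟨x, rfl⟩
    have h1 := (abs_le.1 (hN x)).1
    have h2 := (abs_le.1 (abs_real_inner_le_norm (x : Ed d) y)).2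
    have h3 := mem_closedBall_zero_iff.1 (hsub x.2)
    have h4 := mul_le_mul_of_nonneg_right h3 (norm_nonneg y)
    have h5 := sq_nonneg ‖(x : Ed d)‖
    simp only [hf]
    linarith
  have hlip : LipschitzWith 2 fun y => ⨅ x, f y x := by
    refine LipschitzWith.of_le_add_mul 2 fun y y' => ?_
    rw [← _root_.sub_le_iff_le_add]
    refine le_ciInf fun x => ?_
    rw [_root_.sub_le_iff_le_add]
    refine (ciInf_le (hb y) x).trans ?_
    have h2 := (abs_le.1 (abs_real_inner_le_norm (x : Ed d) (y' - y))).2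
    have h3 := mem_closedBall_zero_iff.1 (hsub x.2)
    have h4 := mul_le_mul_of_nonneg_right h3 (norm_nonneg (y' - y))
    rw [inner_sub_right] at h2
    rw [dist_comm, dist_eq_norm]
    simp only [hf]
    push_cast
    linarith
  have e1 : ∀ x y : Ed d, 1 / 2 * ‖x - y‖ ^ 2 = 1 / 2 * ‖x‖ ^ 2 - ⟪x, y⟫ + 1 / 2 * ‖y‖ ^ 2 := by
    intro x y; rw [norm_sub_sq_real]; ring
  refine ⟨fun y => 1 / 2 * ‖y‖ ^ 2 + ⨅ x, f y x, ?_, fun y x hx => ?_, fun x hx hs => ?_⟩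
  · exact (by fun_prop : Continuous fun y : Ed d => 1 / 2 * ‖y‖ ^ 2).add hlip.continuous
  · have := ciInf_le (hb y) ⟨x, hx⟩
    simp only [hf] at this ⊢
    linarith [e1 x y]
  · have h1 : ⨅ z, f (T x) z = f (T x) ⟨x, hx⟩ := by
      refine le_antisymm (ciInf_le (hb _) _) (le_ciInf fun z => ?_)
      have h2 := hs z
      simp only [hf]
      rw [hG x (hsub hx), hG z (hsub z.2)]
      rw [inner_sub_right, real_inner_comm, real_inner_comm (x := x)] at h2
      linarith
    change 1 / 2 * ‖T x‖ ^ 2 + (⨅ z, f (T x) z) = _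
    rw [h1, norm_sub_rev]
    simp only [hf]
    linarith [e1 x (T x)]

/-! ### Extracting the approximate equations from the transport problem -/

/-- In the ball of radius `5/4`, the first marginal of the coupling only sees mass transported from
the ball of radius `7/4`. -/
lemma coupling_fst {d : ℕ} {Ω O : Set (Ed d)} {μ : Measure (Ed d)} {T : Ed d → Ed d}
    (hT : Measurable T) (hTμ : Measure.map T (volume.restrict Ω) = μ) (hΩ : ball (0 : Ed d) 2 ⊆ Ω)
    (hO : ball (0 : Ed d) 2 ⊆ O)
    (h : ∀ᵐ x ∂(volume.restrict Ω), T x ∈ CB d → x ∈ BB d) :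
    (Measure.map T (volume.restrict (BB d))).restrict (CB d) = (μ.restrict O).restrict (CB d) := by
  have hBΩ : BB d ⊆ Ω := (ball_subset_ball (by norm_num)).trans hΩ
  have hCO : CB d ⊆ O := (closedBall_subset_ball (by norm_num)).trans hO
  have hm : MeasurableSet (T ⁻¹' CB d) := hT measurableSet_closedBall
  rw [Measure.restrict_restrict measurableSet_closedBall, inter_eq_left.2 hCO, ← hTμ,
    Measure.restrict_map hT measurableSet_closedBall, Measure.restrict_map hT measurableSet_closedBall]
  congr 1
  have e : volume.restrict (BB d) = (volume.restrict Ω).restrict (BB d) := by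
    rw [Measure.restrict_restrict measurableSet_ball, inter_eq_left.2 hBΩ]
  rw [e, Measure.restrict_restrict hm]
  refine Measure.restrict_congr_set ?_
  filter_upwards [h] with x hx
  exact propext ⟨fun h => h.1, fun h => ⟨h, hx h⟩⟩

/-- The density `k` is bounded: mass over the unit ball comes from the ball of radius `5/4`, except for
a part controlled by the transport cost. -/
lemma kappa_bound {d : ℕ} {T : Ed d → Ed d} {π : Measure (Ed d × Ed d)} {k : ℝ≥0∞} (hT : Measurable T)
    (h1 : (Measure.map T (volume.restrict (BB d))).restrict (CB d) = (π.map Prod.fst).restrict (CB d))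
    (h2 : (π.map Prod.snd).restrict (ball 0 2) = k • volume.restrict (ball (0 : Ed d) 2))
    (hc : ∫⁻ p, ENNReal.ofReal (‖p.1 - p.2‖ ^ 2) ∂π ≤ 1) :
    k * volume (ball (0 : Ed d) 1) ≤ volume (ball (0 : Ed d) 2) + 16 := by
  have e2 : k * volume (ball (0 : Ed d) 1) = π (Prod.snd ⁻¹' ball 0 1) := by
    have := congrArg (fun m : Measure (Ed d) => m (ball 0 1)) h2
    simp only [Measure.smul_apply, Measure.restrict_apply measurableSet_ball,
      inter_eq_left.2 (ball_subset_ball (by norm_num) : ball (0 : Ed d) 1 ⊆ ball 0 2), smul_eq_mul,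
      Measure.map_apply measurable_snd measurableSet_ball] at this
    exact this.symm
  have e1 : π (Prod.fst ⁻¹' CB d) ≤ volume (ball (0 : Ed d) 2) := by
    have := congrArg (fun m : Measure (Ed d) => m (CB d)) h1
    simp only [Measure.restrict_apply measurableSet_closedBall, inter_self,
      Measure.map_apply measurable_fst measurableSet_closedBall,
      Measure.map_apply hT measurableSet_closedBall] at this
    rw [← this]
    refine (measure_mono (subset_univ _)).trans ?_
    rw [Measure.restrict_apply_univ]
    exact measure_mono (ball_subset_ball (by norm_num))
  have hm : Measurable fun p : Ed d × Ed d => 16 * ENNReal.ofReal (‖p.1 - p.2‖ ^ 2) :=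
    ((measurable_fst.sub measurable_snd).norm.pow_const 2).ennreal_ofReal.const_mul _
  have e3 : π {p | 1 ≤ 16 * ENNReal.ofReal (‖p.1 - p.2‖ ^ 2)} ≤ 16 := by
    have := mul_meas_ge_le_lintegral (μ := π) hm 1
    rw [one_mul] at this
    refine this.trans ?_
    rw [lintegral_const_mul' _ _ (by norm_num)]
    exact (mul_le_mul_right hc _).trans (by simp)
  rw [e2]
  refine (measure_mono ?_).trans ((measure_union_le _ _).trans (add_le_add e1 e3))
  intro p hp
  by_cases hp1 : p.1 ∈ CB d
  · exact Or.inl hp1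
  · right
    have hp2 : ‖p.2‖ < 1 := mem_ball_zero_iff.1 hp
    have hp1' : 5 / 4 < ‖p.1‖ := by simpa using hp1
    have := norm_sub_norm_le p.1 p.2
    have h4 : 1 / 4 ≤ ‖p.1 - p.2‖ := by linarith
    change 1 ≤ 16 * ENNReal.ofReal (‖p.1 - p.2‖ ^ 2)
    have h5 : ENNReal.ofReal (1 / 16) ≤ ENNReal.ofReal (‖p.1 - p.2‖ ^ 2) :=
      ENNReal.ofReal_le_ofReal (by nlinarith)
    calc (1 : ℝ≥0∞) = 16 * ENNReal.ofReal (1 / 16) := by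
          rw [show (16 : ℝ≥0∞) = ENNReal.ofReal 16 by simp, ← ENNReal.ofReal_mul (by norm_num)]
          norm_num
      _ ≤ _ := by gcongr

lemma OTData.mono {d : ℕ} {T : Ed d → Ed d} {h F : Ed d → ℝ} {π : Measure (Ed d × Ed d)}
    {s α lam κ M M' : ℝ} {L : ℝ≥0} (D : OTData d T h F π s α lam κ M L) (hM : M ≤ M') :
    OTData d T h F π s α lam κ M' L :=
  { D with
    κ_le := D.κ_le.trans hM
    one_le := D.one_le.trans hM
    vol_le := D.vol_le.trans hM
    l2 := D.l2.trans hM }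

/-- `h` approximately satisfies the linearized continuity equation `Δh = -c` and the corresponding
localized energy inequality, with error `e`. The equation is tested on functions supported in the
ball of radius `5/4`, and errors are measured relative to the `C²` size `K` of the test function. -/
structure AH (d : ℕ) (h : Ed d → ℝ) (c e M : ℝ) (L : ℝ≥0) : Prop where
  lip : LipschitzWith L h
  bdd : ∃ N, ∀ x, |h x| ≤ N
  c_le : |c| ≤ M
  en : ∫⁻ x in ball (0 : Ed d) 2, ENNReal.ofReal (‖gradient h x‖ ^ 2) ≤ 1
  l2 : ∫ x in BB d, h x ^ 2 ≤ M
  two : ∀ K ζ, C2Bd K ζ → tsupport ζ ⊆ CB d → |(∫ x, h x * lap ζ x) + c * ∫ x, ζ x| ≤ e * K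
  three : ∀ K η, C2Bd K η → tsupport η ⊆ CB d → (∀ x, 0 ≤ η x) → ∀ w, e * ‖w‖ ≤ 1 →
    1 / 2 * (∫ x, η x * ‖gradient h x‖ ^ 2) ≤ (∫ x, h x * fderiv ℝ η x w)
      + 1 / 2 * ‖w‖ ^ 2 * (∫ x, η x) + 1 / 2 * (∫ x, h x ^ 2 * lap η x)
      + c * (∫ x, η x * h x) + e * K * (1 + ‖w‖ ^ 2)

/-- A dimensional constant bounding the data of the rescaled problem. -/
def M₁ (d : ℕ) : ℝ :=
  1 + volume.real (ball (0 : Ed d) 2) + (CP d).toReal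
    + (volume.real (ball (0 : Ed d) 2) + 16) / volume.real (ball (0 : Ed d) 1)

/-- The transport problem, rescaled by the square root of its energy, fits `OTData`. -/
lemma exists_OTData {d : ℕ} [Nontrivial (Ed d)] {σ : ℝ} (hσ : 0 < σ) (hσ1 : σ ≤ 1 / 160)
    {Ω O : Set (Ed d)} {μ : Measure (Ed d)} {T : Ed d → Ed d}
    (hΩb : Bornology.IsBounded Ω) (hΩm : MeasurableSet Ω) (hΩ : ball (0 : Ed d) 2 ⊆ Ω)
    (hO : IsOpen O) (hO2 : ball (0 : Ed d) 2 ⊆ O)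
    (hμK : ∃ K : Set (Ed d), IsCompact K ∧ μ Kᶜ = 0) (hμ : μ Set.univ = volume Ω)
    (hT : IsOptMap Ω μ T) {s : ℝ} (hs : 0 < s) (hsσ : s ≤ σ) (hE : Elin T = ENNReal.ofReal (s ^ 2))
    (hEt : Elin T < thr d (σ / 8)) (hD : Dlin μ O < ENNReal.ofReal (σ ^ 2) * Elin T) :
    ∃ h F π κ L, OTData d T h F π s σ σ κ (M₁ d) L ∧
      ∫⁻ x in ball (0 : Ed d) 2, ENNReal.ofReal (‖gradient h x‖ ^ 2) ≤ 1 := by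
  obtain ⟨ψ, L, hψ, hsg⟩ := exists_potential hΩb hΩm hμK hT
  have hsg' : ∀ᵐ x ∂(volume.restrict Ω), IsSub ψ T x := hsg
  have hdisp := disp_le hΩ hsg' (by positivity : 0 < σ / 8) (by linarith) hEt
  have hge := inner_ge_of_norm_ge hΩ hsg' (R₁ := 11 / 8) (R₂ := 3 / 2) (by norm_num)
    (by positivity : 0 < σ / 8) (by linarith) (by norm_num) hEt
  obtain ⟨G, L', N, hGl, hGN, hG⟩ := exists_disp_pot hψ
  obtain ⟨a, ha, hpo⟩ := poincare hGl
  have hBΩ : BB d ⊆ Ω := (ball_subset_ball (by norm_num)).trans hΩ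
  have hB2 : BB d ⊆ ball (0 : Ed d) 2 := ball_subset_ball (by norm_num)
  have hsgB : ∀ᵐ x ∂(volume.restrict (BB d)), IsSub ψ T x ∧ ‖T x - x‖ ≤ σ := by
    filter_upwards [ae_restrict_of_ae_restrict_of_subset hBΩ hsg', ae_restrict_mem measurableSet_ball]
      with x hx hxB
    exact ⟨hx, (hdisp x hxB hx).trans (le_of_eq (by ring))⟩
  have hlipB := lip_on_BB hGl hG hσ.le hsgB
  obtain ⟨F, hFc, hFle, hFeq⟩ := exists_dual (T := T) (G := fun x => G x - G a) (N := 2 * N)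
    (ψ := fun x => ψ x - G a) (fun x => by
      have h1 := abs_le.1 (hGN x)
      have h2 := abs_le.1 (hGN a)
      rw [abs_le]; constructor <;> linarith) (fun x hx => by rw [hG x hx]; ring)
  have hgrad2 : ∀ᵐ x ∂(volume.restrict (ball (0 : Ed d) 2)), gradient G x = T x - x := by
    filter_upwards [ae_restrict_of_ae_restrict_of_subset hΩ hsg', ae_restrict_mem measurableSet_ball,
      ae_restrict_of_ae (hGl.ae_differentiableAt (μ := volume))] with x hx hxB hd
    exact gradient_eq_of_sub hG hxB hx hd
  -- as `D < σ² E`, some admissible coupling has cost below `σ² s²`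
  obtain ⟨cst, ⟨π, hπ1, hπ2, rfl⟩, hcost⟩ := sInf_lt_iff.1 hD
  rw [hE, ← ENNReal.ofReal_mul (by positivity)] at hcost
  have hΩfin : volume Ω < ∞ := hΩb.measure_lt_top
  have hμO : μ O < ∞ := (measure_mono (subset_univ _)).trans_lt (hμ ▸ hΩfin)
  have hOpos : volume O ≠ 0 :=
    ((measure_ball_pos volume (0 : Ed d) two_pos).trans_le (measure_mono hO2)).ne'
  have hkfin : μ O / volume O ≠ ∞ := ENNReal.div_ne_top hμO.ne hOpos
  set κ := (μ O / volume O).toReal with hκ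
  have hfst : (Measure.map T (volume.restrict (BB d))).restrict (CB d)
      = (π.map Prod.fst).restrict (CB d) := by
    rw [hπ1]
    refine coupling_fst hT.1 hT.2.1 hΩ hO2 ?_
    filter_upwards [hsg'] with x hx hxC
    by_contra hxB
    have hxn : 7 / 4 ≤ ‖x‖ := by simpa using hxB
    have h1 := hge x (by linarith) hx
    have h2 := (abs_le.1 (abs_real_inner_le_norm (T x) x)).2
    have h3 : ‖T x‖ ≤ 5 / 4 := mem_closedBall_zero_iff.1 hxC
    nlinarith [mul_le_mul_of_nonneg_right h3 (norm_nonneg x)]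
  have hsnd : (π.map Prod.snd).restrict (ball 0 2)
      = ENNReal.ofReal κ • volume.restrict (ball (0 : Ed d) 2) := by
    rw [hπ2, hκ, ENNReal.ofReal_toReal hkfin, Measure.restrict_smul,
      Measure.restrict_restrict measurableSet_ball, inter_eq_left.2 hO2]
  have hs2 : σ ^ 2 * s ^ 2 ≤ 1 := by
    have : σ ^ 2 ≤ 1 := pow_le_one₀ hσ.le (by linarith)
    have : s ^ 2 ≤ 1 := pow_le_one₀ hs.le (by linarith)
    nlinarith [sq_nonneg s]
  have hkb := kappa_bound hT.1 hfst hsnd (hcost.le.trans (by simpa using hs2))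
  have hB1 : 0 < volume.real (ball (0 : Ed d) 1) :=
    ENNReal.toReal_pos (measure_ball_pos volume _ one_pos).ne' measure_ball_lt_top.ne
  have hκM : κ ≤ (volume.real (ball (0 : Ed d) 2) + 16) / volume.real (ball (0 : Ed d) 1) := by
    rw [le_div_iff₀ hB1]
    have := ENNReal.toReal_mono (by finiteness) hkb
    rw [ENNReal.toReal_mul, ENNReal.toReal_ofReal ENNReal.toReal_nonneg,
      ENNReal.toReal_add (by finiteness) (by simp)] at this
    have h16 : (16 : ℝ≥0∞).toReal = 16 := by simp
    rw [h16] at this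
    exact this
  have hV2 : 0 ≤ volume.real (ball (0 : Ed d) 2) := measureReal_nonneg
  have hκ0 : 0 ≤ κ := ENNReal.toReal_nonneg
  have hCP0 : 0 ≤ (CP d).toReal := ENNReal.toReal_nonneg
  have hq0 : 0 ≤ (volume.real (ball (0 : Ed d) 2) + 16) / volume.real (ball (0 : Ed d) 1) := by positivity
  have hπfin : IsFiniteMeasure π := ⟨by
    have := congrArg (fun m : Measure (Ed d) => m univ) hπ1
    simp only [Measure.map_apply measurable_fst MeasurableSet.univ, preimage_univ,
      Measure.restrict_apply_univ] at this
    rw [this]; exact hμO⟩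
  have hcm : AEStronglyMeasurable (fun p : Ed d × Ed d => ‖p.1 - p.2‖ ^ 2) π :=
    ((measurable_fst.sub measurable_snd).norm.pow_const 2).aestronglyMeasurable
  have hc0 : 0 ≤ᵐ[π] fun p : Ed d × Ed d => ‖p.1 - p.2‖ ^ 2 := Eventually.of_forall fun _ => sq_nonneg _
  -- the rescaled potential
  set h : Ed d → ℝ := fun x => s⁻¹ * (G x - G a) with hh
  have hsh : ∀ x, s * h x = G x - G a := fun x => by rw [hh]; field_simp
  have hlip : LipschitzWith (‖s⁻¹‖₊ * L') h := by
    refine LipschitzWith.of_dist_le_mul fun x y => ?_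
    have h1 := hGl.dist_le_mul x y
    rw [Real.dist_eq] at h1 ⊢
    have h2 : h x - h y = s⁻¹ * (G x - G y) := by rw [hh]; ring
    rw [h2, abs_mul, NNReal.coe_mul, coe_nnnorm, Real.norm_eq_abs, mul_assoc]
    exact mul_le_mul_of_nonneg_left h1 (abs_nonneg _)
  have hgh : ∀ x, gradient h x = s⁻¹ • gradient G x := by
    intro x
    refine ext_inner_right ℝ fun v => ?_
    rw [inner_gradient, inner_smul_left, inner_gradient]
    have : fderiv ℝ h x = s⁻¹ • fderiv ℝ G x := by
      rw [hh]
      have e : (fun x => s⁻¹ * (G x - G a)) = s⁻¹ • fun x => (G x - G a) := rfl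
      rw [e, fderiv_const_smul_field, Pi.smul_apply, fderiv_sub_const]
    rw [this]; simp
  have hen : ∫⁻ x in ball (0 : Ed d) 2, ENNReal.ofReal (‖gradient h x‖ ^ 2) ≤ 1 := by
    have e1 : ∫⁻ x in ball (0 : Ed d) 2, ENNReal.ofReal (‖gradient h x‖ ^ 2)
        = ENNReal.ofReal ((s ^ 2)⁻¹) * Elin T := by
      rw [Elin, ← lintegral_const_mul' _ _ ENNReal.ofReal_ne_top]
      refine lintegral_congr_ae ?_
      filter_upwards [hgrad2] with x hx
      rw [hgh, hx, norm_smul, mul_pow, ENNReal.ofReal_mul (by positivity), Real.norm_of_nonneg (by positivity),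
        inv_pow]
    rw [e1, hE, ← ENNReal.ofReal_mul (by positivity), inv_mul_cancel₀ (by positivity)]
    simp
  refine ⟨h, F, π, κ, ‖s⁻¹‖₊ * L', ?_, hen⟩
  refine
    { s_pos := hs, s_le := by linarith, α_nonneg := hσ.le, α_le := by linarith, lam_pos := hσ,
      lam_le := by linarith, κ_nonneg := hκ0, κ_le := ?_, one_le := ?_, vol_le := ?_, Tm := hT.1,
      lip := hlip, bdd := ?_, grad := ?_, disp := hsgB.mono fun x hx => hx.2, sup := ?_, en := ?_, l2 := ?_, Fc := hFc,
      Fle := ?_, Feq := ?_, πfin := hπfin, fst := hfst, snd := hsnd, cost_int := ?_, cost := ?_ }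
  · rw [M₁]; linarith
  · rw [M₁]; linarith
  · rw [M₁]; linarith
  · refine ⟨s⁻¹ * (2 * N), fun x => ?_⟩
    rw [hh, abs_mul, abs_of_pos (by positivity : 0 < s⁻¹)]
    refine mul_le_mul_of_nonneg_left ?_ (by positivity)
    have h1 := abs_le.1 (hGN x)
    have h2 := abs_le.1 (hGN a)
    rw [abs_le]; constructor <;> linarith
  · filter_upwards [ae_restrict_of_ae_restrict_of_subset hB2 hgrad2] with x hx
    rw [hgh, hx, smul_inv_smul₀ hs.ne']
  · intro x hx
    rw [hsh]
    refine (hlipB a ha x hx).trans ?_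
    have h1 : ‖x‖ < 7 / 4 := mem_ball_zero_iff.1 hx
    have h2 : ‖a‖ < 7 / 4 := mem_ball_zero_iff.1 ha
    have h3 := norm_sub_le x a
    nlinarith
  · rw [integral_eq_lintegral_of_nonneg_ae (Eventually.of_forall fun _ => sq_nonneg _)
      ((measurable_gradient h).norm.pow_const 2).aestronglyMeasurable]
    refine ENNReal.toReal_le_of_le_ofReal zero_le_one ?_
    rw [ENNReal.ofReal_one]
    exact (lintegral_mono_set hB2).trans hen
  · have h1 : ∫⁻ y in BB d, ENNReal.ofReal (h y ^ 2) ≤ CP d := by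
      have e1 : ∫⁻ y in BB d, ENNReal.ofReal (h y ^ 2)
          = ENNReal.ofReal ((s ^ 2)⁻¹) * ∫⁻ y in BB d, ENNReal.ofReal ((G y - G a) ^ 2) := by
        rw [← lintegral_const_mul' _ _ ENNReal.ofReal_ne_top]
        refine lintegral_congr fun x => ?_
        rw [hh, mul_pow, ENNReal.ofReal_mul (by positivity), inv_pow]
      have e2 : ENNReal.ofReal ((s ^ 2)⁻¹) *
          ∫⁻ x in ball (0 : Ed d) 2, ENNReal.ofReal (‖gradient G x‖ ^ 2) ≤ 1 := by
        refine le_trans (le_of_eq ?_) hen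
        rw [← lintegral_const_mul' _ _ ENNReal.ofReal_ne_top]
        refine lintegral_congr fun x => ?_
        rw [hgh, norm_smul, mul_pow, ENNReal.ofReal_mul (by positivity),
          Real.norm_of_nonneg (by positivity), inv_pow]
      rw [e1]
      calc _ ≤ ENNReal.ofReal ((s ^ 2)⁻¹) * (CP d *
            ∫⁻ x in ball (0 : Ed d) 2, ENNReal.ofReal (‖gradient G x‖ ^ 2)) := by gcongr
        _ = CP d * (ENNReal.ofReal ((s ^ 2)⁻¹) *
          ∫⁻ x in ball (0 : Ed d) 2, ENNReal.ofReal (‖gradient G x‖ ^ 2)) := by ring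
        _ ≤ CP d * 1 := by gcongr
        _ = CP d := mul_one _
    rw [integral_eq_lintegral_of_nonneg_ae (Eventually.of_forall fun _ => sq_nonneg _)
      (hlip.continuous.pow 2).aestronglyMeasurable]
    refine (ENNReal.toReal_mono (CP_ne_top d) h1).trans ?_
    rw [M₁]; linarith
  · intro y x hx
    rw [hsh]
    exact hFle y x hx
  · filter_upwards [hsgB, ae_restrict_mem measurableSet_ball] with x hx hxB
    rw [hsh]
    exact hFeq x hxB fun z => by have := hx.1 z; linarith
  · refine ⟨hcm, ?_⟩
    rw [hasFiniteIntegral_iff_ofReal hc0]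
    exact hcost.trans ENNReal.ofReal_lt_top
  · rw [integral_eq_lintegral_of_nonneg_ae hc0 hcm]
    exact ENNReal.toReal_le_of_le_ofReal (by positivity) hcost.le

/-- After rescaling, transport maps with small excess and relatively small data term give
approximately harmonic potentials, with an error `e` that can be prescribed. -/
lemma ot_core (d : ℕ) [Nontrivial (Ed d)] : ∃ M : ℝ, 1 ≤ M ∧ ∀ e : ℝ, 0 < e → ∃ ε θ : ℝ, 0 < ε ∧ 0 < θ ∧
    ∀ (Ω O : Set (Ed d)) (μ : Measure (Ed d)) (T : Ed d → Ed d),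
      Bornology.IsBounded Ω → MeasurableSet Ω → ball (0 : Ed d) 2 ⊆ Ω →
      IsOpen O → ball (0 : Ed d) 2 ⊆ O →
      (∃ K : Set (Ed d), IsCompact K ∧ μ Kᶜ = 0) → μ Set.univ = volume Ω →
      IsOptMap Ω μ T → Elin T ≠ 0 → Elin T ≤ ENNReal.ofReal ε →
      Dlin μ O < ENNReal.ofReal θ * Elin T →
      ∃ s h c L, 0 < s ∧ s ≤ e ∧ Elin T = ENNReal.ofReal (s ^ 2) ∧ AH d h c e M L ∧
        ∀ᵐ x ∂(volume.restrict (BB d)), T x - x = s • gradient h x := by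
  -- a fixed cutoff, used to bound the constant `c`
  let b : ContDiffBump (0 : Ed d) := ⟨1 / 2, 1, by norm_num, by norm_num⟩
  have hbs : tsupport b ⊆ CB d := by
    rw [b.tsupport_eq]; exact closedBall_subset_closedBall (by norm_num)
  obtain ⟨K₀, hK₀⟩ := exists_C2Bd (ζ := b) b.contDiff b.hasCompactSupport
  have hI : 0 < ∫ x, b x := b.integral_pos
  set I := ∫ x, b x with hIdef
  set M : ℝ := max (M₁ d) (4 * K₀ * M₁ d ^ 2 / I) with hM
  have hM₁ : 1 ≤ M₁ d := by
    have h1 : 0 ≤ volume.real (ball (0 : Ed d) 2) := measureReal_nonneg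
    have h2 : 0 ≤ (CP d).toReal := ENNReal.toReal_nonneg
    have h3 : 0 ≤ volume.real (ball (0 : Ed d) 1) := measureReal_nonneg
    have h4 : 0 ≤ (volume.real (ball (0 : Ed d) 2) + 16) / volume.real (ball (0 : Ed d) 1) := by positivity
    rw [M₁]; linarith
  have hM1 : 1 ≤ M := hM₁.trans (le_max_left _ _)
  refine ⟨M, hM1, fun e he => ?_⟩
  set σ : ℝ := min (1 / 160) (e / (210 * M ^ 2)) with hσdef
  have hσ : 0 < σ := by rw [hσdef]; exact lt_min (by norm_num) (by positivity)
  have hσe : 210 * M ^ 2 * σ ≤ e := by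
    have : σ ≤ e / (210 * M ^ 2) := min_le_right _ _
    rw [le_div_iff₀ (by positivity)] at this
    linarith
  have hMsq : 1 ≤ M ^ 2 := one_le_pow₀ hM1
  obtain ⟨ε₀, hε₀, hε₀'⟩ : ∃ ε₀ : ℝ, 0 < ε₀ ∧ ENNReal.ofReal ε₀ < thr d (σ / 8) := by
    obtain ⟨x, hx0, hx⟩ := ENNReal.lt_iff_exists_nnreal_btwn.1 (thr_pos d (by positivity : 0 < σ / 8))
    exact ⟨x, by exact_mod_cast hx0, by simpa using hx⟩
  refine ⟨min (σ ^ 2) ε₀, σ ^ 2, by positivity, by positivity, ?_⟩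
  intro Ω O μ T hΩb hΩm hΩ hO hO2 hμK hμ hT hE0 hE hD
  have hEfin : Elin T ≠ ∞ := (hE.trans_lt ENNReal.ofReal_lt_top).ne
  have hs0 : 0 < (Elin T).toReal := ENNReal.toReal_pos hE0 hEfin
  set s := Real.sqrt (Elin T).toReal with hs
  have hspos : 0 < s := Real.sqrt_pos.2 hs0
  have hs2 : s ^ 2 = (Elin T).toReal := Real.sq_sqrt hs0.le
  have hEs : Elin T = ENNReal.ofReal (s ^ 2) := by rw [hs2, ENNReal.ofReal_toReal hEfin]
  have hsσ : s ≤ σ := by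
    have : s ^ 2 ≤ σ ^ 2 := by
      rw [hs2]
      exact (ENNReal.toReal_le_of_le_ofReal (by positivity) hE).trans (min_le_left _ _)
    exact le_of_sq_le_sq this hσ.le
  have hEt : Elin T < thr d (σ / 8) :=
    (hE.trans (ENNReal.ofReal_le_ofReal (min_le_right _ _))).trans_lt hε₀'
  obtain ⟨h, F, π, κ, L, D, hen⟩ := exists_OTData hσ (min_le_left _ _) hΩb hΩm hΩ hO hO2 hμK hμ hT
    hspos hsσ hEs hEt hD
  have hc : |(κ - 1) / s| ≤ M := by
    have := D.c_bound hK₀ hbs hI.le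
    rw [← le_div_iff₀ hI] at this
    exact this.trans (le_max_right _ _)
  have D' := D.mono (le_max_left (M₁ d) (4 * K₀ * M₁ d ^ 2 / I))
  have hσσ : σ ≤ M ^ 2 * σ := le_mul_of_one_le_left hσ.le hMsq
  refine ⟨s, h, (κ - 1) / s, L, hspos, by linarith, hEs, ?_, D.grad⟩
  refine ⟨D.lip, D.bdd, hc, hen, D'.l2, ?_, ?_⟩
  · intro K ζ hζ hsupp
    refine (D'.two hζ hsupp).trans ?_
    rw [mul_comm]
    refine mul_le_mul_of_nonneg_right ?_ hζ.nonneg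
    change s + 2 * M ^ 2 * σ ≤ e
    linarith
  · intro K η hη hsupp h0 w hw
    have hw' : s * ‖w‖ ≤ 1 / 4 := by
      have h4 : 4 * s ≤ e := by linarith
      have := mul_le_mul_of_nonneg_right h4 (norm_nonneg w)
      linarith
    refine (D'.three hη hsupp h0 hw' hc).trans ?_
    have h5 : 70 * M ^ 2 * (s + σ + σ) ≤ e := by nlinarith
    have h6 : 70 * M ^ 2 * (s + σ + σ) * K * (1 + ‖w‖ ^ 2) ≤ e * K * (1 + ‖w‖ ^ 2) := by
      have := hη.nonneg
      gcongr
    change _ + 70 * M ^ 2 * (s + σ + σ) * K * (1 + ‖w‖ ^ 2) ≤ _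
    linarith

/-! ### Radial mollifiers -/

/-- `t ↦ t^{-d/2}`, cut off smoothly below `t = r²`. -/
def rg (d : ℕ) (r t : ℝ) : ℝ := t ^ (-(d : ℝ) / 2) * Real.smoothTransition (2 * t / r ^ 2 - 1)

/-- Profile (as a function of `|x|²`) of the radial mollifier at scale `r`: the Laplacian of the
truncated fundamental solution. -/
def rk (d : ℕ) (r t : ℝ) : ℝ := 4 * t * deriv (rg d r) t + 2 * d * rg d r t

lemma rg_zero (d : ℕ) {r t : ℝ} (hr : 0 < r) (ht : t ≤ r ^ 2 / 2) : rg d r t = 0 := by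
  rw [rg, Real.smoothTransition.zero_of_nonpos, mul_zero]
  rw [sub_nonpos, div_le_one (by positivity)]; linarith

lemma rg_eq (d : ℕ) {r t : ℝ} (hr : 0 < r) (ht : r ^ 2 ≤ t) : rg d r t = t ^ (-(d : ℝ) / 2) := by
  rw [rg, Real.smoothTransition.one_of_one_le, mul_one]
  rw [le_sub_iff_add_le, le_div_iff₀ (by positivity)]; linarith

lemma rg_contDiff (d : ℕ) {r : ℝ} (hr : 0 < r) : ContDiff ℝ (⊤ : ℕ∞) (rg d r) := by
  rw [contDiff_iff_contDiffAt]
  intro t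
  rcases lt_or_ge t (r ^ 2 / 2) with h | h
  · refine (contDiffAt_const (c := (0 : ℝ))).congr_of_eventuallyEq ?_
    filter_upwards [Iio_mem_nhds h] with u hu
    exact rg_zero d hr (le_of_lt hu)
  · have ht : 0 < t := lt_of_lt_of_le (by positivity) h
    have h1 : ContDiffAt ℝ (⊤ : ℕ∞) (fun t : ℝ => t ^ (-(d : ℝ) / 2)) t :=
      Real.contDiffAt_rpow_const_of_ne ht.ne'
    have h2 : ContDiff ℝ (⊤ : ℕ∞) (fun t : ℝ => Real.smoothTransition (2 * t / r ^ 2 - 1)) :=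
      Real.smoothTransition.contDiff.comp (by fun_prop)
    exact h1.mul h2.contDiffAt

lemma deriv_contDiff {f : ℝ → ℝ} (hf : ContDiff ℝ (⊤ : ℕ∞) f) : ContDiff ℝ (⊤ : ℕ∞) (deriv f) :=
  (contDiff_infty_iff_deriv.1 hf).2

lemma rk_contDiff (d : ℕ) {r : ℝ} (hr : 0 < r) : ContDiff ℝ (⊤ : ℕ∞) (rk d r) := by
  have h1 := rg_contDiff d hr
  have h2 := deriv_contDiff h1
  unfold rk
  fun_prop

lemma rk_of_pos (d : ℕ) {r t : ℝ} (ht : 0 < t) :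
    rk d r t = 8 / r ^ 2 * t ^ (1 - (d : ℝ) / 2)
      * deriv Real.smoothTransition (2 * t / r ^ 2 - 1) := by
  have h1 : HasDerivAt (fun t : ℝ => t ^ (-(d : ℝ) / 2)) (-(d : ℝ) / 2 * t ^ (-(d : ℝ) / 2 - 1)) t :=
    Real.hasDerivAt_rpow_const (Or.inl ht.ne')
  have h2 : HasDerivAt (fun t : ℝ => 2 * t / r ^ 2 - 1) (2 * 1 / r ^ 2) t :=
    (((hasDerivAt_id t).const_mul 2).div_const _).sub_const _
  have h3 : HasDerivAt Real.smoothTransition (deriv Real.smoothTransition (2 * t / r ^ 2 - 1))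
      (2 * t / r ^ 2 - 1) :=
    ((Real.smoothTransition.contDiff (n := 1)).differentiable (by simp) _).hasDerivAt
  have h4 := h1.mul (h3.comp t h2)
  have h5 : deriv (rg d r) t = _ := h4.deriv
  rw [rk, h5, rg]
  have e1 : t ^ (-(d : ℝ) / 2 - 1) = t ^ (-(d : ℝ) / 2) / t := Real.rpow_sub_one ht.ne' _
  have e2 : t ^ (1 - (d : ℝ) / 2) = t ^ (-(d : ℝ) / 2) * t := by
    rw [← Real.rpow_add_one ht.ne']; congr 1; ring
  rw [e1, e2]
  simp only [Function.comp]
  field_simp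
  ring

lemma rk_zero (d : ℕ) {r t : ℝ} (hr : 0 < r) (ht : t ≤ 0) : rk d r t = 0 := by
  have h : rg d r =ᶠ[𝓝 t] fun _ => 0 := by
    filter_upwards [Iio_mem_nhds (show t < r ^ 2 / 2 from lt_of_le_of_lt ht (by positivity))] with u hu
    exact rg_zero d hr (le_of_lt hu)
  rw [rk, h.deriv_eq, h.self_of_nhds]
  simp

lemma rk_nonneg (d : ℕ) {r : ℝ} (hr : 0 < r) (t : ℝ) : 0 ≤ rk d r t := by
  rcases le_or_gt t 0 with h | h
  · rw [rk_zero d hr h]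
  · rw [rk_of_pos d h]
    have := Real.smoothTransition.monotone.deriv_nonneg (x := 2 * t / r ^ 2 - 1)
    positivity

lemma rk_eq_zero (d : ℕ) {r t : ℝ} (hr : 0 < r) (ht : r ^ 2 < t) : rk d r t = 0 := by
  have h0 : 0 < t := lt_of_le_of_lt (by positivity) ht
  have h : Real.smoothTransition =ᶠ[𝓝 (2 * t / r ^ 2 - 1)] fun _ => 1 := by
    have : 1 < 2 * t / r ^ 2 - 1 := by
      rw [lt_sub_iff_add_lt, lt_div_iff₀ (by positivity)]; linarith
    filter_upwards [Ioi_mem_nhds this] with u hu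
    exact Real.smoothTransition.one_of_one_le (le_of_lt hu)
  rw [rk_of_pos d h0, h.deriv_eq]
  simp

lemma exists_rk_pos (d : ℕ) {r : ℝ} (hr : 0 < r) : ∃ t, 0 < t ∧ 0 < rk d r t := by
  obtain ⟨u, hu, hu'⟩ := exists_deriv_eq_slope Real.smoothTransition (zero_lt_one)
    Real.smoothTransition.continuous.continuousOn
    ((Real.smoothTransition.contDiff (n := 1)).differentiable (by simp)).differentiableOn
  rw [Real.smoothTransition.one, Real.smoothTransition.zero] at hu'
  have ht : 0 < (u + 1) * r ^ 2 / 2 := by have := hu.1; positivity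
  refine ⟨(u + 1) * r ^ 2 / 2, ht, ?_⟩
  rw [rk_of_pos d ht]
  have e : 2 * ((u + 1) * r ^ 2 / 2) / r ^ 2 - 1 = u := by field_simp; ring
  rw [e, hu']
  have := Real.rpow_pos_of_pos ht (1 - (d : ℝ) / 2)
  norm_num
  positivity

lemma contDiff_radial {d : ℕ} {F : ℝ → ℝ} (hF : ContDiff ℝ (⊤ : ℕ∞) F) :
    ContDiff ℝ (⊤ : ℕ∞) (fun y : Ed d => F (‖y‖ ^ 2)) :=
  hF.comp (contDiff_norm_sq ℝ)

lemma tsupport_of_zero {d : ℕ} {f : Ed d → ℝ} {r : ℝ} (h : ∀ y, r < ‖y‖ → f y = 0) :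
    tsupport f ⊆ closedBall 0 r := by
  refine closure_minimal (fun y hy => ?_) isClosed_closedBall
  by_contra h'
  exact hy (h y (by simpa using h'))

/-- Mollifiers at different scales differ by the Laplacian of a compactly supported function. -/
lemma rk_diff (d : ℕ) {r R : ℝ} (hr : 0 < r) (hrR : r ≤ R) (hR : R ≤ 1) :
    ∃ Z : Ed d → ℝ, ContDiff ℝ (⊤ : ℕ∞) Z ∧ tsupport Z ⊆ closedBall 0 R ∧
      ∀ y, lap Z y = rk d r (‖y‖ ^ 2) - rk d R (‖y‖ ^ 2) := by
  have hR0 : 0 < R := hr.trans_le hrR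
  have h1 := rg_contDiff d hr
  have h2 := rg_contDiff d hR0
  have hg : Continuous fun t => rg d r t - rg d R t := h1.continuous.sub h2.continuous
  set F : ℝ → ℝ := fun t => ∫ u in (1 : ℝ)..t, (rg d r u - rg d R u) with hFdef
  have hF : ∀ t, HasDerivAt F (rg d r t - rg d R t) t := fun t =>
    intervalIntegral.integral_hasDerivAt_right (hg.intervalIntegrable _ _)
      (hg.stronglyMeasurableAtFilter _ _) hg.continuousAt
  have hF' : deriv F = fun t => rg d r t - rg d R t := funext fun t => (hF t).deriv
  have hFs : ContDiff ℝ (⊤ : ℕ∞) F := by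
    rw [contDiff_infty_iff_deriv]
    refine ⟨fun t => (hF t).differentiableAt, ?_⟩
    rw [hF']
    exact h1.sub h2
  refine ⟨fun y => F (‖y‖ ^ 2), contDiff_radial hFs, tsupport_of_zero fun y hy => ?_, fun y => ?_⟩
  · have hy2 : R ^ 2 ≤ ‖y‖ ^ 2 := pow_le_pow_left₀ hR0.le hy.le 2
    change (∫ u in (1 : ℝ)..‖y‖ ^ 2, (rg d r u - rg d R u)) = 0
    refine intervalIntegral.integral_zero_ae (Eventually.of_forall fun u hu => ?_)
    have hu' : R ^ 2 ≤ u := by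
      have : min 1 (‖y‖ ^ 2) < u := hu.1
      refine le_trans (le_min ?_ hy2) this.le
      exact pow_le_one₀ hR0.le hR
    rw [rg_eq d hR0 hu', rg_eq d hr (le_trans (pow_le_pow_left₀ hr.le hrR 2) hu'), sub_self]
  · rw [lap_radial hFs, hF']
    have : deriv (fun t => rg d r t - rg d R t) (‖y‖ ^ 2)
        = deriv (rg d r) (‖y‖ ^ 2) - deriv (rg d R) (‖y‖ ^ 2) :=
      ((h1.differentiable (by simp) _).hasDerivAt.sub
        (h2.differentiable (by simp) _).hasDerivAt).deriv
    rw [this, rk, rk]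
    ring

/-- `ρ` is a family of radial mollifiers whose differences are Laplacians of compactly supported
functions; averaging against them thus preserves harmonic functions. -/
structure Moll (d : ℕ) (ρ : ℝ → Ed d → ℝ) : Prop where
  smooth : ∀ r, 0 < r → ContDiff ℝ (⊤ : ℕ∞) (ρ r)
  nonneg : ∀ r, 0 < r → ∀ y, 0 ≤ ρ r y
  supp : ∀ r, 0 < r → tsupport (ρ r) ⊆ closedBall 0 r
  int_one : ∀ r, 0 < r → r ≤ 1 → ∫ y, ρ r y = 1
  even : ∀ r y, ρ r (-y) = ρ r y
  diff : ∀ r R, 0 < r → r ≤ R → R ≤ 1 → ∃ Z : Ed d → ℝ, ContDiff ℝ (⊤ : ℕ∞) Z ∧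
    tsupport Z ⊆ closedBall 0 R ∧ ∀ y, lap Z y = ρ r y - ρ R y

lemma exists_moll (d : ℕ) [Nontrivial (Ed d)] : ∃ ρ, Moll d ρ := by
  set k : ℝ → Ed d → ℝ := fun r y => rk d r (‖y‖ ^ 2) with hk
  have ks : ∀ r, 0 < r → ContDiff ℝ (⊤ : ℕ∞) (k r) := fun r hr => contDiff_radial (rk_contDiff d hr)
  have kz : ∀ r, 0 < r → ∀ y, r < ‖y‖ → k r y = 0 := fun r hr y hy =>
    rk_eq_zero d hr (pow_lt_pow_left₀ hy hr.le two_ne_zero)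
  have kt : ∀ r, 0 < r → tsupport (k r) ⊆ closedBall 0 r := fun r hr => tsupport_of_zero (kz r hr)
  have kc : ∀ r, 0 < r → HasCompactSupport (k r) := fun r hr =>
    HasCompactSupport.of_support_subset_isCompact (isCompact_closedBall 0 r)
      ((subset_tsupport _).trans (kt r hr))
  have ki : ∀ r, 0 < r → Integrable (k r) := fun r hr =>
    (ks r hr).continuous.integrable_of_hasCompactSupport (kc r hr)
  have kd := fun r R hr hrR hR => rk_diff d (r := r) (R := R) hr hrR hR
  set m := ∫ y, k 1 y with hm
  have hm0 : 0 < m := by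
    obtain ⟨t, ht, ht'⟩ := exists_rk_pos d one_pos
    obtain ⟨v, hv⟩ := exists_norm_eq (Ed d) (Real.sqrt_nonneg t)
    refine (ks 1 one_pos).continuous.integral_pos_of_hasCompactSupport_nonneg_nonzero (kc 1 one_pos)
      (fun y => rk_nonneg d one_pos _) (x := v) ?_
    change rk d 1 (‖v‖ ^ 2) ≠ 0
    rw [hv, Real.sq_sqrt ht.le]
    exact ht'.ne'
  have kint : ∀ r, 0 < r → r ≤ 1 → ∫ y, k r y = m := by
    intro r hr hr1
    obtain ⟨Z, hZ, hZs, hZl⟩ := kd r 1 hr hr1 le_rfl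
    have h0 := integral_lap_eq_zero hZ (HasCompactSupport.of_support_subset_isCompact
      (isCompact_closedBall 0 1) ((subset_tsupport _).trans hZs))
    simp only [hZl] at h0
    rw [integral_sub (ki r hr) (ki 1 one_pos)] at h0
    exact sub_eq_zero.1 h0
  refine ⟨fun r y => m⁻¹ * k r y, fun r hr => contDiff_const.mul (ks r hr), fun r hr y =>
    mul_nonneg (by positivity) (rk_nonneg d hr _), fun r hr => tsupport_of_zero fun y hy => ?_,
    fun r hr hr1 => ?_, fun r y => ?_, fun r R hr hrR hR => ?_⟩
  · rw [kz r hr y hy, mul_zero]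
  · rw [integral_const_mul, kint r hr hr1, inv_mul_cancel₀ hm0.ne']
  · simp only [hk, norm_neg]
  · obtain ⟨Z, hZ, hZs, hZl⟩ := kd r R hr hrR hR
    refine ⟨fun y => m⁻¹ * Z y, contDiff_const.mul hZ, ?_, fun y => ?_⟩
    · refine (tsupport_mul_subset_right (f := fun _ => m⁻¹)).trans hZs
    · rw [lap_const_mul hZ, hZl]; ring

/-! ### Weak compactness and convolutions -/

/-- Weak sequential compactness of bounded sets of `L²`, for square integrable representatives. -/
lemma weak_compact {d : ℕ} {μ : Measure (Ed d)} [IsFiniteMeasure μ] {N : ℝ} {k : ℕ → Ed d → ℝ}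
    (hk : ∀ n, MemLp (k n) 2 μ) (hN : ∀ n, ∫ x, k n x ^ 2 ∂μ ≤ N) :
    ∃ (φ : ℕ → ℕ) (u : Ed d → ℝ), StrictMono φ ∧ MemLp u 2 μ ∧ ∫ x, u x ^ 2 ∂μ ≤ N ∧
      ∀ g : Ed d → ℝ, MemLp g 2 μ →
        Tendsto (fun n => ∫ x, k (φ n) x * g x ∂μ) atTop (𝓝 (∫ x, u x * g x ∂μ)) := by
  haveI : Fact ((2 : ℝ≥0∞) ≠ ∞) := ⟨by simp⟩
  have hinner : ∀ f g : Lp ℝ 2 μ, ⟪f, g⟫ = ∫ x, f x * g x ∂μ := fun f g => by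
    rw [L2.inner_def]
    exact integral_congr_ae (Eventually.of_forall fun x => by simp [mul_comm])
  have hnorm : ∀ f : Lp ℝ 2 μ, ‖f‖ ^ 2 = ∫ x, f x ^ 2 ∂μ := fun f => by
    rw [← real_inner_self_eq_norm_sq, hinner]
    simp only [sq]
  have hN0 : 0 ≤ N := (integral_nonneg fun x => sq_nonneg _).trans (hN 0)
  set f : ℕ → Lp ℝ 2 μ := fun n => (hk n).toLp with hf
  have hfn : ∀ n, ‖f n‖ ≤ Real.sqrt N := fun n => by
    refine Real.le_sqrt_of_sq_le ?_
    rw [hnorm]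
    refine le_trans (le_of_eq (integral_congr_ae ?_)) (hN n)
    filter_upwards [(hk n).coeFn_toLp] with x hx
    simp only [hf, hx]
  set ℓ : ℕ → WeakDual ℝ (Lp ℝ 2 μ) := fun n =>
    StrongDual.toWeakDual (InnerProductSpace.toDual ℝ (Lp ℝ 2 μ) (f n)) with hℓ
  obtain ⟨a, ha, φ, hφ, hlim⟩ := WeakDual.isSeqCompact_closedBall (𝕜 := ℝ) (E := Lp ℝ 2 μ) 0
    (Real.sqrt N) (x := ℓ) (fun n => by
      simp only [mem_preimage, mem_closedBall_zero_iff]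
      change ‖InnerProductSpace.toDual ℝ (Lp ℝ 2 μ) (f n)‖ ≤ _
      rw [LinearIsometryEquiv.norm_map]
      exact hfn n)
  set u := (InnerProductSpace.toDual ℝ (Lp ℝ 2 μ)).symm (WeakDual.toStrongDual a) with hu
  have hau : ∀ g, a g = ⟪u, g⟫ := fun g => by
    rw [hu, InnerProductSpace.toDual_symm_apply]; rfl
  refine ⟨φ, u, hφ, Lp.memLp u, ?_, fun g hg => ?_⟩
  · rw [← hnorm]
    have : ‖u‖ ≤ Real.sqrt N := by
      rw [hu, LinearIsometryEquiv.norm_map]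
      simpa using ha
    calc ‖u‖ ^ 2 ≤ Real.sqrt N ^ 2 := by gcongr
      _ = N := Real.sq_sqrt hN0
  · have h1 := (WeakDual.eval_continuous hg.toLp).continuousAt.tendsto.comp hlim
    have e1 : ∀ n, ((fun y : WeakDual ℝ (Lp ℝ 2 μ) => y hg.toLp) ∘ ℓ ∘ φ) n
        = ∫ x, k (φ n) x * g x ∂μ := fun n => by
      change InnerProductSpace.toDual ℝ (Lp ℝ 2 μ) (f (φ n)) hg.toLp = _
      rw [InnerProductSpace.toDual_apply_apply, hinner]
      refine integral_congr_ae ?_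
      filter_upwards [(hk (φ n)).coeFn_toLp, hg.coeFn_toLp] with x hx hx'
      simp only [hf, hx, hx']
    have e2 : a hg.toLp = ∫ x, u x * g x ∂μ := by
      rw [hau, hinner]
      refine integral_congr_ae ?_
      filter_upwards [hg.coeFn_toLp] with x hx'
      simp only [hx']
    rw [← e2]
    exact h1.congr e1

/-- Mollification against a probability density `ρ` is controlled in `L²(A)` by the translations. -/
lemma moll_L2 {d : ℕ} {f ρ : Ed d → ℝ} {r : ℝ} (hf : Continuous f) (hρ : Continuous ρ)
    (hρs : tsupport ρ ⊆ closedBall 0 r) (h0 : ∀ y, 0 ≤ ρ y) (h1 : ∫ y, ρ y = 1)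
    {A : Set (Ed d)} {B : ℝ≥0∞}
    (hB : ∀ y, ‖y‖ ≤ r → ∫⁻ x in A, ENNReal.ofReal ((f (x + y) - f x) ^ 2) ≤ B) :
    ∫⁻ x in A, ENNReal.ofReal ((f x - ∫ y, f (x + y) * ρ y) ^ 2) ≤ B := by
  have hc : HasCompactSupport ρ := HasCompactSupport.of_support_subset_isCompact
    (isCompact_closedBall 0 r) ((subset_tsupport _).trans hρs)
  have hi : ∀ g : Ed d → ℝ, Continuous g → Integrable fun y => g y * ρ y := fun g hg =>
    (hg.mul hρ).integrable_of_hasCompactSupport hc.mul_left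
  have hρi : Integrable ρ := hρ.integrable_of_hasCompactSupport hc
  have key : ∀ x, (f x - ∫ y, f (x + y) * ρ y) ^ 2 ≤ ∫ y, (f (x + y) - f x) ^ 2 * ρ y := by
    intro x
    set m := ∫ y, f (x + y) * ρ y with hm
    have i1 := hi (fun y => f (x + y)) (by fun_prop)
    have i2 := hi (fun y => (f (x + y) - f x) ^ 2) (by fun_prop)
    have e : (∫ y, (f (x + y) - f x) ^ 2 * ρ y) - (f x - m) ^ 2
        = ∫ y, (f (x + y) - m) ^ 2 * ρ y := by
      have e1 : ∀ y, (f (x + y) - m) ^ 2 * ρ y = (f (x + y) - f x) ^ 2 * ρ y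
          + (2 * (f x - m) * (f (x + y) * ρ y) + (m ^ 2 - f x ^ 2) * ρ y) := fun y => by ring
      simp only [e1]
      have i3 : Integrable fun y => 2 * (f x - m) * (f (x + y) * ρ y) := i1.const_mul _
      have i4 : Integrable fun y => (m ^ 2 - f x ^ 2) * ρ y := hρi.const_mul _
      have i5 : Integrable fun y => 2 * (f x - m) * (f (x + y) * ρ y) + (m ^ 2 - f x ^ 2) * ρ y :=
        i3.add i4
      rw [integral_add i2 i5, integral_add i3 i4, integral_const_mul, integral_const_mul,
        h1, ← hm]
      ring
    have : 0 ≤ ∫ y, (f (x + y) - m) ^ 2 * ρ y :=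
      integral_nonneg fun y => mul_nonneg (sq_nonneg _) (h0 y)
    linarith
  calc ∫⁻ x in A, ENNReal.ofReal ((f x - ∫ y, f (x + y) * ρ y) ^ 2)
      ≤ ∫⁻ x in A, ∫⁻ y, ENNReal.ofReal ((f (x + y) - f x) ^ 2) * ENNReal.ofReal (ρ y) := by
        refine lintegral_mono fun x => ?_
        refine (ENNReal.ofReal_le_ofReal (key x)).trans (le_of_eq ?_)
        rw [ofReal_integral_eq_lintegral_ofReal (hi (fun y => (f (x + y) - f x) ^ 2) (by fun_prop))
          (Eventually.of_forall fun y => mul_nonneg (sq_nonneg _) (h0 y))]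
        exact lintegral_congr fun y => ENNReal.ofReal_mul (sq_nonneg _)
    _ = ∫⁻ y, (∫⁻ x in A, ENNReal.ofReal ((f (x + y) - f x) ^ 2)) * ENNReal.ofReal (ρ y) := by
        rw [lintegral_lintegral_swap]
        · exact lintegral_congr fun y => lintegral_mul_const' _ _ ENNReal.ofReal_ne_top
        · exact Measurable.aemeasurable (by fun_prop)
    _ ≤ ∫⁻ y, B * ENNReal.ofReal (ρ y) := by
        refine lintegral_mono fun y => ?_
        by_cases hy : ‖y‖ ≤ r
        · exact mul_le_mul_left (hB y hy) _
        · have : ρ y = 0 := image_eq_zero_of_notMem_tsupport fun h =>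
            hy (mem_closedBall_zero_iff.1 (hρs h))
          simp [this]
    _ = B := by
        rw [lintegral_const_mul _ (by fun_prop), ← ofReal_integral_eq_lintegral_ofReal hρi
          (Eventually.of_forall h0), h1]
        simp

/-- Convolution `∫ u(y) g(x - y) dy`. -/
def cv {d : ℕ} (u g : Ed d → ℝ) (x : Ed d) : ℝ := ∫ y, u y * g (x - y)

lemma cv_eq {d : ℕ} (u g : Ed d → ℝ) :
    cv u g = MeasureTheory.convolution u g (ContinuousLinearMap.mul ℝ ℝ) volume := by
  funext x; rfl

lemma cv_contDiff {d : ℕ} {u g : Ed d → ℝ} (hu : Integrable u) (hg : ContDiff ℝ (⊤ : ℕ∞) g)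
    (hc : HasCompactSupport g) : ContDiff ℝ (⊤ : ℕ∞) (cv u g) := by
  rw [cv_eq]
  exact hc.contDiff_convolution_right _ hu.locallyIntegrable hg

lemma cv_fderiv {d : ℕ} {u g : Ed d → ℝ} (hu : Integrable u) (hg : ContDiff ℝ (⊤ : ℕ∞) g)
    (hc : HasCompactSupport g) (x v : Ed d) :
    fderiv ℝ (cv u g) x v = cv u (fun y => fderiv ℝ g y v) x := by
  have h := hc.hasFDerivAt_convolution_right (ContinuousLinearMap.mul ℝ ℝ) hu.locallyIntegrable
    (hg.of_le (by simp)) x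
  rw [cv_eq, h.fderiv]
  have hex : ConvolutionExistsAt u (fderiv ℝ g) x
      ((ContinuousLinearMap.mul ℝ ℝ).precompR (Ed d)) volume :=
    (hc.fderiv (𝕜 := ℝ)).convolutionExists_right _ hu.locallyIntegrable
      (hg.continuous_fderiv (by simp)) x
  rw [MeasureTheory.convolution, ContinuousLinearMap.integral_apply hex]
  rfl

lemma cv_lap {d : ℕ} {u g : Ed d → ℝ} (hu : Integrable u) (hg : ContDiff ℝ (⊤ : ℕ∞) g)
    (hc : HasCompactSupport g) (x : Ed d) : lap (cv u g) x = cv u (lap g) x := by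
  have h1 : ∀ i : Fin d, (fun y => fderiv ℝ (cv u g) y (EuclideanSpace.single i (1:ℝ)))
      = cv u (fun y => fderiv ℝ g y (EuclideanSpace.single i (1:ℝ))) := fun i => by
    funext y; exact cv_fderiv hu hg hc y _
  have hi : ∀ f : Ed d → ℝ, Continuous f → HasCompactSupport f →
      Integrable fun y => u y * f (x - y) := fun f hf hfc =>
    hfc.convolutionExists_right (ContinuousLinearMap.mul ℝ ℝ) hu.locallyIntegrable hf x
  simp only [lap, h1]
  simp only [cv_fderiv hu (contDiff_pd hg _) (hasCompactSupport_pd hc _)]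
  simp only [cv, lap, Finset.mul_sum]
  rw [integral_finsetSum]
  intro i _
  exact hi _ (contDiff_pd (contDiff_pd hg _) _).continuous
    (hasCompactSupport_pd (hasCompactSupport_pd hc _) _)

/-! ### Weak limits of approximate solutions -/

/-- The quadratic `|x|²/(2d)`, whose Laplacian is `1`. -/
def qd {d : ℕ} (x : Ed d) : ℝ := (2 * d : ℝ)⁻¹ * ‖x‖ ^ 2

lemma qd_contDiff {d : ℕ} : ContDiff ℝ (⊤ : ℕ∞) (qd (d := d)) :=
  contDiff_const.mul (contDiff_norm_sq ℝ)

lemma qd_lap {d : ℕ} (hd : d ≠ 0) (x : Ed d) : lap qd x = 1 := by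
  have hd' : (d : ℝ) ≠ 0 := by exact_mod_cast hd
  have hF : ContDiff ℝ (⊤ : ℕ∞) fun t : ℝ => (2 * d : ℝ)⁻¹ * t := by fun_prop
  have h1 : deriv (fun t : ℝ => (2 * d : ℝ)⁻¹ * t) = fun _ => (2 * d : ℝ)⁻¹ := by
    funext t
    simp
  have := lap_radial hF x
  rw [h1] at this
  refine this.trans ?_
  simp only [deriv_const']
  field_simp
  ring

lemma qd_gradient {d : ℕ} (hd : d ≠ 0) (x : Ed d) : gradient qd x = (d : ℝ)⁻¹ • x := by
  have hd' : (d : ℝ) ≠ 0 := by exact_mod_cast hd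
  refine ext_inner_right ℝ fun v => ?_
  have h1 : HasFDerivAt (qd (d := d)) ((2 * d : ℝ)⁻¹ • (2 • (innerSL ℝ x))) x :=
    (hasStrictFDerivAt_norm_sq x).hasFDerivAt.const_mul _
  rw [inner_gradient, h1.fderiv, inner_smul_left]
  simp
  field_simp

lemma qd_diff {d : ℕ} (hd : d ≠ 0) {x y : Ed d} {r : ℝ} (hx : ‖x‖ ≤ 1) (hy : ‖y‖ ≤ r) (hr : r ≤ 1) :
    |qd (x + y) - qd x| ≤ 2 * r := by
  have hd1 : (1 : ℝ) ≤ d := by exact_mod_cast Nat.one_le_iff_ne_zero.2 hd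
  have e : qd (x + y) - qd x = (2 * d : ℝ)⁻¹ * (2 * ⟪x, y⟫ + ‖y‖ ^ 2) := by
    rw [qd, qd, norm_add_sq_real]; ring
  have h1 : |2 * ⟪x, y⟫ + ‖y‖ ^ 2| ≤ 3 * r := by
    have h2 := abs_le.1 (abs_real_inner_le_norm x y)
    have h0 := norm_nonneg y
    have h3 : ‖x‖ * ‖y‖ ≤ r := by nlinarith [norm_nonneg x]
    rw [abs_le]; constructor <;> nlinarith
  rw [e, abs_mul, abs_of_nonneg (by positivity)]
  have h4 : (2 * d : ℝ)⁻¹ ≤ 1 / 2 := by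
    rw [inv_le_comm₀ (by positivity) (by norm_num)]; norm_num; omega
  have : 0 ≤ r := (norm_nonneg y).trans hy
  calc (2 * d : ℝ)⁻¹ * |2 * ⟪x, y⟫ + ‖y‖ ^ 2| ≤ 1 / 2 * (3 * r) := by gcongr
    _ ≤ 2 * r := by linarith

lemma qd_le {d : ℕ} (hd : d ≠ 0) {x : Ed d} (hx : x ∈ BB d) : |qd x| ≤ 2 := by
  have hd1 : (1 : ℝ) ≤ d := by exact_mod_cast Nat.one_le_iff_ne_zero.2 hd
  have h1 : ‖x‖ < 7 / 4 := mem_ball_zero_iff.1 hx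
  have h4 : (2 * d : ℝ)⁻¹ ≤ 1 / 2 := by
    rw [inv_le_comm₀ (by positivity) (by norm_num)]; norm_num; omega
  rw [qd, abs_of_nonneg (by positivity)]
  calc (2 * d : ℝ)⁻¹ * ‖x‖ ^ 2 ≤ 1 / 2 * (7 / 4) ^ 2 := by gcongr
    _ ≤ 2 := by norm_num

lemma lap_comp_neg {d : ℕ} {f : Ed d → ℝ} (hf : ContDiff ℝ (⊤ : ℕ∞) f) (x : Ed d) :
    lap (fun y => f (-y)) x = lap f (-x) := by
  have key : ∀ g : Ed d → ℝ, Differentiable ℝ g → ∀ y v,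
      fderiv ℝ (fun y => g (-y)) y v = -fderiv ℝ g (-y) v := by
    intro g hg y v
    have h1 : HasFDerivAt (fun y : Ed d => -y) (-ContinuousLinearMap.id ℝ (Ed d)) y :=
      (hasFDerivAt_id y).neg
    have h2 := ((hg (-y)).hasFDerivAt.comp y h1).fderiv
    have h3 : fderiv ℝ (fun y => g (-y)) y = _ := h2
    rw [h3]; simp
  simp only [lap]
  refine Finset.sum_congr rfl fun i _ => ?_
  have h1 : (fun y => fderiv ℝ (fun y => f (-y)) y (EuclideanSpace.single i (1:ℝ)))
      = fun y => -((fun z => fderiv ℝ f z (EuclideanSpace.single i (1:ℝ))) (-y)) := by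
    funext y; exact key f (hf.differentiable (by simp)) y _
  rw [h1, fderiv_fun_neg, _root_.neg_apply,
    key _ ((contDiff_pd hf _).differentiable (by simp)), neg_neg]

/-- `L²(BB)` bound for the corrected potentials. -/
def NN (d : ℕ) (M : ℝ) : ℝ := 2 * M + 8 * M ^ 2 * volume.real (BB d)

lemma AH.corr_l2 {d : ℕ} (hd : d ≠ 0) {h : Ed d → ℝ} {c e M : ℝ} {L : ℝ≥0} (H : AH d h c e M L) :
    MemLp (fun x => h x + c * qd x) 2 (volume.restrict (BB d)) ∧
      ∫ x in BB d, (h x + c * qd x) ^ 2 ≤ NN d M := by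
  obtain ⟨N, hN⟩ := H.bdd
  have hm : Measurable fun x => h x + c * qd x :=
    H.lip.continuous.measurable.add (measurable_const.mul qd_contDiff.continuous.measurable)
  have hfin : IsFiniteMeasure (volume.restrict (BB d)) := ⟨by simpa using measure_ball_lt_top⟩
  have hML : MemLp (fun x => h x + c * qd x) 2 (volume.restrict (BB d)) := by
    refine MemLp.of_bound hm.aestronglyMeasurable (N + |c| * 2) ?_
    filter_upwards [ae_restrict_mem measurableSet_ball] with x hx
    rw [Real.norm_eq_abs]
    refine (abs_add_le _ _).trans (add_le_add (hN x) ?_)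
    rw [abs_mul]
    exact mul_le_mul_of_nonneg_left (qd_le hd hx) (abs_nonneg _)
  refine ⟨hML, ?_⟩
  have i1 : IntegrableOn (fun x => h x ^ 2) (BB d) :=
    integrableOn_BB (H.lip.continuous.measurable.pow_const 2) (C := N ^ 2) fun x => by
      rw [abs_pow]; exact pow_le_pow_left₀ (abs_nonneg _) (hN x) 2
  have i2 : IntegrableOn (fun _ : Ed d => 8 * M ^ 2) (BB d) := integrableOn_const measure_ball_lt_top.ne
  have i3 : IntegrableOn (fun x => 2 * h x ^ 2) (BB d) := i1.const_mul 2
  calc ∫ x in BB d, (h x + c * qd x) ^ 2 ≤ ∫ x in BB d, (2 * h x ^ 2 + 8 * M ^ 2) := by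
        refine setIntegral_mono_on hML.integrable_sq (i3.add i2) measurableSet_ball fun x hx => ?_
        have h1 := qd_le hd hx
        have h2 : (c * qd x) ^ 2 ≤ M ^ 2 * 2 ^ 2 := by
          rw [mul_pow, ← sq_abs c, ← sq_abs (qd x)]
          have := H.c_le
          gcongr
        nlinarith [sq_nonneg (h x - c * qd x)]
    _ = 2 * (∫ x in BB d, h x ^ 2) + 8 * M ^ 2 * volume.real (BB d) := by
        rw [integral_add i3 i2, integral_const_mul, setIntegral_const, smul_eq_mul]; ring
    _ ≤ NN d M := by rw [NN]; linarith [H.l2]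

/-- Weak limits of the corrected potentials are weakly harmonic. -/
lemma weak_limit {d : ℕ} (hd : d ≠ 0) {M : ℝ} {h : ℕ → Ed d → ℝ} {c e : ℕ → ℝ} {L : ℕ → ℝ≥0}
    (H : ∀ n, AH d (h n) (c n) (e n) M (L n)) (he : Tendsto e atTop (𝓝 0)) :
    ∃ (φ : ℕ → ℕ) (u : Ed d → ℝ), StrictMono φ ∧ Integrable u ∧
      ∫ x, |u x| ≤ (NN d M + volume.real (BB d)) / 2 ∧
      (∀ g : Ed d → ℝ, Continuous g → tsupport g ⊆ CB d →
        Tendsto (fun n => ∫ x, (h (φ n) x + c (φ n) * qd x) * g x) atTop (𝓝 (∫ x, u x * g x))) ∧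
      ∀ ζ : Ed d → ℝ, ContDiff ℝ (⊤ : ℕ∞) ζ → tsupport ζ ⊆ CB d → ∫ x, u x * lap ζ x = 0 := by
  have hfin : IsFiniteMeasure (volume.restrict (BB d)) := ⟨by simpa using measure_ball_lt_top⟩
  obtain ⟨φ, u, hφ, hu, huN, hlim⟩ := weak_compact (fun n => ((H n).corr_l2 hd).1)
    fun n => ((H n).corr_l2 hd).2
  have hui : IntegrableOn u (BB d) := hu.integrable (by norm_num)
  set v := (BB d).indicator u with hv
  have hvg : ∀ g : Ed d → ℝ, ∫ x, v x * g x = ∫ x in BB d, u x * g x := fun g => by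
    rw [← integral_indicator measurableSet_ball]
    refine integral_congr_ae (Eventually.of_forall fun x => ?_)
    by_cases hx : x ∈ BB d <;> simp [hv, hx]
  have hlim' : ∀ g : Ed d → ℝ, Continuous g → tsupport g ⊆ CB d →
      Tendsto (fun n => ∫ x, (h (φ n) x + c (φ n) * qd x) * g x) atTop (𝓝 (∫ x, v x * g x)) := by
    intro g hg hgs
    rw [hvg]
    obtain ⟨K, hK⟩ := hg.bounded_above_of_compact_support (compact_of_tsupport hgs)
    have := hlim g (MemLp.of_bound hg.aestronglyMeasurable K (Eventually.of_forall hK))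
    refine this.congr fun n => setIntegral_BB fun x hx => ?_
    rw [eq_zero_of_notMem hgs (by linarith), mul_zero]
  refine ⟨φ, v, hφ, hui.integrable_indicator measurableSet_ball, ?_, hlim', fun ζ hζ hζs => ?_⟩
  · have e1 : ∫ x, |v x| = ∫ x in BB d, |u x| := by
      rw [← integral_indicator measurableSet_ball]
      refine integral_congr_ae (Eventually.of_forall fun x => ?_)
      by_cases hx : x ∈ BB d <;> simp [hv, hx]
    rw [e1]
    have i2 : IntegrableOn (fun _ : Ed d => (1 : ℝ) / 2) (BB d) := integrableOn_const measure_ball_lt_top.ne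
    have i1 : IntegrableOn (fun x => 1 / 2 * u x ^ 2) (BB d) := hu.integrable_sq.const_mul _
    calc ∫ x in BB d, |u x| ≤ ∫ x in BB d, (1 / 2 * u x ^ 2 + 1 / 2) := by
          refine integral_mono hui.abs (i1.add i2) fun x => ?_
          change |u x| ≤ 1 / 2 * u x ^ 2 + 1 / 2
          rw [← sq_abs]
          nlinarith [sq_nonneg (|u x| - 1)]
      _ = 1 / 2 * (∫ x in BB d, u x ^ 2) + 1 / 2 * volume.real (BB d) := by
          rw [integral_add i1 i2, integral_const_mul, setIntegral_const, smul_eq_mul]; ring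
      _ ≤ _ := by linarith
  · have hζc := compact_of_tsupport hζs
    have h1 := hlim' (lap ζ) (contDiff_lap hζ).continuous
      ((closure_minimal (fun x hx => by
        by_contra h'
        exact hx (lap_eq_zero_of_notMem h')) (isClosed_tsupport ζ)).trans hζs)
    obtain ⟨K, hK⟩ := exists_C2Bd hζ hζc
    have h2 : Tendsto (fun n => ∫ x, (h (φ n) x + c (φ n) * qd x) * lap ζ x) atTop (𝓝 0) := by
      refine squeeze_zero_norm (a := fun n => e (φ n) * K) (fun n => ?_) ?_
      · rw [Real.norm_eq_abs]
        refine le_trans (le_of_eq ?_) ((H (φ n)).two K ζ hK hζs)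
        congr 1
        have i1 := integrable_lip_mul (H (φ n)).lip.continuous (contDiff_lap hζ).continuous
          (hasCompactSupport_lap hζc)
        have i2 := integrable_lip_mul (qd_contDiff (d := d)).continuous (contDiff_lap hζ).continuous
          (hasCompactSupport_lap hζc)
        have i3 : Integrable fun x => c (φ n) * (qd x * lap ζ x) := i2.const_mul _
        have e1 : ∀ x, (h (φ n) x + c (φ n) * qd x) * lap ζ x
            = h (φ n) x * lap ζ x + c (φ n) * (qd x * lap ζ x) := fun x => by ring
        simp only [e1]
        rw [integral_add i1 i3, integral_const_mul, green qd_contDiff hζ hζc]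
        simp only [qd_lap hd, one_mul]
      · simpa using (he.comp hφ.tendsto_atTop).mul_const K
    exact tendsto_nhds_unique h1 h2

/-! ### Harmonicity of the limit -/

lemma two_mul_ofReal (a : ℝ) : 2 * ENNReal.ofReal a = ENNReal.ofReal (2 * a) := by
  rw [ENNReal.ofReal_mul (by norm_num)]; simp

/-- Mollifying a corrected potential at scale `r` changes it by `O(r)` in `L²(B₁)`. -/
lemma AH.moll_close {d : ℕ} (hd : d ≠ 0) {ρ : ℝ → Ed d → ℝ} (hρ : Moll d ρ) {h : Ed d → ℝ}
    {c e M : ℝ} {L : ℝ≥0} (H : AH d h c e M L) {r : ℝ} (hr : 0 < r) (hr1 : r ≤ 1 / 4) :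
    ∫⁻ x in ball (0 : Ed d) 1, ENNReal.ofReal (((h x + c * qd x)
        - ∫ y, (h (x + y) + c * qd (x + y)) * ρ r y) ^ 2)
      ≤ ENNReal.ofReal ((2 + 8 * M ^ 2 * volume.real (ball (0 : Ed d) 1)) * r ^ 2) := by
  have hqc := (qd_contDiff (d := d)).continuous
  have hhc := H.lip.continuous
  refine moll_L2 (f := fun x => h x + c * qd x) (by fun_prop) (hρ.smooth r hr).continuous (hρ.supp r hr)
    (hρ.nonneg r hr) (hρ.int_one r hr (by linarith)) fun y hy => ?_
  calc ∫⁻ x in ball (0 : Ed d) 1, ENNReal.ofReal ((h (x + y) + c * qd (x + y) - (h x + c * qd x)) ^ 2)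
      ≤ ∫⁻ x in ball (0 : Ed d) 1, (2 * ENNReal.ofReal ((h (x + y) - h x) ^ 2)
          + ENNReal.ofReal (8 * M ^ 2 * r ^ 2)) := by
        refine setLIntegral_mono' measurableSet_ball fun x hx => ?_
        rw [two_mul_ofReal, ← ENNReal.ofReal_add (by positivity) (by positivity)]
        refine ENNReal.ofReal_le_ofReal ?_
        have h1 := qd_diff hd (mem_ball_zero_iff.1 hx).le hy (by linarith)
        have h2 : (c * (qd (x + y) - qd x)) ^ 2 ≤ M ^ 2 * (2 * r) ^ 2 := by
          rw [mul_pow, ← sq_abs c, ← sq_abs (qd (x + y) - qd x)]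
          have := H.c_le
          gcongr
        nlinarith [sq_nonneg ((h (x + y) - h x) - c * (qd (x + y) - qd x))]
    _ = 2 * (∫⁻ x in ball (0 : Ed d) 1, ENNReal.ofReal ((h (x + y) - h x) ^ 2))
          + ENNReal.ofReal (8 * M ^ 2 * r ^ 2) * volume (ball (0 : Ed d) 1) := by
        rw [lintegral_add_right _ measurable_const, lintegral_const_mul' _ _ (by simp),
          setLIntegral_const]
    _ ≤ 2 * ENNReal.ofReal (r ^ 2)
          + ENNReal.ofReal (8 * M ^ 2 * r ^ 2) * volume (ball (0 : Ed d) 1) := by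
        gcongr
        refine (translate_le H.lip y (U := ball 0 2) measurableSet_ball fun x hx t ht => ?_).trans ?_
        · rw [mem_ball_zero_iff] at hx ⊢
          have h1 := norm_add_le x (t • y)
          rw [norm_smul, Real.norm_of_nonneg ht.1.le] at h1
          have := mul_le_mul ht.2 hy (norm_nonneg y) zero_le_one
          linarith
        · calc _ ≤ ENNReal.ofReal (‖y‖ ^ 2) * 1 := by gcongr; exact H.en
            _ ≤ ENNReal.ofReal (r ^ 2) := by rw [mul_one]; gcongr
    _ = _ := by
        have : volume (ball (0 : Ed d) 1) = ENNReal.ofReal (volume.real (ball (0 : Ed d) 1)) :=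
          (ENNReal.ofReal_toReal measure_ball_lt_top.ne).symm
        rw [this, ← ENNReal.ofReal_mul (by positivity), two_mul_ofReal,
          ← ENNReal.ofReal_add (by positivity) (by positivity)]
        congr 1; ring

lemma cv_le {d : ℕ} {u g : Ed d → ℝ} {N K : ℝ} (hu : Integrable u) (hN : ∫ x, |u x| ≤ N)
    (hK : ∀ x, |g x| ≤ K) (x : Ed d) : |cv u g x| ≤ N * K := by
  have hK0 : 0 ≤ K := (abs_nonneg _).trans (hK 0)
  calc |cv u g x| ≤ ∫ y, |u y| * K := by
        rw [cv, ← Real.norm_eq_abs]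
        refine norm_integral_le_of_norm_le (hu.abs.mul_const K) (Eventually.of_forall fun y => ?_)
        rw [norm_mul, Real.norm_eq_abs, Real.norm_eq_abs]
        exact mul_le_mul_of_nonneg_left (hK _) (abs_nonneg _)
    _ = (∫ y, |u y|) * K := integral_mul_const _ _
    _ ≤ N * K := by gcongr

lemma cv_sub_le {d : ℕ} {u g : Ed d → ℝ} {N K : ℝ} (hu : Integrable u) (hN : ∫ x, |u x| ≤ N)
    (hg : Continuous g) (hc : HasCompactSupport g)
    (hK : ∀ x y, |g x - g y| ≤ K * ‖x - y‖) (x y : Ed d) (hK0 : 0 ≤ K) :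
    |cv u g x - cv u g y| ≤ N * (K * ‖x - y‖) := by
  have hi : ∀ x, Integrable fun y => u y * g (x - y) := fun x =>
    hc.convolutionExists_right (ContinuousLinearMap.mul ℝ ℝ) hu.locallyIntegrable hg x
  calc |cv u g x - cv u g y| = |∫ z, (u z * g (x - z) - u z * g (y - z))| := by
        rw [integral_sub (hi x) (hi y)]; rfl
    _ ≤ ∫ z, |u z| * (K * ‖x - y‖) := by
        rw [← Real.norm_eq_abs]
        refine norm_integral_le_of_norm_le (hu.abs.mul_const _) (Eventually.of_forall fun z => ?_)
        rw [← mul_sub, norm_mul, Real.norm_eq_abs, Real.norm_eq_abs]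
        refine mul_le_mul_of_nonneg_left ((hK _ _).trans (le_of_eq ?_)) (abs_nonneg _)
        congr 2; abel
    _ = (∫ y, |u y|) * (K * ‖x - y‖) := integral_mul_const _ _
    _ ≤ _ := by gcongr

lemma moll_shift {d : ℕ} (k g : Ed d → ℝ) (x : Ed d) :
    ∫ y, k (x + y) * g y = ∫ y, k y * g (y - x) := by
  rw [← integral_add_left_eq_self (μ := volume) (fun y => k y * g (y - x)) x]
  simp

lemma tsupport_shift {d : ℕ} {g : Ed d → ℝ} {r R : ℝ} (hg : tsupport g ⊆ closedBall 0 r) {x : Ed d}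
    (hx : ‖x‖ ≤ R) : tsupport (fun y => g (y - x)) ⊆ closedBall 0 (R + r) := by
  refine tsupport_of_zero fun y hy => image_eq_zero_of_notMem_tsupport fun h => ?_
  have h1 := mem_closedBall_zero_iff.1 (hg h)
  have h2 := norm_add_le (y - x) x
  rw [sub_add_cancel] at h2
  linarith

/-- The harmonic limit: `φ₀ = u ⋆ ρ_{1/4}` is harmonic in `B₁` and the limit of all mollifications. -/
lemma limit_harmonic {d : ℕ} {ρ : ℝ → Ed d → ℝ} (hρ : Moll d ρ) {u : Ed d → ℝ} (hu : Integrable u)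
    (h0 : ∀ ζ : Ed d → ℝ, ContDiff ℝ (⊤ : ℕ∞) ζ → tsupport ζ ⊆ CB d → ∫ x, u x * lap ζ x = 0) :
    (∀ x ∈ ball (0 : Ed d) 1, lap (cv u (ρ (1 / 4))) x = 0) ∧
      ∀ r, 0 < r → r ≤ 1 / 4 → ∀ x ∈ ball (0 : Ed d) 1,
        ∫ y, u y * ρ r (y - x) = cv u (ρ (1 / 4)) x := by
  have hs := hρ.smooth (1 / 4) (by norm_num)
  have hsup := hρ.supp (1 / 4) (by norm_num)
  have hcc : ∀ {g : Ed d → ℝ} {r : ℝ}, tsupport g ⊆ closedBall 0 r → HasCompactSupport g := fun hg =>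
    (isCompact_closedBall _ _).of_isClosed_subset (isClosed_tsupport _) hg
  have hts : ∀ {g : Ed d → ℝ} {x : Ed d}, tsupport g ⊆ closedBall 0 (1 / 4) →
      x ∈ ball (0 : Ed d) 1 → tsupport (fun y => g (y - x)) ⊆ CB d := fun hg hx =>
    (tsupport_shift hg (mem_ball_zero_iff.1 hx).le).trans (closedBall_subset_closedBall (by norm_num))
  refine ⟨fun x hx => ?_, fun r hr hr1 x hx => ?_⟩
  · rw [cv_lap hu hs (hcc hsup), cv, ← h0 (fun y => ρ (1 / 4) (y - x))
      (hs.comp (contDiff_id.sub contDiff_const)) (hts hsup hx)]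
    refine integral_congr_ae (Eventually.of_forall fun y => ?_)
    have e1 : lap (ρ (1 / 4)) (x - y) = lap (ρ (1 / 4)) (y - x) := by
      have := lap_comp_neg hs (y - x)
      rw [neg_sub] at this
      rw [← this]
      simp only [hρ.even]
    simp only [lap_comp_sub, e1]
  · obtain ⟨Z, hZ, hZs, hZl⟩ := hρ.diff r (1 / 4) hr hr1 (by norm_num)
    have h1 := h0 (fun y => Z (y - x)) (hZ.comp (contDiff_id.sub contDiff_const)) (hts hZs hx)
    simp only [lap_comp_sub, hZl, mul_sub] at h1
    have hi : ∀ r, 0 < r → Integrable fun y => u y * ρ r (y - x) := fun r hr => by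
      have := (hcc (hρ.supp r hr)).convolutionExists_right (ContinuousLinearMap.mul ℝ ℝ)
        hu.locallyIntegrable (hρ.smooth r hr).continuous x
      refine this.congr (Eventually.of_forall fun y => ?_)
      change u y * ρ r (x - y) = u y * ρ r (y - x)
      rw [← hρ.even, neg_sub]
    rw [integral_sub (hi r hr) (hi (1 / 4) (by norm_num)), sub_eq_zero] at h1
    rw [h1, cv]
    refine integral_congr_ae (Eventually.of_forall fun y => ?_)
    simp only
    rw [← hρ.even, neg_sub]

/-! ### Compactness of approximate solutions -/

/-- `φ` is smooth with `Δφ = -c` in the unit ball, and is bounded there in `C²` by `C`. -/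
structure Appr (d : ℕ) (φ : Ed d → ℝ) (c C : ℝ) : Prop where
  smooth : ContDiff ℝ (⊤ : ℕ∞) φ
  lap_eq : ∀ x ∈ ball (0 : Ed d) 1, lap φ x = -c
  bdd : ∀ x ∈ ball (0 : Ed d) 1, |φ x| ≤ C
  grad : ∀ x ∈ ball (0 : Ed d) 1, ‖gradient φ x‖ ≤ C
  lip : ∀ x ∈ ball (0 : Ed d) 1, ∀ y ∈ ball (0 : Ed d) 1,
    ‖gradient φ x - gradient φ y‖ ≤ C * ‖x - y‖

lemma norm_gradient_sub {d : ℕ} (f : Ed d → ℝ) (x y : Ed d) :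
    ‖gradient f x - gradient f y‖ = ‖fderiv ℝ f x - fderiv ℝ f y‖ := by
  rw [gradient, gradient, ← map_sub, LinearIsometryEquiv.norm_map]

lemma cv_bounds {d : ℕ} {g : Ed d → ℝ} (hg : ContDiff ℝ (⊤ : ℕ∞) g) (hc : HasCompactSupport g) :
    ∃ C : ℝ, 0 ≤ C ∧ ∀ (u : Ed d → ℝ) (N : ℝ), Integrable u → ∫ x, |u x| ≤ N →
      (∀ x, |cv u g x| ≤ N * C) ∧ (∀ x, ‖gradient (cv u g) x‖ ≤ N * C) ∧
      ∀ x y, ‖gradient (cv u g) x - gradient (cv u g) y‖ ≤ N * C * ‖x - y‖ := by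
  obtain ⟨K, hK⟩ := exists_C2Bd hg hc
  have hg' : ContDiff ℝ (⊤ : ℕ∞) (fderiv ℝ g) := hg.fderiv_right (by simp)
  obtain ⟨K₃, hK₃⟩ := ContDiff.lipschitzWith_of_hasCompactSupport (hc.fderiv (𝕜 := ℝ)) hg' (by simp)
  have hK0 := hK.nonneg
  have hK30 := K₃.coe_nonneg
  refine ⟨K + K₃, by positivity, fun u N hu hN => ?_⟩
  have hN0 : 0 ≤ N := (integral_nonneg fun x => abs_nonneg _).trans hN
  refine ⟨fun x => ?_, fun x => ?_, fun x y => ?_⟩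
  · exact (cv_le hu hN hK.bdd x).trans (by gcongr; linarith)
  · rw [norm_gradient]
    refine ContinuousLinearMap.opNorm_le_bound _ (by positivity) fun v => ?_
    rw [cv_fderiv hu hg hc, Real.norm_eq_abs]
    refine (cv_le hu hN (fun y => hK.grad y v) x).trans ?_
    rw [mul_assoc]
    gcongr
    linarith
  · rw [norm_gradient_sub]
    refine ContinuousLinearMap.opNorm_le_bound _ (by positivity) fun v => ?_
    rw [_root_.sub_apply, cv_fderiv hu hg hc, cv_fderiv hu hg hc, Real.norm_eq_abs]
    refine (cv_sub_le hu hN (contDiff_pd hg v).continuous (hasCompactSupport_pd hc v)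
      (K := K₃ * ‖v‖) (fun a b => ?_) x y (by positivity)).trans ?_
    · rw [← _root_.sub_apply, ← Real.norm_eq_abs]
      refine ((fderiv ℝ g a - fderiv ℝ g b).le_opNorm v).trans ?_
      have := hK₃.dist_le_mul a b
      rw [dist_eq_norm, dist_eq_norm] at this
      calc _ ≤ (K₃ * ‖a - b‖) * ‖v‖ := by gcongr
        _ = _ := by ring
    · calc N * (K₃ * ‖v‖ * ‖x - y‖) = N * K₃ * ‖x - y‖ * ‖v‖ := by ring
        _ ≤ _ := by gcongr; linarith

lemma moll_eq_cv {d : ℕ} {ρ : ℝ → Ed d → ℝ} (hρ : Moll d ρ) (k : Ed d → ℝ) (r : ℝ) (x : Ed d) :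
    ∫ y, k (x + y) * ρ r y = cv k (ρ r) x := by
  rw [moll_shift, cv]
  refine integral_congr_ae (Eventually.of_forall fun y => ?_)
  simp only
  rw [← hρ.even, neg_sub]

/-- Pointwise bound for mollifications of functions bounded in `L²(BB)`. -/
lemma moll_bdd {d : ℕ} {k g : Ed d → ℝ} {N K r : ℝ}
    (hk2 : MemLp k 2 (volume.restrict (BB d))) (hN : ∫ x in BB d, k x ^ 2 ≤ N)
    (hgs : tsupport g ⊆ closedBall 0 r) (hr : r ≤ 1 / 4) (hK : ∀ x, |g x| ≤ K) {x : Ed d}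
    (hx : x ∈ ball (0 : Ed d) 1) :
    |∫ y, k y * g (y - x)| ≤ (N + volume.real (BB d)) / 2 * K := by
  have hK0 : 0 ≤ K := (abs_nonneg _).trans (hK 0)
  have hx' := mem_ball_zero_iff.1 hx
  have hfin : IsFiniteMeasure (volume.restrict (BB d)) := ⟨by simpa using measure_ball_lt_top⟩
  have i1 : IntegrableOn (fun x => k x ^ 2) (BB d) := hk2.integrable_sq
  have i2 : IntegrableOn (fun _ : Ed d => (1 : ℝ)) (BB d) := integrableOn_const measure_ball_lt_top.ne
  have i3 : IntegrableOn (fun x => k x ^ 2 + 1) (BB d) := i1.add i2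
  have hz : ∀ y : Ed d, 7 / 4 ≤ ‖y‖ → k y * g (y - x) = 0 := fun y hy => by
    rw [image_eq_zero_of_notMem_tsupport (f := g), mul_zero]
    intro h
    have h1 := mem_closedBall_zero_iff.1 (hgs h)
    have h2 := norm_add_le (y - x) x
    rw [sub_add_cancel] at h2
    linarith
  rw [← setIntegral_BB hz]
  calc |∫ y in BB d, k y * g (y - x)| ≤ ∫ y in BB d, (k y ^ 2 + 1) * (1 / 2 * K) := by
        rw [← Real.norm_eq_abs]
        refine norm_integral_le_of_norm_le (i3.mul_const _) (Eventually.of_forall fun y => ?_)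
        rw [norm_mul, Real.norm_eq_abs, Real.norm_eq_abs, ← mul_assoc]
        refine mul_le_mul ?_ (hK _) (abs_nonneg _) (by positivity)
        nlinarith [sq_nonneg (|k y| - 1), sq_abs (k y)]
    _ = ((∫ y in BB d, k y ^ 2) + volume.real (BB d)) * (1 / 2 * K) := by
        rw [integral_mul_const, integral_add i1 i2, setIntegral_const, smul_eq_mul, mul_one]
    _ ≤ (N + volume.real (BB d)) * (1 / 2 * K) := by gcongr
    _ = _ := by ring

/-- Compactness: approximate solutions are `L²`-close to genuine solutions of `Δφ = -c`. -/
lemma compactA {d : ℕ} (hd : d ≠ 0) {ρ : ℝ → Ed d → ℝ} (hρ : Moll d ρ) {M : ℝ} (hM : 1 ≤ M) :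
    ∃ C2 : ℝ, 1 ≤ C2 ∧ ∀ δ : ℝ, 0 < δ → ∃ e : ℝ, 0 < e ∧ ∀ h c L, AH d h c e M L →
      ∃ φ, Appr d φ c C2 ∧
        ∫⁻ x in ball (0 : Ed d) 1, ENNReal.ofReal ((h x - φ x) ^ 2) ≤ ENNReal.ofReal δ := by
  have hcc : ∀ {g : Ed d → ℝ} {r : ℝ}, tsupport g ⊆ closedBall 0 r → HasCompactSupport g := fun hg =>
    (isCompact_closedBall _ _).of_isClosed_subset (isClosed_tsupport _) hg
  have hq : (0 : ℝ) < 1 / 4 := by norm_num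
  obtain ⟨C, hC0, hC⟩ := cv_bounds (hρ.smooth (1 / 4) hq) (hcc (hρ.supp (1 / 4) hq))
  set N1 : ℝ := (NN d M + volume.real (BB d)) / 2 with hN1
  have hN10 : 0 ≤ N1 := by rw [hN1, NN]; positivity
  refine ⟨N1 * C + 2 * M, by nlinarith [mul_nonneg hN10 hC0], fun δ hδ => ?_⟩
  by_contra hcon
  push Not at hcon
  choose h c L H hno using fun n : ℕ => hcon (1 / ((n : ℝ) + 1)) (by positivity)
  obtain ⟨σ, u, hσ, hu, huN, hlim, hweak⟩ := weak_limit hd H tendsto_one_div_add_atTop_nhds_zero_nat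
  obtain ⟨hlap, hmean⟩ := limit_harmonic hρ hu hweak
  obtain ⟨hb0, hb1, hb2⟩ := hC u N1 hu huN
  set φ₀ := cv u (ρ (1 / 4)) with hφ₀
  have hφs : ContDiff ℝ (⊤ : ℕ∞) φ₀ := cv_contDiff hu (hρ.smooth _ hq) (hcc (hρ.supp _ hq))
  have hd1 : ((d : ℝ))⁻¹ ≤ 1 := inv_le_one_of_one_le₀ (by exact_mod_cast Nat.one_le_iff_ne_zero.2 hd)
  set k : ℕ → Ed d → ℝ := fun n x => h (σ n) x + c (σ n) * qd x with hk
  have hkc : ∀ n, Continuous (k n) := fun n =>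
    (H (σ n)).lip.continuous.add (continuous_const.mul qd_contDiff.continuous)
  -- the candidate `φ₀ - c qd` is admissible, hence far from `h`
  have hfar : ∀ n, ENNReal.ofReal δ < ∫⁻ x in ball (0 : Ed d) 1, ENNReal.ofReal ((k n x - φ₀ x) ^ 2) := by
    intro n
    have hcn := (H (σ n)).c_le
    have hg : ∀ x, gradient (fun x => φ₀ x - c (σ n) * qd x) x
        = gradient φ₀ x - (c (σ n) * (d : ℝ)⁻¹) • x := by
      intro x
      refine ext_inner_right ℝ fun v => ?_
      rw [inner_gradient, fderiv_fun_sub (hφs.differentiable (by simp) x)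
        ((contDiff_const.mul qd_contDiff).differentiable (by simp) x),
        fderiv_const_mul (qd_contDiff.differentiable (by simp) x), inner_sub_left, inner_gradient,
        inner_smul_left]
      have := inner_gradient (qd (d := d)) x v
      rw [qd_gradient hd, inner_smul_left] at this
      simp only [_root_.sub_apply, _root_.smul_apply, smul_eq_mul, ← this]
      simp [mul_assoc]
    have hcd : |c (σ n) * (d : ℝ)⁻¹| ≤ M := by
      rw [abs_mul, abs_of_nonneg (by positivity : (0:ℝ) ≤ (d : ℝ)⁻¹)]
      calc _ ≤ M * 1 := by gcongr
        _ = M := mul_one M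
    have hA : Appr d (fun x => φ₀ x - c (σ n) * qd x) (c (σ n)) (N1 * C + 2 * M) := by
      refine ⟨hφs.sub (contDiff_const.mul qd_contDiff), fun x hx => ?_, fun x hx => ?_, fun x hx => ?_,
        fun x hx y hy => ?_⟩
      · rw [lap_sub hφs (contDiff_const.mul qd_contDiff), lap_const_mul qd_contDiff, qd_lap hd,
          hlap x hx]
        ring
      · refine (abs_sub _ _).trans (add_le_add (hb0 x) ?_)
        rw [abs_mul, mul_comm 2 M]
        have := qd_le hd (ball_subset_ball (by norm_num) hx)
        gcongr
      · rw [hg]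
        refine (norm_sub_le _ _).trans (add_le_add (hb1 x) ?_)
        rw [norm_smul, Real.norm_eq_abs]
        have := mem_ball_zero_iff.1 hx
        nlinarith [norm_nonneg x, abs_nonneg (c (σ n) * (d : ℝ)⁻¹)]
      · rw [hg, hg, sub_sub_sub_comm, ← smul_sub, add_mul]
        refine (norm_sub_le _ _).trans (add_le_add (hb2 x y) ?_)
        rw [norm_smul, Real.norm_eq_abs]
        gcongr
        linarith
    refine (hno (σ n) _ hA).trans_le (le_of_eq (lintegral_congr fun x => ?_))
    congr 2
    simp only [hk]; ring
  -- mollified potentials converge strongly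
  have hconv : ∀ r, 0 < r → r ≤ 1 / 4 → Tendsto (fun n => ∫⁻ x in ball (0 : Ed d) 1,
      ENNReal.ofReal ((cv (k n) (ρ r) x - φ₀ x) ^ 2)) atTop (𝓝 0) := by
    intro r hr hr1
    obtain ⟨K, hK⟩ := (hρ.smooth r hr).continuous.bounded_above_of_compact_support (hcc (hρ.supp r hr))
    have hzero : (0 : ℝ≥0∞) = ∫⁻ x in ball (0 : Ed d) 1, 0 := by simp
    rw [hzero]
    refine tendsto_lintegral_of_dominated_convergence'
      (fun _ => ENNReal.ofReal ((N1 * K + N1 * C) ^ 2)) (fun n => ?_) (fun n => ?_) ?_ ?_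
    · have : Continuous (cv (k n) (ρ r)) := by
        rw [cv_eq]
        exact (hcc (hρ.supp r hr)).continuous_convolution_right _ (hkc n).locallyIntegrable
          (hρ.smooth r hr).continuous
      exact (((this.sub hφs.continuous).pow 2).measurable.ennreal_ofReal).aemeasurable
    · filter_upwards [ae_restrict_mem measurableSet_ball] with x hx
      refine ENNReal.ofReal_le_ofReal ?_
      have h1 : |cv (k n) (ρ r) x| ≤ N1 * K := by
        rw [← moll_eq_cv hρ, moll_shift]
        exact moll_bdd ((H (σ n)).corr_l2 hd).1 ((H (σ n)).corr_l2 hd).2 (hρ.supp r hr) hr1 hK hx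
      rw [← sq_abs]
      gcongr
      exact (abs_sub _ _).trans (add_le_add h1 (hb0 x))
    · rw [setLIntegral_const]
      exact ENNReal.mul_ne_top ENNReal.ofReal_ne_top measure_ball_lt_top.ne
    · filter_upwards [ae_restrict_mem measurableSet_ball] with x hx
      have h1 := hlim (fun y => ρ r (y - x))
        ((hρ.smooth r hr).continuous.comp (continuous_id.sub continuous_const))
        ((tsupport_shift (hρ.supp r hr) (mem_ball_zero_iff.1 hx).le).trans
          (closedBall_subset_closedBall (by linarith)))
      rw [hmean r hr hr1 x hx] at h1
      have h2 : Tendsto (fun n => cv (k n) (ρ r) x) atTop (𝓝 (φ₀ x)) := by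
        refine h1.congr fun n => ?_
        rw [← moll_eq_cv hρ, moll_shift]
      have h3 := ((h2.sub_const (φ₀ x)).pow 2)
      rw [sub_self, zero_pow two_ne_zero] at h3
      simpa using ENNReal.tendsto_ofReal h3
  -- the scale `r` makes the error of mollification less than a quarter of the admissible one
  set A : ℝ := 2 + 8 * M ^ 2 * volume.real (ball (0 : Ed d) 1) with hA
  have hA0 : 0 < A := by positivity
  obtain ⟨r, hr, hr1, hrA⟩ : ∃ r : ℝ, 0 < r ∧ r ≤ 1 / 4 ∧ A * r ^ 2 ≤ δ / 8 := by
    refine ⟨min (1 / 4) (δ / (8 * A)), by positivity, min_le_left _ _, ?_⟩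
    have h1 : min (1 / 4) (δ / (8 * A)) ≤ 1 / 4 := min_le_left _ _
    have h2 : min (1 / 4) (δ / (8 * A)) ≤ δ / (8 * A) := min_le_right _ _
    have h0 : 0 < min (1 / 4) (δ / (8 * A)) := by positivity
    have h3 : A * (δ / (8 * A)) = δ / 8 := by field_simp
    nlinarith [mul_le_mul_of_nonneg_left h2 hA0.le]
  have hev := (hconv r hr hr1).eventually (gt_mem_nhds (ENNReal.ofReal_pos.2 (by positivity : 0 < δ / 8)))
  obtain ⟨n, hn⟩ := hev.exists
  refine absurd (hfar n) (not_lt.2 ?_)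
  have hmc := (H (σ n)).moll_close hd hρ hr hr1
  have hcont : Continuous (cv (k n) (ρ r)) := by
    rw [cv_eq]
    exact (hcc (hρ.supp r hr)).continuous_convolution_right _ (hkc n).locallyIntegrable
      (hρ.smooth r hr).continuous
  calc ∫⁻ x in ball (0 : Ed d) 1, ENNReal.ofReal ((k n x - φ₀ x) ^ 2)
      ≤ ∫⁻ x in ball (0 : Ed d) 1, (2 * ENNReal.ofReal ((k n x - cv (k n) (ρ r) x) ^ 2)
          + 2 * ENNReal.ofReal ((cv (k n) (ρ r) x - φ₀ x) ^ 2)) := by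
        refine lintegral_mono fun x => ?_
        simp only [two_mul_ofReal]
        rw [← ENNReal.ofReal_add (by positivity) (by positivity)]
        refine ENNReal.ofReal_le_ofReal ?_
        nlinarith [sq_nonneg ((k n x - cv (k n) (ρ r) x) - (cv (k n) (ρ r) x - φ₀ x))]
    _ = 2 * (∫⁻ x in ball (0 : Ed d) 1, ENNReal.ofReal ((k n x - cv (k n) (ρ r) x) ^ 2))
          + 2 * ∫⁻ x in ball (0 : Ed d) 1, ENNReal.ofReal ((cv (k n) (ρ r) x - φ₀ x) ^ 2) := by
        rw [lintegral_add_left, lintegral_const_mul' _ _ (by simp), lintegral_const_mul' _ _ (by simp)]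
        exact ((((hkc n).sub hcont).pow 2).measurable.ennreal_ofReal).const_mul 2
    _ ≤ 2 * ENNReal.ofReal (δ / 8) + 2 * ENNReal.ofReal (δ / 8) := by
        gcongr
        refine le_trans (le_of_eq ?_) (hmc.trans (ENNReal.ofReal_le_ofReal hrA))
        refine lintegral_congr fun x => ?_
        rw [← moll_eq_cv hρ]
    _ ≤ ENNReal.ofReal δ := by
        rw [two_mul_ofReal, ← ENNReal.ofReal_add (by positivity) (by positivity)]
        exact ENNReal.ofReal_le_ofReal (by linarith)

/-! ### Closeness of gradients -/

/-- Integrand of the part of the energy inequality for `∫ η |∇f - w|²` that depends on `f`. -/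
def PF {d : ℕ} (η : Ed d → ℝ) (w : Ed d) (c : ℝ) (f : Ed d → ℝ) (x : Ed d) : ℝ :=
  4 * (f x * fderiv ℝ η x w) + f x ^ 2 * lap η x + 2 * c * (η x * f x)

lemma PF_int {d : ℕ} {η : Ed d → ℝ} (hη : ContDiff ℝ (⊤ : ℕ∞) η) (hc : HasCompactSupport η)
    (w : Ed d) (c : ℝ) {f : Ed d → ℝ} (hf : Continuous f) :
    Integrable (PF η w c f) ∧ ∫ x, PF η w c f x = 4 * (∫ x, f x * fderiv ℝ η x w)
      + (∫ x, f x ^ 2 * lap η x) + 2 * c * (∫ x, η x * f x) := by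
  have i1 : Integrable fun x => 4 * (f x * fderiv ℝ η x w) :=
    (integrable_lip_mul hf (contDiff_pd hη w).continuous (hasCompactSupport_pd hc w)).const_mul 4
  have i2 : Integrable fun x => f x ^ 2 * lap η x :=
    integrable_lip_mul (hf.pow 2) (contDiff_lap hη).continuous (hasCompactSupport_lap hc)
  have i3 : Integrable fun x => 2 * c * (η x * f x) := by
    refine Integrable.const_mul ?_ _
    simpa only [mul_comm] using integrable_lip_mul hf hη.continuous hc
  have i12 : Integrable fun x => 4 * (f x * fderiv ℝ η x w) + f x ^ 2 * lap η x := i1.add i2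
  refine ⟨i12.add i3, ?_⟩
  simp only [PF]
  rw [integral_add i12 i3, integral_add i1 i2, integral_const_mul, integral_const_mul]

/-- For smooth solutions the functional of the energy inequality is computed by integration by parts. -/
lemma PF_smooth {d : ℕ} {η : Ed d → ℝ} (hη : ContDiff ℝ (⊤ : ℕ∞) η) (hc : HasCompactSupport η)
    (h1 : ∫ x, η x = 1) (w : Ed d) {φ : Ed d → ℝ} {c C : ℝ} (hφ : Appr d φ c C)
    (hz : ∀ x, x ∉ ball (0 : Ed d) 1 → η x = 0) :
    (∫ x, PF η w c φ x) + 2 * ‖w‖ ^ 2 = 2 * ∫ x, η x * ‖gradient φ x - w‖ ^ 2 := by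
  have hs := hφ.smooth
  have hgc : Continuous (gradient φ) :=
    (InnerProductSpace.toDual ℝ (Ed d)).symm.continuous.comp (hs.continuous_fderiv (by simp))
  have hηi : Integrable η := hη.continuous.integrable_of_hasCompactSupport hc
  have i1 : Integrable fun x => ‖gradient φ x‖ ^ 2 * η x :=
    integrable_lip_mul (hgc.norm.pow 2) hη.continuous hc
  have i2 : Integrable fun x => fderiv ℝ φ x w * η x :=
    integrable_lip_mul (contDiff_pd hs w).continuous hη.continuous hc
  have i4 : Integrable fun x => η x * φ x := by
    simpa only [mul_comm] using integrable_lip_mul hs.continuous hη.continuous hc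
  have e3 : ∫ x, φ x ^ 2 * lap η x = 2 * (∫ x, ‖gradient φ x‖ ^ 2 * η x) - 2 * c * ∫ x, η x * φ x := by
    rw [green (hs.pow 2) hη hc, ← integral_const_mul, ← integral_const_mul,
      ← integral_sub (i1.const_mul 2) (i4.const_mul (2 * c))]
    refine integral_congr_ae (Eventually.of_forall fun x => ?_)
    simp only [lap_sq hs]
    by_cases hx : x ∈ ball (0 : Ed d) 1
    · rw [hφ.lap_eq x hx]; ring
    · rw [hz x hx]; ring
  have e5 : ∫ x, η x * ‖gradient φ x - w‖ ^ 2 = (∫ x, ‖gradient φ x‖ ^ 2 * η x)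
      - 2 * (∫ x, fderiv ℝ φ x w * η x) + ‖w‖ ^ 2 := by
    have i6 : Integrable fun x => ‖gradient φ x‖ ^ 2 * η x - 2 * (fderiv ℝ φ x w * η x) :=
      i1.sub (i2.const_mul 2)
    rw [← mul_one (‖w‖ ^ 2), ← h1, ← integral_const_mul, ← integral_const_mul,
      ← integral_sub i1 (i2.const_mul 2), ← integral_add i6 (hηi.const_mul _)]
    refine integral_congr_ae (Eventually.of_forall fun x => ?_)
    simp only
    rw [norm_sub_sq_real, inner_gradient]; ring
  rw [(PF_int hη hc w c hs.continuous).2, ibp_smooth hs hη hc, e3, e5]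
  ring

/-- The approximate energy inequality, with the square `|∇h - w|²` completed. -/
lemma PF_lip {d : ℕ} {η : Ed d → ℝ} {K : ℝ} (hη : C2Bd K η) (hc : tsupport η ⊆ CB d)
    (h0 : ∀ x, 0 ≤ η x) (h1 : ∫ x, η x = 1) {w : Ed d} {h : Ed d → ℝ} {c e M : ℝ} {L : ℝ≥0}
    (H : AH d h c e M L) (hw : e * ‖w‖ ≤ 1) :
    Integrable (fun x => η x * ‖gradient h x - w‖ ^ 2) ∧
    ∫ x, η x * ‖gradient h x - w‖ ^ 2 ≤ (∫ x, PF η w c h x) + 2 * ‖w‖ ^ 2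
      + 2 * e * K * (1 + ‖w‖ ^ 2) := by
  have hcs := compact_of_tsupport hc
  have hs := hη.smooth
  have hηi : Integrable η := hs.continuous.integrable_of_hasCompactSupport hcs
  have i1 : Integrable fun x => η x * ‖gradient h x‖ ^ 2 := by
    refine hηi.mul_bdd (c := (L : ℝ) ^ 2)
      (((measurable_gradient h).norm.pow_const 2).aestronglyMeasurable)
      (Eventually.of_forall fun x => ?_)
    rw [Real.norm_eq_abs, abs_pow, abs_norm]
    gcongr
    exact norm_gradient_le H.lip x
  have i2 : Integrable fun x => fderiv ℝ h x w * η x :=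
    integrable_fderiv_mul H.lip hs.continuous hcs w
  have i6 : Integrable fun x => η x * ‖gradient h x‖ ^ 2 - 2 * (fderiv ℝ h x w * η x) :=
    i1.sub (i2.const_mul 2)
  have i7 : Integrable fun x => η x * ‖gradient h x‖ ^ 2 - 2 * (fderiv ℝ h x w * η x)
      + ‖w‖ ^ 2 * η x := i6.add (hηi.const_mul _)
  have heq : (fun x => η x * ‖gradient h x - w‖ ^ 2) = fun x => η x * ‖gradient h x‖ ^ 2
      - 2 * (fderiv ℝ h x w * η x) + ‖w‖ ^ 2 * η x := by
    funext x
    rw [norm_sub_sq_real, inner_gradient]; ring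
  refine ⟨heq ▸ i7, ?_⟩
  rw [heq, integral_add i6 (hηi.const_mul _), integral_sub i1 (i2.const_mul 2), integral_const_mul,
    integral_const_mul, ibp_lip H.lip hs hcs, h1, (PF_int hs hcs w c H.lip.continuous).2]
  have := H.three K η hη hc h0 w hw
  rw [h1] at this
  linarith

/-- The functional of the energy inequality changes little between `L²`-close functions. -/
lemma PF_err {d : ℕ} {η : Ed d → ℝ} {K K' κ : ℝ} (hη : C2Bd K η) (hcs : HasCompactSupport η)
    (hlap : ∀ x, |lap η x| ≤ K') (hz : ∀ x, x ∉ ball (0 : Ed d) 1 → x ∉ tsupport η)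
    {h φ : Ed d → ℝ} {c C M : ℝ} (hh : Continuous h) (hφ : Appr d φ c C) {w : Ed d}
    (hw : ‖w‖ ≤ C) (hc : |c| ≤ M) (hκ : 0 < κ) (hκ1 : κ ≤ 1)
    (hδ : ∫⁻ x in ball (0 : Ed d) 1, ENNReal.ofReal ((h x - φ x) ^ 2) ≤ ENNReal.ofReal (κ ^ 2)) :
    ∫ x, PF η w c h x ≤ (∫ x, PF η w c φ x)
      + (4 * (K * C) + 2 * C * K' + K' + 2 * M * K) * (κ * (volume.real (ball (0 : Ed d) 1) + 2)) := by
  set A := 4 * (K * C) + 2 * C * K' + K' + 2 * M * K with hA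
  have hK := hη.nonneg
  have hK' : 0 ≤ K' := (abs_nonneg _).trans (hlap 0)
  have hC : 0 ≤ C := (norm_nonneg _).trans hw
  have hM : 0 ≤ M := (abs_nonneg _).trans hc
  have hA0 : 0 ≤ A := by positivity
  have hφc := hφ.smooth.continuous
  have j1 := PF_int hη.smooth hcs w c hh
  have j2 := PF_int hη.smooth hcs w c hφc
  have hg2 : IntegrableOn (fun x => (h x - φ x) ^ 2) (ball (0 : Ed d) 1) :=
    (((hh.sub hφc).pow 2).continuousOn.integrableOn_compact (isCompact_closedBall 0 1)).mono_set
      ball_subset_closedBall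
  have hg2' : ∫ x in ball (0 : Ed d) 1, (h x - φ x) ^ 2 ≤ κ ^ 2 := by
    rw [integral_eq_lintegral_of_nonneg_ae (Eventually.of_forall fun x => by positivity)
      hg2.aestronglyMeasurable]
    exact ENNReal.toReal_le_of_le_ofReal (by positivity) hδ
  have hk1 : IntegrableOn (fun _ : Ed d => κ) (ball (0 : Ed d) 1) :=
    integrableOn_const measure_ball_lt_top.ne
  have hk2 : IntegrableOn (fun x => 2 / κ * (h x - φ x) ^ 2) (ball (0 : Ed d) 1) := hg2.const_mul _
  have hk3 : IntegrableOn (fun x => κ + 2 / κ * (h x - φ x) ^ 2) (ball (0 : Ed d) 1) := hk1.add hk2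
  have hzero : ∀ x, x ∉ ball (0 : Ed d) 1 → PF η w c h x - PF η w c φ x = 0 := fun x hx => by
    have h1 := hz x hx
    have h2 : fderiv ℝ η x w = 0 := image_eq_zero_of_notMem_tsupport
      (f := fun x => fderiv ℝ η x w) fun h => h1 (tsupport_pd η w h)
    simp only [PF, image_eq_zero_of_notMem_tsupport h1, lap_eq_zero_of_notMem h1, h2]
    ring
  have key : (∫ x, PF η w c h x) - ∫ x, PF η w c φ x
      ≤ A * (κ * (volume.real (ball (0 : Ed d) 1) + 2)) := by
    rw [← integral_sub j1.1 j2.1, ← setIntegral_eq_integral_of_forall_compl_eq_zero hzero]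
    calc ∫ x in ball (0 : Ed d) 1, (PF η w c h x - PF η w c φ x)
        ≤ ∫ x in ball (0 : Ed d) 1, A * (κ + 2 / κ * (h x - φ x) ^ 2) := by
          refine setIntegral_mono_on (j1.1.sub j2.1).integrableOn (hk3.const_mul A)
            measurableSet_ball fun x hx => ?_
          set g := h x - φ x with hg
          have hb := hφ.bdd x hx
          have e0 : PF η w c h x - PF η w c φ x = 4 * (g * fderiv ℝ η x w)
              + (2 * φ x * g + g ^ 2) * lap η x + 2 * c * (η x * g) := by
            simp only [PF, hg]; ring
          have b1 : |fderiv ℝ η x w| ≤ K * C := (hη.grad x w).trans (by gcongr)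
          have b2 := hlap x
          have b3 := hη.bdd x
          have t1 : g * fderiv ℝ η x w ≤ |g| * (K * C) :=
            (le_abs_self _).trans (by rw [abs_mul]; gcongr)
          have t2 : (2 * φ x * g + g ^ 2) * lap η x ≤ (2 * C * |g| + g ^ 2) * K' := by
            refine (le_abs_self _).trans ?_
            rw [abs_mul]
            gcongr
            refine (abs_add_le _ _).trans ?_
            rw [abs_mul, abs_mul, abs_two, abs_of_nonneg (sq_nonneg g)]
            gcongr
          have t3 : c * (η x * g) ≤ M * (K * |g|) := by
            refine (le_abs_self _).trans ?_
            rw [abs_mul, abs_mul]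
            gcongr
          have t4 : |g| + g ^ 2 ≤ κ + 2 / κ * g ^ 2 := by
            have : |g| ≤ κ + 1 / κ * g ^ 2 := by
              have e : κ + 1 / κ * g ^ 2 - |g| = 1 / κ * ((κ - |g| / 2) ^ 2 + 3 / 4 * |g| ^ 2) := by
                rw [← sq_abs g]; field_simp; ring
              have : 0 ≤ κ + 1 / κ * g ^ 2 - |g| := by rw [e]; positivity
              linarith
            have h1 : 1 ≤ 1 / κ := by rw [le_div_iff₀ hκ]; linarith
            have : 2 / κ * g ^ 2 = 1 / κ * g ^ 2 + 1 / κ * g ^ 2 := by ring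
            nlinarith [sq_nonneg g]
          rw [e0]
          calc _ ≤ 4 * (|g| * (K * C)) + (2 * C * |g| + g ^ 2) * K' + 2 * (M * (K * |g|)) := by
                linarith
            _ ≤ A * (|g| + g ^ 2) := by
                have a1 : 0 ≤ K' * |g| := by positivity
                have a2 : 0 ≤ (4 * (K * C) + 2 * C * K' + 2 * M * K) * g ^ 2 := by positivity
                rw [hA]; nlinarith
            _ ≤ _ := by gcongr
      _ = A * (κ * volume.real (ball (0 : Ed d) 1) + 2 / κ * ∫ x in ball (0 : Ed d) 1, (h x - φ x) ^ 2) := by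
          rw [integral_const_mul, integral_add hk1 hk2, setIntegral_const, integral_const_mul,
            smul_eq_mul, mul_comm κ]
      _ ≤ A * (κ * volume.real (ball (0 : Ed d) 1) + 2 / κ * κ ^ 2) := by gcongr
      _ = _ := by field_simp
  linarith

/-- Local energy estimate at a point: `∇h` is close to `∇φ` on average over `B_r(x₀)`. -/
lemma pointB {d : ℕ} {ρ : ℝ → Ed d → ℝ} (hρ : Moll d ρ) {r K K' κ : ℝ} (hr : 0 < r) (hr1 : r ≤ 1 / 8)
    (hη : C2Bd K (ρ r)) (hlap : ∀ x, |lap (ρ r) x| ≤ K') {h φ : Ed d → ℝ} {c C e M : ℝ} {L : ℝ≥0}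
    (H : AH d h c e M L) (hφ : Appr d φ c C) (he0 : 0 < e) (he : e * C ≤ 1) (hκ : 0 < κ) (hκ1 : κ ≤ 1)
    (hδ : ∫⁻ x in ball (0 : Ed d) 1, ENNReal.ofReal ((h x - φ x) ^ 2) ≤ ENNReal.ofReal (κ ^ 2))
    {x₀ : Ed d} (hx₀ : x₀ ∈ ball (0 : Ed d) (7 / 8)) :
    ∫⁻ x, ENNReal.ofReal (ρ r (x - x₀) * ‖gradient h x - gradient φ x‖ ^ 2) ≤
      ENNReal.ofReal (6 * (C * r) ^ 2 + 2 * ((4 * (K * C) + 2 * C * K' + K' + 2 * M * K)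
        * (κ * (volume.real (ball (0 : Ed d) 1) + 2))) + 4 * e * K * (1 + C ^ 2)) := by
  have hx1 : x₀ ∈ ball (0 : Ed d) 1 := ball_subset_ball (by norm_num) hx₀
  have hx₀' := mem_ball_zero_iff.1 hx₀
  set w := gradient φ x₀ with hw
  set η : Ed d → ℝ := fun x => ρ r (x - x₀) with hηd
  have hwC : ‖w‖ ≤ C := hφ.grad x₀ hx1
  have hC0 : 0 ≤ C := (norm_nonneg _).trans hwC
  have hηC : C2Bd K η := hη.translate x₀
  have hK := hη.nonneg
  have hsup : tsupport η ⊆ closedBall 0 (‖x₀‖ + r) := tsupport_shift (hρ.supp r hr) le_rfl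
  have hsCB : tsupport η ⊆ CB d := hsup.trans (closedBall_subset_closedBall (by linarith))
  have hcs := compact_of_tsupport hsCB
  have hz : ∀ x, x ∉ ball (0 : Ed d) 1 → x ∉ tsupport η := fun x hx hx' => hx <| by
    have := mem_closedBall_zero_iff.1 (hsup hx')
    rw [mem_ball_zero_iff]; linarith
  have h0 : ∀ x, 0 ≤ η x := fun x => hρ.nonneg r hr _
  have h1 : ∫ x, η x = 1 := by
    rw [hηd, integral_sub_right_eq_self (fun x => ρ r x) x₀]
    exact hρ.int_one r hr (by linarith)
  have hlapη : ∀ x, |lap η x| ≤ K' := fun x => by rw [hηd, lap_comp_sub]; exact hlap _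
  obtain ⟨iB, hB⟩ := PF_lip hηC hsCB h0 h1 H (w := w)
    ((mul_le_mul_of_nonneg_left hwC he0.le).trans he)
  have hE := PF_err hηC hcs hlapη hz H.lip.continuous hφ hwC H.c_le hκ hκ1 hδ
  have hS := PF_smooth hηC.smooth hcs h1 w hφ fun x hx => image_eq_zero_of_notMem_tsupport (hz x hx)
  have hgc : Continuous (gradient φ) :=
    (InnerProductSpace.toDual ℝ (Ed d)).symm.continuous.comp (hφ.smooth.continuous_fderiv (by simp))
  have iφ : Integrable fun x => η x * ‖gradient φ x - w‖ ^ 2 := by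
    have hc1 : Continuous fun x => ‖gradient φ x - w‖ ^ 2 := by fun_prop
    have := integrable_lip_mul hc1 hηC.smooth.continuous hcs
    simpa only [mul_comm] using this
  have hηi : Integrable η := hηC.smooth.continuous.integrable_of_hasCompactSupport hcs
  have hφw : ∫ x, η x * ‖gradient φ x - w‖ ^ 2 ≤ (C * r) ^ 2 := by
    calc _ ≤ ∫ x, η x * (C * r) ^ 2 := by
          refine integral_mono iφ (hηi.mul_const _) fun x => ?_
          simp only
          by_cases hx : x ∈ tsupport η
          · have hxb : x ∈ ball (0 : Ed d) 1 := by by_contra hx'; exact hz x hx' hx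
            by_cases hx2 : ‖x - x₀‖ ≤ r
            · have := (hφ.lip x hxb x₀ hx1).trans (mul_le_mul_of_nonneg_left hx2 hC0)
              have h0 := h0 x
              gcongr
            · have : η x = 0 := image_eq_zero_of_notMem_tsupport (f := ρ r) fun h =>
                hx2 (mem_closedBall_zero_iff.1 (hρ.supp r hr h))
              rw [this]; simp
          · rw [image_eq_zero_of_notMem_tsupport hx]; simp
      _ = (C * r) ^ 2 := by rw [integral_mul_const, h1, one_mul]
  calc ∫⁻ x, ENNReal.ofReal (ρ r (x - x₀) * ‖gradient h x - gradient φ x‖ ^ 2)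
      ≤ ∫⁻ x, ENNReal.ofReal (2 * (η x * ‖gradient h x - w‖ ^ 2) + 2 * (η x * ‖gradient φ x - w‖ ^ 2)) := by
        refine lintegral_mono fun x => ENNReal.ofReal_le_ofReal ?_
        have t : ‖gradient h x - gradient φ x‖ ≤ ‖gradient h x - w‖ + ‖gradient φ x - w‖ := by
          rw [← sub_sub_sub_cancel_right _ _ w]; exact norm_sub_le _ _
        have t2 : ‖gradient h x - gradient φ x‖ ^ 2
            ≤ 2 * ‖gradient h x - w‖ ^ 2 + 2 * ‖gradient φ x - w‖ ^ 2 := by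
          refine (pow_le_pow_left₀ (norm_nonneg _) t 2).trans ?_
          nlinarith [sq_nonneg (‖gradient h x - w‖ - ‖gradient φ x - w‖)]
        calc _ ≤ η x * (2 * ‖gradient h x - w‖ ^ 2 + 2 * ‖gradient φ x - w‖ ^ 2) :=
              mul_le_mul_of_nonneg_left t2 (h0 x)
          _ = _ := by ring
    _ = ENNReal.ofReal (∫ x, (2 * (η x * ‖gradient h x - w‖ ^ 2)
          + 2 * (η x * ‖gradient φ x - w‖ ^ 2))) := by
        refine (ofReal_integral_eq_lintegral_ofReal ((iB.const_mul 2).add (iφ.const_mul 2))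
          (Eventually.of_forall fun x => ?_)).symm
        have h2 : ∀ a : ℝ, 0 ≤ 2 * (η x * a ^ 2) := fun a =>
          mul_nonneg zero_le_two (mul_nonneg (h0 x) (sq_nonneg a))
        exact add_nonneg (h2 _) (h2 _)
    _ ≤ _ := by
        refine ENNReal.ofReal_le_ofReal ?_
        rw [integral_add (iB.const_mul 2) (iφ.const_mul 2), integral_const_mul, integral_const_mul]
        have : 2 * e * K * (1 + ‖w‖ ^ 2) ≤ 2 * e * K * (1 + C ^ 2) := by gcongr
        linarith

/-- The gradients are `L²`-close in `B_{3/4}` as soon as the functions are in `B₁`. -/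
lemma gradClose {d : ℕ} {ρ : ℝ → Ed d → ℝ} (hρ : Moll d ρ) {M C : ℝ} (hM : 1 ≤ M) (hC : 1 ≤ C)
    {τ : ℝ} (hτ : 0 < τ) : ∃ δ e₀ : ℝ, 0 < δ ∧ 0 < e₀ ∧ ∀ h φ c e L, 0 < e → e ≤ e₀ →
      AH d h c e M L → Appr d φ c C →
      ∫⁻ x in ball (0 : Ed d) 1, ENNReal.ofReal ((h x - φ x) ^ 2) ≤ ENNReal.ofReal δ →
      ∫⁻ x in ball (0 : Ed d) (3 / 4), ENNReal.ofReal (‖gradient h x - gradient φ x‖ ^ 2)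
        ≤ ENNReal.ofReal τ := by
  set V := volume.real (ball (0 : Ed d) 1) with hV
  have hV0 : 0 ≤ V := measureReal_nonneg
  obtain ⟨r, hr, hr1, hrτ⟩ : ∃ r : ℝ, 0 < r ∧ r ≤ 1 / 8 ∧ 6 * (C * r) ^ 2 * V ≤ τ / 3 := by
    refine ⟨min (1 / 8) (τ / (18 * C ^ 2 * (V + 1))), by positivity, min_le_left _ _, ?_⟩
    set r := min (1 / 8) (τ / (18 * C ^ 2 * (V + 1))) with hr
    have h0 : 0 < r := by positivity
    have h1 : r ≤ 1 := (min_le_left _ _).trans (by norm_num)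
    have h2 : r * (18 * C ^ 2 * (V + 1)) ≤ τ := (le_div_iff₀ (by positivity)).1 (min_le_right _ _)
    have h3 : (C * r) ^ 2 * V ≤ C ^ 2 * r * (V + 1) := by
      rw [mul_pow]
      gcongr
      · nlinarith
      · linarith
    nlinarith
  have hcs : HasCompactSupport (ρ r) :=
    (isCompact_closedBall _ _).of_isClosed_subset (isClosed_tsupport _) (hρ.supp r hr)
  obtain ⟨K, hK⟩ := exists_C2Bd (hρ.smooth r hr) hcs
  obtain ⟨K', hK'⟩ := (contDiff_lap (hρ.smooth r hr)).continuous.bounded_above_of_compact_support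
    (hasCompactSupport_lap hcs)
  have hK0 := hK.nonneg
  have hK'0 : 0 ≤ K' := (norm_nonneg _).trans (hK' 0)
  set A := 4 * (K * C) + 2 * C * K' + K' + 2 * M * K with hA
  have hA0 : 0 ≤ A := by positivity
  set κ := min 1 (τ / (6 * (A + 1) * (V + 2) * (V + 1))) with hκd
  have hκ : 0 < κ := by positivity
  have hκ1 : κ ≤ 1 := min_le_left _ _
  have hκ2 : 2 * (A * (κ * (V + 2))) * V ≤ τ / 3 := by
    have h2 : κ * (6 * (A + 1) * (V + 2) * (V + 1)) ≤ τ :=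
      (le_div_iff₀ (by positivity)).1 (min_le_right _ _)
    have h3 : (A * (κ * (V + 2))) * V ≤ ((A + 1) * (κ * (V + 2))) * (V + 1) := by
      gcongr <;> linarith
    nlinarith
  set e₀ := min (1 / C) (τ / (12 * (K + 1) * (1 + C ^ 2) * (V + 1))) with he₀
  have he₀0 : 0 < e₀ := by positivity
  refine ⟨κ ^ 2, e₀, by positivity, he₀0, fun h φ c e L he hee H hφ hδ => ?_⟩
  have heC : e * C ≤ 1 := (le_div_iff₀ (by positivity)).1 (hee.trans (min_le_left _ _))
  have he2 : 4 * e * K * (1 + C ^ 2) * V ≤ τ / 3 := by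
    have h2 : e * (12 * (K + 1) * (1 + C ^ 2) * (V + 1)) ≤ τ :=
      (le_div_iff₀ (by positivity)).1 (hee.trans (min_le_right _ _))
    have h3 : e * K * (1 + C ^ 2) * V ≤ e * (K + 1) * (1 + C ^ 2) * (V + 1) := by
      gcongr <;> linarith
    nlinarith
  set R := 6 * (C * r) ^ 2 + 2 * (A * (κ * (V + 2))) + 4 * e * K * (1 + C ^ 2) with hR
  have hR0 : 0 ≤ R := by positivity
  set G : Ed d → ℝ := fun x => ‖gradient h x - gradient φ x‖ ^ 2 with hG
  have hGm : Measurable G := ((measurable_gradient h).sub (measurable_gradient φ)).norm.pow_const 2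
  have hρm : Measurable (ρ r) := (hρ.smooth r hr).continuous.measurable
  have hi : Integrable (ρ r) := (hρ.smooth r hr).continuous.integrable_of_hasCompactSupport hcs
  have hmass : ∫⁻ y, ENNReal.ofReal (ρ r y) = 1 := by
    rw [← ofReal_integral_eq_lintegral_ofReal hi (Eventually.of_forall (hρ.nonneg r hr)),
      hρ.int_one r hr (by linarith), ENNReal.ofReal_one]
  calc ∫⁻ x in ball (0 : Ed d) (3 / 4), ENNReal.ofReal (G x)
      ≤ ∫⁻ x in ball (0 : Ed d) (3 / 4), ∫⁻ y in ball (0 : Ed d) (7 / 8),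
          ENNReal.ofReal (ρ r (x - y) * G x) := by
        refine setLIntegral_mono' measurableSet_ball fun x hx => ?_
        have hx' := mem_ball_zero_iff.1 hx
        have e1 : ∫⁻ y in ball (0 : Ed d) (7 / 8), ENNReal.ofReal (ρ r (x - y)) = 1 := by
          rw [setLIntegral_eq_of_support_subset, lintegral_sub_left_eq_self
            (fun y => ENNReal.ofReal (ρ r y)) x, hmass]
          intro y hy
          have h1 : x - y ∈ tsupport (ρ r) := by
            by_contra h2
            exact hy (by simp [image_eq_zero_of_notMem_tsupport h2])
          have h2 := mem_closedBall_zero_iff.1 (hρ.supp r hr h1)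
          have h3 := norm_sub_le x (x - y)
          rw [sub_sub_cancel] at h3
          rw [mem_ball_zero_iff]; linarith
        simp only [fun y => ENNReal.ofReal_mul (q := G x) (hρ.nonneg r hr (x - y))]
        rw [lintegral_mul_const' _ _ ENNReal.ofReal_ne_top, e1, one_mul]
    _ = ∫⁻ y in ball (0 : Ed d) (7 / 8), ∫⁻ x in ball (0 : Ed d) (3 / 4),
          ENNReal.ofReal (ρ r (x - y) * G x) := by
        refine lintegral_lintegral_swap (Measurable.aemeasurable ?_)
        exact ((hρm.comp (measurable_fst.sub measurable_snd)).mul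
          (hGm.comp measurable_fst)).ennreal_ofReal
    _ ≤ ∫⁻ y in ball (0 : Ed d) (7 / 8), ENNReal.ofReal R := by
        refine setLIntegral_mono' measurableSet_ball fun y hy => ?_
        exact (setLIntegral_le_lintegral _ _).trans
          (pointB hρ hr hr1 hK hK' H hφ he heC hκ hκ1 hδ hy)
    _ = ENNReal.ofReal R * volume (ball (0 : Ed d) (7 / 8)) := setLIntegral_const _ _
    _ ≤ ENNReal.ofReal R * volume (ball (0 : Ed d) 1) := by
        gcongr; norm_num
    _ = ENNReal.ofReal (R * V) := by
        rw [ENNReal.ofReal_mul hR0, hV, Measure.real, ENNReal.ofReal_toReal measure_ball_lt_top.ne]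
    _ ≤ ENNReal.ofReal τ := by
        refine ENNReal.ofReal_le_ofReal ?_
        rw [hR]; nlinarith

/-! ### Reduction of the theorem to closeness of gradients -/

lemma AH.mono {d : ℕ} {h : Ed d → ℝ} {c e e' M : ℝ} {L : ℝ≥0} (H : AH d h c e M L) (he : e ≤ e') :
    AH d h c e' M L where
  lip := H.lip
  bdd := H.bdd
  c_le := H.c_le
  en := H.en
  l2 := H.l2
  two K ζ hζ hs := (H.two K ζ hζ hs).trans (mul_le_mul_of_nonneg_right he hζ.nonneg)
  three K η hη hs h0 w hw := by
    have h1 := H.three K η hη hs h0 w ((mul_le_mul_of_nonneg_right he (norm_nonneg w)).trans hw)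
    have h2 : e * K * (1 + ‖w‖ ^ 2) ≤ e' * K * (1 + ‖w‖ ^ 2) := by
      have := hη.nonneg
      gcongr
    linarith

lemma pd_pd {d : ℕ} {f : Ed d → ℝ} (hf : ContDiff ℝ (⊤ : ℕ∞) f) (x v w : Ed d) :
    fderiv ℝ (fun y => fderiv ℝ f y v) x w = fderiv ℝ (fderiv ℝ f) x w v := by
  have h1 : DifferentiableAt ℝ (fderiv ℝ f) x :=
    (hf.fderiv_right (m := (⊤ : ℕ∞)) (by simp)).differentiable (by simp) x
  rw [fderiv_clm_apply h1 (differentiableAt_const v)]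
  simp

lemma pd_comm {d : ℕ} {f : Ed d → ℝ} (hf : ContDiff ℝ (⊤ : ℕ∞) f) (x v w : Ed d) :
    fderiv ℝ (fun y => fderiv ℝ f y v) x w = fderiv ℝ (fun y => fderiv ℝ f y w) x v := by
  rw [pd_pd hf, pd_pd hf]
  exact (hf.contDiffAt.isSymmSndFDerivAt (by
    rw [minSmoothness_of_isRCLikeNormedField]; exact WithTop.coe_le_coe.2 le_top)).eq w v

lemma lap_pd {d : ℕ} {f : Ed d → ℝ} (hf : ContDiff ℝ (⊤ : ℕ∞) f) (x v : Ed d) :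
    lap (fun y => fderiv ℝ f y v) x = fderiv ℝ (lap f) x v := by
  have hl : lap f = fun y => ∑ i : Fin d, fderiv ℝ (fun z => fderiv ℝ f z (ee i)) y (ee i) := rfl
  rw [hl, fderiv_fun_sum fun i _ => (contDiff_pd (contDiff_pd hf _) _).differentiable (by simp) x,
    _root_.sum_apply]
  refine Finset.sum_congr rfl fun i _ => ?_
  have h1 : (fun y => fderiv ℝ (fun z => fderiv ℝ f z v) y (ee i))
      = fun y => fderiv ℝ (fun z => fderiv ℝ f z (ee i)) y v := by
    funext y; exact pd_comm hf y v (ee i)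
  have h2 := pd_comm (contDiff_pd hf (ee i)) x v (ee i)
  rw [h1, h2]

/-- A smooth function with constant Laplacian has harmonic gradient. -/
lemma gradHarmonic_of_lap {d : ℕ} {f : Ed d → ℝ} (hf : ContDiff ℝ (⊤ : ℕ∞) f) {a : ℝ}
    (ha : ∀ x ∈ ball (0 : Ed d) 1, lap f x = a) : GradHarmonicOn f (ball (0 : Ed d) 1) := by
  refine ⟨hf.contDiffOn, fun i => ?_⟩
  have h1 : (fun y => gradient f y i) = fun y => fderiv ℝ f y (ee i) := by
    funext y; exact gradient_apply f y i
  rw [h1]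
  refine ⟨(contDiff_pd hf _).contDiffOn, fun x hx => ?_⟩
  rw [lap_pd hf]
  have h2 : lap f =ᶠ[𝓝 x] fun _ => a := by
    filter_upwards [isOpen_ball.mem_nhds hx] with y hy using ha y hy
  rw [h2.fderiv_eq]
  simp

/-- Trajectories visiting `B_{1/2}` start in `B_{3/4}`, which reduces the Eulerian quantity to an
integral over `B_{3/4}`. -/
lemma euler_le {d : ℕ} {Ω : Set (Ed d)} {T : Ed d → Ed d} {ψ φ : Ed d → ℝ} {G : Ed d → ℝ}
    (hΩm : MeasurableSet Ω) (hΩ : ball (0 : Ed d) 2 ⊆ Ω) (hTm : Measurable T)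
    (hsg : ∀ᵐ x ∂(volume.restrict Ω), IsSub ψ T x) (hE : Elin T < thr d (1 / 80))
    (hG : ∀ t ∈ Ioo (0 : ℝ) 1, ∀ x ∈ ball (0 : Ed d) (3 / 4), Tt T t x ∈ ball (0 : Ed d) (1 / 2) →
      ‖(T x - x) - gradient φ (Tt T t x)‖ ^ 2 ≤ G x) :
    eulerDefect Ω T φ (ball (0 : Ed d) (1 / 2))
      ≤ ∫⁻ x in ball (0 : Ed d) (3 / 4), ENNReal.ofReal (G x) := by
  have hge := inner_ge_of_norm_ge hΩ hsg (R₁ := 1 / 2) (R₂ := 3 / 4) (by norm_num)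
    (by norm_num : (0 : ℝ) < 1 / 80) (by norm_num) (by norm_num) hE
  have hin : ∀ t ∈ Ioo (0 : ℝ) 1, ∫⁻ x in Ω ∩ (Tt T t) ⁻¹' ball (0 : Ed d) (1 / 2),
      ENNReal.ofReal (‖(T x - x) - gradient φ (Tt T t x)‖ ^ 2)
      ≤ ∫⁻ x in ball (0 : Ed d) (3 / 4), ENNReal.ofReal (G x) := by
    intro t ht
    set A := Ω ∩ (Tt T t) ⁻¹' ball (0 : Ed d) (1 / 2) with hA
    have hAm : MeasurableSet A := by
      refine hΩm.inter (measurableSet_ball.preimage ?_)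
      exact (measurable_id.const_smul (1 - t)).add (hTm.const_smul t)
    have hae : A =ᵐ[volume] (A ∩ ball (0 : Ed d) (3 / 4) : Set (Ed d)) := by
      filter_upwards [(ae_restrict_iff' hΩm).1 hsg] with x hx
      refine propext ⟨fun hxA => ⟨hxA, ?_⟩, fun h => h.1⟩
      rw [mem_ball_zero_iff]
      by_contra hcon
      push Not at hcon
      have h1 := hge x hcon (hx hxA.1)
      have h2 : ‖Tt T t x‖ < 1 / 2 := mem_ball_zero_iff.1 hxA.2
      have h3 := real_inner_le_norm (Tt T t x) x
      have h4 : ⟪Tt T t x, x⟫ = (1 - t) * ‖x‖ ^ 2 + t * ⟪T x, x⟫ := by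
        rw [Tt, inner_add_left, inner_smul_left, inner_smul_left, real_inner_self_eq_norm_sq]; simp
      have h5 : ‖Tt T t x‖ * ‖x‖ < 1 / 2 * ‖x‖ := by
        have : 0 < ‖x‖ := by linarith
        gcongr
      have h6 : (1 - t) * (1 / 2 * ‖x‖) ≤ (1 - t) * ‖x‖ ^ 2 := by
        refine mul_le_mul_of_nonneg_left ?_ (by linarith [ht.2])
        nlinarith
      have h7 := mul_le_mul_of_nonneg_left h1 ht.1.le
      nlinarith
    rw [setLIntegral_congr hae]
    calc _ ≤ ∫⁻ x in A ∩ ball (0 : Ed d) (3 / 4), ENNReal.ofReal (G x) :=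
          setLIntegral_mono' (hAm.inter measurableSet_ball) fun x hx =>
            ENNReal.ofReal_le_ofReal (hG t ht x hx.2 hx.1.2)
      _ ≤ _ := lintegral_mono_set inter_subset_right
  calc eulerDefect Ω T φ (ball (0 : Ed d) (1 / 2))
      ≤ ∫⁻ t in Ioo (0 : ℝ) 1, ∫⁻ x in ball (0 : Ed d) (3 / 4), ENNReal.ofReal (G x) :=
        setLIntegral_mono' measurableSet_Ioo hin
    _ = _ := by simp

/-- The case in which the zero potential suffices. -/
lemma zero_case {d : ℕ} {Ω : Set (Ed d)} {T : Ed d → Ed d} {ψ : Ed d → ℝ}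
    (hΩm : MeasurableSet Ω) (hΩ : ball (0 : Ed d) 2 ⊆ Ω) (hTm : Measurable T)
    (hsg : ∀ᵐ x ∂(volume.restrict Ω), IsSub ψ T x) (hE : Elin T < thr d (1 / 80)) {X Y : ℝ≥0∞}
    (hX : Elin T ≤ X) :
    ∃ φ : Ed d → ℝ, GradHarmonicOn φ (ball (0 : Ed d) 1) ∧
      eulerDefect Ω T φ (ball (0 : Ed d) (1 / 2)) ≤ X ∧
      (∫⁻ x in ball (0 : Ed d) 1, ENNReal.ofReal (‖gradient φ x‖ ^ 2)) ≤ Y := by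
  have hg : ∀ x : Ed d, gradient (fun _ : Ed d => (0 : ℝ)) x = 0 := fun x => by
    simp [gradient]
  refine ⟨fun _ => 0, gradHarmonic_of_lap contDiff_const (a := 0) fun x _ => by simp [lap], ?_, ?_⟩
  · refine ((euler_le (G := fun x => ‖T x - x‖ ^ 2) hΩm hΩ hTm hsg hE fun t _ x _ _ => ?_).trans
      (lintegral_mono_set (ball_subset_ball (by norm_num)))).trans hX
    rw [hg, sub_zero]
  · simp [hg]

lemma thr_ne_top (d : ℕ) (r : ℝ) : thr d r ≠ ⊤ :=
  ENNReal.mul_ne_top ENNReal.ofReal_ne_top measure_ball_lt_top.ne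

lemma gradient_const_mul {d : ℕ} {f : Ed d → ℝ} (hf : Differentiable ℝ f) (s : ℝ) (x : Ed d) :
    gradient (fun y => s * f y) x = s • gradient f x := by
  refine ext_inner_right ℝ fun v => ?_
  rw [inner_gradient, fderiv_const_mul (hf x), inner_smul_left, inner_gradient]
  simp

/-- The main case: the rescaled approximate solution yields the harmonic gradient. -/
lemma main_case {d : ℕ} {Ω : Set (Ed d)} {T : Ed d → Ed d} {ψ h φ : Ed d → ℝ} {s c C τ : ℝ}
    (hΩm : MeasurableSet Ω) (hΩ : ball (0 : Ed d) 2 ⊆ Ω) (hTm : Measurable T)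
    (hsg : ∀ᵐ x ∂(volume.restrict Ω), IsSub ψ T x) (hE : Elin T < thr d (1 / 80))
    (hs : 0 < s) (hEs : Elin T = ENNReal.ofReal (s ^ 2))
    (hT : ∀ᵐ x ∂(volume.restrict (BB d)), T x - x = s • gradient h x) (hφ : Appr d φ c C)
    (hC : 0 ≤ C) (hτ : 0 < τ) (hsC : (s * C) ^ 2 ≤ τ)
    (hcl : ∫⁻ x in ball (0 : Ed d) (3 / 4), ENNReal.ofReal (‖gradient h x - gradient φ x‖ ^ 2)
        ≤ ENNReal.ofReal τ) :
    ∃ φ : Ed d → ℝ, GradHarmonicOn φ (ball (0 : Ed d) 1) ∧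
      eulerDefect Ω T φ (ball (0 : Ed d) (1 / 2)) ≤ ENNReal.ofReal (4 * τ) * Elin T ∧
      (∫⁻ x in ball (0 : Ed d) 1, ENNReal.ofReal (‖gradient φ x‖ ^ 2))
        ≤ ENNReal.ofReal (C ^ 2 * volume.real (ball (0 : Ed d) 1)) * Elin T := by
  have hdiff : Differentiable ℝ φ := hφ.smooth.differentiable (by simp)
  have hg := fun x => gradient_const_mul hdiff s x
  refine ⟨fun y => s * φ y, gradHarmonic_of_lap (contDiff_const.mul hφ.smooth) (a := s * -c)
    fun x hx => by rw [lap_const_mul hφ.smooth, hφ.lap_eq x hx], ?_, ?_⟩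
  · refine (euler_le (G := fun x => 2 * ‖T x - x - s • gradient φ x‖ ^ 2 + 2 * (τ * ‖T x - x‖ ^ 2))
      hΩm hΩ hTm hsg hE fun t ht x hx hxt => ?_).trans ?_
    · have h1 := hφ.lip x (ball_subset_ball (by norm_num) hx) _ (ball_subset_ball (by norm_num) hxt)
      have h2 : ‖x - Tt T t x‖ ≤ ‖T x - x‖ := by
        have : x - Tt T t x = -(t • (T x - x)) := by rw [Tt, sub_smul, one_smul, smul_sub]; abel
        rw [this, norm_neg, norm_smul, Real.norm_of_nonneg ht.1.le]
        exact mul_le_of_le_one_left (norm_nonneg _) ht.2.le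
      have h3 : ‖s • gradient φ x - s • gradient φ (Tt T t x)‖ ≤ s * C * ‖T x - x‖ := by
        rw [← smul_sub, norm_smul, Real.norm_of_nonneg hs.le, mul_assoc]
        exact mul_le_mul_of_nonneg_left (h1.trans (mul_le_mul_of_nonneg_left h2 hC)) hs.le
      have h4 : ‖T x - x - gradient (fun y => s * φ y) (Tt T t x)‖
          ≤ ‖T x - x - s • gradient φ x‖ + s * C * ‖T x - x‖ := by
        rw [hg, ← sub_add_sub_cancel (T x - x) (s • gradient φ x)]
        exact (norm_add_le _ _).trans (add_le_add_right h3 _)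
      have h5 : (s * C * ‖T x - x‖) ^ 2 ≤ τ * ‖T x - x‖ ^ 2 := by rw [mul_pow]; gcongr
      refine (pow_le_pow_left₀ (norm_nonneg _) h4 2).trans ?_
      nlinarith [sq_nonneg (‖T x - x - s • gradient φ x‖ - s * C * ‖T x - x‖)]
    · have hm : Measurable fun x => ENNReal.ofReal (‖T x - x‖ ^ 2) :=
        ((hTm.sub measurable_id).norm.pow_const 2).ennreal_ofReal
      calc ∫⁻ x in ball (0 : Ed d) (3 / 4),
            ENNReal.ofReal (2 * ‖T x - x - s • gradient φ x‖ ^ 2 + 2 * (τ * ‖T x - x‖ ^ 2))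
          = ∫⁻ x in ball (0 : Ed d) (3 / 4), (ENNReal.ofReal (2 * s ^ 2)
              * ENNReal.ofReal (‖gradient h x - gradient φ x‖ ^ 2)
              + ENNReal.ofReal (2 * τ) * ENNReal.ofReal (‖T x - x‖ ^ 2)) := by
            refine lintegral_congr_ae ?_
            filter_upwards [ae_restrict_of_ae_restrict_of_subset
              (ball_subset_ball (by norm_num) : ball (0 : Ed d) (3 / 4) ⊆ BB d) hT] with x hx
            rw [← ENNReal.ofReal_mul (by positivity), ← ENNReal.ofReal_mul (by positivity),
              ← ENNReal.ofReal_add (by positivity) (by positivity), hx, ← smul_sub, norm_smul,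
              norm_smul, Real.norm_of_nonneg hs.le]
            congr 1; ring
        _ = ENNReal.ofReal (2 * s ^ 2) * (∫⁻ x in ball (0 : Ed d) (3 / 4),
              ENNReal.ofReal (‖gradient h x - gradient φ x‖ ^ 2))
            + ENNReal.ofReal (2 * τ) * ∫⁻ x in ball (0 : Ed d) (3 / 4), ENNReal.ofReal (‖T x - x‖ ^ 2) := by
            rw [lintegral_add_right _ (hm.const_mul _), lintegral_const_mul' _ _ ENNReal.ofReal_ne_top,
              lintegral_const_mul' _ _ ENNReal.ofReal_ne_top]
        _ ≤ ENNReal.ofReal (2 * s ^ 2) * ENNReal.ofReal τ + ENNReal.ofReal (2 * τ) * Elin T := by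
            gcongr
            exact lintegral_mono_set (ball_subset_ball (by norm_num))
        _ = ENNReal.ofReal (4 * τ) * Elin T := by
            rw [hEs, ← ENNReal.ofReal_mul (by positivity), ← ENNReal.ofReal_mul (by positivity),
              ← ENNReal.ofReal_mul (by positivity), ← ENNReal.ofReal_add (by positivity) (by positivity)]
            congr 1; ring
  · calc _ ≤ ∫⁻ x in ball (0 : Ed d) 1, ENNReal.ofReal ((s * C) ^ 2) := by
          refine setLIntegral_mono' measurableSet_ball fun x hx => ENNReal.ofReal_le_ofReal ?_
          rw [hg, norm_smul, Real.norm_of_nonneg hs.le]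
          have := hφ.grad x hx
          gcongr
      _ = _ := by
          rw [setLIntegral_const, hEs, ENNReal.ofReal_mul (by positivity), mul_pow,
            ENNReal.ofReal_mul (by positivity), Measure.real,
            ENNReal.ofReal_toReal measure_ball_lt_top.ne]
          ring

/-- Eulerian harmonic approximation: for `0 < τ ≪ 1` there are `ε(τ), C(τ)`
such that if `E + D ≤ ε(τ)` then there is `φ` with harmonic gradient on `B₁` with
`∫_{B_{1/2}}∫₀¹ (1/ρ)|j − ρ∇φ|² ≲ τE + C(τ)D` and `∫_{B₁}|∇φ|² ≲ E`. -/
theorem harmonic_approximation_eulerian (d : ℕ) (hd : 2 ≤ d) :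
    ∃ Cd τ₀ : ℝ, 0 < Cd ∧ 0 < τ₀ ∧
    ∀ τ : ℝ, 0 < τ → τ < τ₀ →
    ∃ ε C : ℝ, 0 < ε ∧ 0 < C ∧
    ∀ (Ω O : Set (Ed d)) (μ : Measure (Ed d)) (T : Ed d → Ed d),
      Bornology.IsBounded Ω → MeasurableSet Ω → ball (0 : Ed d) 2 ⊆ Ω →
      IsOpen O → ball (0 : Ed d) 2 ⊆ O →
      (∃ K : Set (Ed d), IsCompact K ∧ μ Kᶜ = 0) → μ Set.univ = volume Ω →
      IsOptMap Ω μ T →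
      Elin T + Dlin μ O ≤ ENNReal.ofReal ε →
      ∃ φ : Ed d → ℝ, GradHarmonicOn φ (ball (0 : Ed d) 1) ∧
        eulerDefect Ω T φ (ball (0 : Ed d) (1/2))
          ≤ ENNReal.ofReal Cd *
            (ENNReal.ofReal τ * Elin T + ENNReal.ofReal C * Dlin μ O) ∧
        (∫⁻ x in ball (0 : Ed d) 1, ENNReal.ofReal (‖gradient φ x‖ ^ 2))
          ≤ ENNReal.ofReal Cd * Elin T := by
  have : Fact (0 < d) := ⟨by omega⟩
  have : Nonempty (Fin d) := ⟨⟨0, by omega⟩⟩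
  have : Nontrivial (Ed d) := inferInstance
  obtain ⟨M, hM, hcore⟩ := ot_core d
  obtain ⟨ρ, hρ⟩ := exists_moll d
  obtain ⟨C2, hC2, hcomp⟩ := compactA (by omega : d ≠ 0) hρ hM
  set V := volume.real (ball (0 : Ed d) 1) with hV
  have hV0 : 0 ≤ V := measureReal_nonneg
  refine ⟨4 + C2 ^ 2 * V, 1, by positivity, one_pos, fun τ hτ hτ1 => ?_⟩
  obtain ⟨δ, e₀, hδ, he₀, hclose⟩ := gradClose hρ hM hC2 hτ
  obtain ⟨e₁, he₁, hcompact⟩ := hcomp δ hδ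
  set e := min (min e₀ e₁) (τ / C2) with he
  have hepos : 0 < e := by positivity
  have hee₀ : e ≤ e₀ := (min_le_left _ _).trans (min_le_left _ _)
  have hee₁ : e ≤ e₁ := (min_le_left _ _).trans (min_le_right _ _)
  have heC : e * C2 ≤ τ := (le_div_iff₀ (by positivity)).1 (min_le_right _ _)
  obtain ⟨ε', θ, hε', hθ, hmain⟩ := hcore e hepos
  have hthr : 0 < (thr d (1 / 80)).toReal :=
    ENNReal.toReal_pos (thr_pos d (by norm_num)).ne' (thr_ne_top d _)
  refine ⟨min ε' ((thr d (1 / 80)).toReal / 2), θ⁻¹, by positivity, by positivity,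
    fun Ω O μ T hΩb hΩm hΩ hO hO2 hμK hμ hT hED => ?_⟩
  obtain ⟨ψ, L, hψ, hsg⟩ := exists_potential hΩb hΩm hμK hT
  have hsg' : ∀ᵐ x ∂(volume.restrict Ω), IsSub ψ T x := hsg
  have hEε : Elin T ≤ ENNReal.ofReal ε' := (le_self_add.trans hED).trans
    (ENNReal.ofReal_le_ofReal (min_le_left _ _))
  have hEthr : Elin T < thr d (1 / 80) := by
    refine ((le_self_add.trans hED).trans
      (ENNReal.ofReal_le_ofReal (min_le_right _ _))).trans_lt ?_
    rw [ENNReal.ofReal_lt_iff_lt_toReal (by positivity) (thr_ne_top d _)]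
    linarith
  have hCd : (1 : ℝ≥0∞) ≤ ENNReal.ofReal (4 + C2 ^ 2 * V) := by
    rw [ENNReal.one_le_ofReal]; nlinarith [mul_nonneg (sq_nonneg C2) hV0]
  by_cases hE0 : Elin T = 0
  · exact zero_case hΩm hΩ hT.1 hsg' hEthr (by rw [hE0]; exact zero_le)
  by_cases hD : Dlin μ O < ENNReal.ofReal θ * Elin T
  · obtain ⟨s, h, c, L, hs, hse, hEs, H, hTh⟩ := hmain Ω O μ T hΩb hΩm hΩ hO hO2 hμK hμ hT hE0 hEε hD
    obtain ⟨φ, hφ, hφδ⟩ := hcompact h c L (H.mono hee₁)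
    have hcl := hclose h φ c e L hepos hee₀ H hφ hφδ
    have hsC : (s * C2) ^ 2 ≤ τ := by
      have h1 : s * C2 ≤ τ := (mul_le_mul_of_nonneg_right hse (by positivity)).trans heC
      have h2 : 0 ≤ s * C2 := by positivity
      nlinarith
    obtain ⟨φ', h1, h2, h3⟩ := main_case hΩm hΩ hT.1 hsg' hEthr hs hEs hTh hφ (by positivity) hτ hsC hcl
    refine ⟨φ', h1, h2.trans ?_, h3.trans ?_⟩
    · rw [ENNReal.ofReal_mul (by norm_num), mul_assoc]
      refine mul_le_mul' (ENNReal.ofReal_le_ofReal ?_) le_self_add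
      linarith [mul_nonneg (sq_nonneg C2) hV0]
    · gcongr
      linarith
  · -- the data term dominates the excess
    push Not at hD
    refine zero_case hΩm hΩ hT.1 hsg' hEthr ?_
    calc Elin T = ENNReal.ofReal θ⁻¹ * (ENNReal.ofReal θ * Elin T) := by
          rw [← mul_assoc, ← ENNReal.ofReal_mul (by positivity), inv_mul_cancel₀ hθ.ne',
            ENNReal.ofReal_one, one_mul]
      _ ≤ ENNReal.ofReal θ⁻¹ * Dlin μ O := by gcongr
      _ ≤ ENNReal.ofReal τ * Elin T + ENNReal.ofReal θ⁻¹ * Dlin μ O := le_add_self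
      _ ≤ _ := le_mul_of_one_le_left zero_le hCd
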